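/- Every nest algebra Alg 𝒩 on a complex separable Hilbert space H is a zero product determined Banach algebra. -/

import Mathlib

open scoped Topology

/-- A complex Banach algebra `A` is *zero product determined*. -/
def ZeroProductDetermined (A : Type*) [NonUnitalNonAssocRing A] [Module ℂ A]
    [TopologicalSpace A] : Prop :=
  ∀ φ : A →ₗ[ℂ] A →ₗ[ℂ] ℂ, Continuous (fun p : A × A => φ p.1 p.2) →
    (∀ x y : A, x * y = 0 → φ x y = 0) →
    ∃ τ : A →L[ℂ] ℂ, ∀ x y : A, φ x y = τ (x * y)

set_option linter.unusedSectionVars false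
set_option linter.unusedVariables false

namespace NestZPD

variable {H : Type*} [NormedAddCommGroup H] [InnerProductSpace ℂ H] [CompleteSpace H]

/-- projection onto the closure of a subspace -/
noncomputable def pr (K : Submodule ℂ H) : H →L[ℂ] H := K.topologicalClosure.starProjection

lemma pr_mem_closure (K : Submodule ℂ H) (x : H) : pr K x ∈ K.topologicalClosure :=
  Submodule.starProjection_apply_mem _ _

lemma pr_mem {K : Submodule ℂ H} (hK : IsClosed (K : Set H)) (x : H) : pr K x ∈ K := by
  have := pr_mem_closure K x
  rwa [hK.submodule_topologicalClosure_eq] at this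

lemma sub_pr_mem (K : Submodule ℂ H) (x : H) : x - pr K x ∈ Kᗮ := by
  have := Submodule.sub_starProjection_mem_orthogonal (K := K.topologicalClosure) x
  rwa [Submodule.orthogonal_closure] at this

lemma pr_eq_of {K : Submodule ℂ H} {x u : H} (hu : u ∈ K.topologicalClosure)
    (hx : x - u ∈ Kᗮ) : pr K x = u := by
  refine Submodule.eq_starProjection_of_mem_orthogonal hu ?_
  rwa [Submodule.orthogonal_closure]

lemma pr_eq_self {K : Submodule ℂ H} {x : H} (hx : x ∈ K) : pr K x = x :=
  pr_eq_of (K.le_topologicalClosure hx) (by simp)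

lemma pr_eq_self' {K : Submodule ℂ H} {x : H} (hx : x ∈ K.topologicalClosure) : pr K x = x :=
  pr_eq_of hx (by simp)

lemma pr_eq_zero {K : Submodule ℂ H} {x : H} (hx : x ∈ Kᗮ) : pr K x = 0 :=
  pr_eq_of (zero_mem _) (by simpa using hx)

lemma mem_orth_of_pr {K : Submodule ℂ H} {x : H} (hx : pr K x = 0) : x ∈ Kᗮ := by
  simpa [hx] using sub_pr_mem K x

lemma mem_of_pr {K : Submodule ℂ H} (hK : IsClosed (K : Set H)) {x : H} (hx : pr K x = x) :
    x ∈ K := hx ▸ pr_mem hK x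

lemma pr_sym (K : Submodule ℂ H) (x y : H) : inner ℂ (pr K x) y = inner ℂ x (pr K y) :=
  Submodule.inner_starProjection_left_eq_right _ _ _

lemma pr_norm_le (K : Submodule ℂ H) (x : H) : ‖pr K x‖ ≤ ‖x‖ :=
  Submodule.norm_starProjection_apply_le _ _

lemma pr_opnorm_le (K : Submodule ℂ H) : ‖pr K‖ ≤ 1 := Submodule.starProjection_norm_le _

lemma pr_idem (K : Submodule ℂ H) (x : H) : pr K (pr K x) = pr K x :=
  pr_eq_self' (pr_mem_closure K x)

lemma pr_mul_self (K : Submodule ℂ H) : pr K * pr K = pr K := by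
  ext x; exact pr_idem K x

lemma pr_adjoint (K : Submodule ℂ H) : ContinuousLinearMap.adjoint (pr K) = pr K := by
  refine (ContinuousLinearMap.eq_adjoint_iff _ _).2 (fun x y => pr_sym K x y) |>.symm

lemma norm_sq_pr (K : Submodule ℂ H) (x : H) : ‖x‖ ^ 2 = ‖pr K x‖ ^ 2 + ‖x - pr K x‖ ^ 2 := by
  have h : inner ℂ (pr K x) (x - pr K x) = 0 := by
    rw [pr_sym, map_sub, pr_idem, sub_self, inner_zero_right]
  have := norm_add_sq_eq_norm_sq_add_norm_sq_of_inner_eq_zero _ _ h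
  rw [add_sub_cancel] at this
  nlinarith

lemma inner_pr_self (K : Submodule ℂ H) (x : H) : inner ℂ x (pr K x) = ((‖pr K x‖ ^ 2 : ℝ) : ℂ) := by
  rw [← pr_idem, ← pr_sym, pr_idem, inner_self_eq_norm_sq_to_K]; norm_cast

lemma pr_orth (K : Submodule ℂ H) (x : H) : pr Kᗮ x = x - pr K x := by
  refine pr_eq_of (Submodule.le_topologicalClosure _ (sub_pr_mem K x)) ?_
  rw [sub_sub_cancel, Submodule.orthogonal_orthogonal_eq_closure]
  exact pr_mem_closure K x

lemma pr_pr_of_le {K L : Submodule ℂ H} (h : K ≤ L) (x : H) : pr K (pr L x) = pr K x := by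
  have : x - pr L x ∈ Kᗮ := Submodule.orthogonal_le h (sub_pr_mem L x)
  have := pr_eq_zero this
  rw [map_sub, sub_eq_zero] at this
  exact this.symm

lemma pr_pr_of_le' {K L : Submodule ℂ H} (h : K ≤ L) (x : H) : pr L (pr K x) = pr K x :=
  pr_eq_self' (Submodule.topologicalClosure_mono h (pr_mem_closure K x))

lemma pr_norm_mono {K L : Submodule ℂ H} (h : K ≤ L) (x : H) : ‖pr K x‖ ≤ ‖pr L x‖ := by
  rw [← pr_pr_of_le h]; exact pr_norm_le _ _

lemma norm_sq_pr_sub {K L : Submodule ℂ H} (h : K ≤ L) (x : H) :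
    ‖pr L x - pr K x‖ ^ 2 = ‖pr L x‖ ^ 2 - ‖pr K x‖ ^ 2 := by
  have := norm_sq_pr K (pr L x)
  rw [pr_pr_of_le h] at this; linarith

/-- nest -/
structure IsNest (𝒩 : Set (Submodule ℂ H)) : Prop where
  closed : ∀ N ∈ 𝒩, IsClosed (N : Set H)
  bot : ⊥ ∈ 𝒩
  top : ⊤ ∈ 𝒩
  chain : ∀ M ∈ 𝒩, ∀ N ∈ 𝒩, M ≤ N ∨ N ≤ M
  inf : ∀ F ⊆ 𝒩, F.Nonempty → sInf F ∈ 𝒩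
  sup : ∀ F ⊆ 𝒩, F.Nonempty → (sSup F).topologicalClosure ∈ 𝒩

def InAlg (𝒩 : Set (Submodule ℂ H)) (T : H →L[ℂ] H) : Prop := ∀ N ∈ 𝒩, ∀ x ∈ N, T x ∈ N

variable {𝒩 : Set (Submodule ℂ H)}

lemma InAlg.add {S T : H →L[ℂ] H} (hS : InAlg 𝒩 S) (hT : InAlg 𝒩 T) : InAlg 𝒩 (S + T) :=
  fun N hN x hx => N.add_mem (hS N hN x hx) (hT N hN x hx)
lemma InAlg.sub {S T : H →L[ℂ] H} (hS : InAlg 𝒩 S) (hT : InAlg 𝒩 T) : InAlg 𝒩 (S - T) :=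
  fun N hN x hx => N.sub_mem (hS N hN x hx) (hT N hN x hx)
lemma InAlg.mul {S T : H →L[ℂ] H} (hS : InAlg 𝒩 S) (hT : InAlg 𝒩 T) : InAlg 𝒩 (S * T) :=
  fun N hN x hx => (hS N hN _ (hT N hN x hx))
lemma InAlg.one : InAlg 𝒩 (1 : H →L[ℂ] H) := fun _ _ _ hx => hx
lemma InAlg.zero : InAlg 𝒩 (0 : H →L[ℂ] H) := fun N _ _ _ => N.zero_mem
lemma InAlg.smul {T : H →L[ℂ] H} (c : ℂ) (hT : InAlg 𝒩 T) : InAlg 𝒩 (c • T) :=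
  fun N hN x hx => N.smul_mem c (hT N hN x hx)
lemma InAlg.pow {T : H →L[ℂ] H} (hT : InAlg 𝒩 T) (n : ℕ) : InAlg 𝒩 (T ^ n) := by
  induction n with
  | zero => exact InAlg.one
  | succ n ih => rw [pow_succ]; exact ih.mul hT
lemma InAlg.sum {ι : Type*} (s : Finset ι) {T : ι → H →L[ℂ] H} (hT : ∀ i ∈ s, InAlg 𝒩 (T i)) :
    InAlg 𝒩 (∑ i ∈ s, T i) := fun N hN x hx => by
  rw [_root_.sum_apply]
  exact N.sum_mem fun i hi => hT i hi N hN x hx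

lemma InAlg.isClosed (h𝒩 : IsNest 𝒩) : IsClosed {T : H →L[ℂ] H | InAlg 𝒩 T} := by
  simp only [InAlg, Set.ofPred_forall]
  refine isClosed_iInter fun N => isClosed_iInter fun hN => isClosed_iInter fun x =>
    isClosed_iInter fun _ => ?_
  exact (h𝒩.closed N hN).preimage (f := fun T : H →L[ℂ] H => T x) (by fun_prop)

lemma InAlg.hasSum (h𝒩 : IsNest 𝒩) {ι : Type*} {T : ι → H →L[ℂ] H} {S : H →L[ℂ] H}
    (hT : ∀ i, InAlg 𝒩 (T i)) (hS : ∀ v, HasSum (fun i => T i v) (S v)) : InAlg 𝒩 S :=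
  fun N hN x hx => (h𝒩.closed N hN).mem_of_tendsto (hS x)
    (Filter.Eventually.of_forall fun s => N.sum_mem fun i _ => hT i N hN x hx)

/-- adjoint of algebra element preserves complements -/
lemma InAlg.adjoint {T : H →L[ℂ] H} (hT : InAlg 𝒩 T) {N : Submodule ℂ H} (hN : N ∈ 𝒩) {x : H}
    (hx : x ∈ Nᗮ) : ContinuousLinearMap.adjoint T x ∈ Nᗮ := by
  rw [Submodule.mem_orthogonal] at hx ⊢
  intro u hu
  rw [ContinuousLinearMap.adjoint_inner_right]
  exact hx _ (hT N hN u hu)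

lemma InAlg.of_adjoint (h𝒩 : IsNest 𝒩) {T : H →L[ℂ] H}
    (h : ∀ N ∈ 𝒩, ∀ x ∈ Nᗮ, ContinuousLinearMap.adjoint T x ∈ Nᗮ) : InAlg 𝒩 T := by
  intro N hN x hx
  have h2 : T x ∈ Nᗮᗮ := by
    rw [Submodule.mem_orthogonal]
    intro u hu
    rw [← ContinuousLinearMap.adjoint_inner_left]
    exact Submodule.inner_left_of_mem_orthogonal hx (h N hN u hu)
  rwa [Submodule.orthogonal_orthogonal_eq_closure,
    (h𝒩.closed N hN).submodule_topologicalClosure_eq] at h2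

lemma inAlg_rankOne {M : Submodule ℂ H} (hM : M ∈ 𝒩)
    (hch : ∀ N ∈ 𝒩, N ≤ M ∨ M ≤ N) {h k : H} (hh : h ∈ M) (hk : k ∈ Mᗮ) :
    InAlg 𝒩 (InnerProductSpace.rankOne ℂ h k) := by
  intro N hN x hx
  rw [InnerProductSpace.rankOne_apply]
  rcases hch N hN with h1 | h1
  · rw [Submodule.inner_left_of_mem_orthogonal (h1 hx) hk, zero_smul]; exact N.zero_mem
  · exact N.smul_mem _ (h1 hh)

/-- reducing subspace -/
def Red (𝒩 : Set (Submodule ℂ H)) (K : Submodule ℂ H) : Prop := ∀ N ∈ 𝒩, ∀ x ∈ K, pr N x ∈ K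

lemma Red.of_mem (h𝒩 : IsNest 𝒩) {K : Submodule ℂ H} (hK : K ∈ 𝒩) : Red 𝒩 K := by
  intro N hN x hx
  rcases h𝒩.chain N hN K hK with h | h
  · exact h (pr_mem (h𝒩.closed N hN) x)
  · rwa [pr_eq_self (h hx)]

lemma Red.orth {K : Submodule ℂ H} (hK : Red 𝒩 K) : Red 𝒩 Kᗮ := by
  intro N hN x hx
  rw [Submodule.mem_orthogonal] at hx ⊢
  intro u hu
  rw [← pr_sym]; exact hx _ (hK N hN u hu)

lemma Red.inf {K L : Submodule ℂ H} (hK : Red 𝒩 K) (hL : Red 𝒩 L) : Red 𝒩 (K ⊓ L) :=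
  fun N hN x hx => ⟨hK N hN x hx.1, hL N hN x hx.2⟩

lemma Red.iSup {ι : Sort*} {K : ι → Submodule ℂ H} (hK : ∀ i, Red 𝒩 (K i)) : Red 𝒩 (⨆ i, K i) := by
  intro N hN x hx
  have : (⨆ i, K i) ≤ (⨆ i, K i).comap (pr N).toLinearMap :=
    iSup_le fun i y hy => Submodule.mem_iSup_of_mem i (hK i N hN y hy)
  exact this hx

lemma Red.sup {K L : Submodule ℂ H} (hK : Red 𝒩 K) (hL : Red 𝒩 L) : Red 𝒩 (K ⊔ L) := by
  rw [sup_eq_iSup]; exact Red.iSup fun b => by cases b <;> assumption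

lemma Red.closure {K : Submodule ℂ H} (hK : Red 𝒩 K) : Red 𝒩 K.topologicalClosure := by
  intro N hN x hx
  exact map_mem_closure (pr N).continuous hx (fun y hy => hK N hN y hy)

lemma Red.span {X : Set H} (hX : ∀ N ∈ 𝒩, ∀ x ∈ X, pr N x ∈ Submodule.span ℂ X) :
    Red 𝒩 (Submodule.span ℂ X) := by
  intro N hN x hx
  have : Submodule.span ℂ X ≤ (Submodule.span ℂ X).comap (pr N).toLinearMap :=
    Submodule.span_le.2 fun y hy => hX N hN y hy
  exact this hx

lemma Red.comm {K : Submodule ℂ H} (hK : Red 𝒩 K) {N : Submodule ℂ H} (hN : N ∈ 𝒩) (x : H) :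
    pr K (pr N x) = pr N (pr K x) := by
  refine pr_eq_of (hK.closure N hN _ (pr_mem_closure K x)) ?_
  rw [← map_sub]
  exact hK.orth N hN _ (sub_pr_mem K x)

lemma Red.inAlg (h𝒩 : IsNest 𝒩) {K : Submodule ℂ H} (hK : Red 𝒩 K) : InAlg 𝒩 (pr K) := by
  intro N hN x hx
  have := hK.comm hN x
  rw [pr_eq_self hx] at this
  rw [this]; exact pr_mem (h𝒩.closed N hN) _

/-- the closed algebra generated by the idempotents of the nest algebra -/
noncomputable def IdGen (𝒩 : Set (Submodule ℂ H)) : Subalgebra ℂ (H →L[ℂ] H) :=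
  (Algebra.adjoin ℂ {p : H →L[ℂ] H | InAlg 𝒩 p ∧ p * p = p}).topologicalClosure

lemma IdGen.closed : IsClosed (IdGen 𝒩 : Set (H →L[ℂ] H)) :=
  Subalgebra.isClosed_topologicalClosure _

lemma idem_mem {p : H →L[ℂ] H} (hp : InAlg 𝒩 p) (h : p * p = p) : p ∈ IdGen 𝒩 :=
  Subalgebra.le_topologicalClosure _ (Algebra.subset_adjoin ⟨hp, h⟩)

lemma corner_mem {p y : H →L[ℂ] H} (hp : InAlg 𝒩 p) (h : p * p = p) (hy : InAlg 𝒩 y)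
    (h1 : p * y = y) (h2 : y * p = 0) : y ∈ IdGen 𝒩 := by
  have h3 : y * y = 0 := by
    calc y * y = (y * p) * y := by rw [mul_assoc, h1]
    _ = 0 := by rw [h2, zero_mul]
  have h4 : p + y ∈ IdGen 𝒩 := idem_mem (hp.add hy) (by
    rw [mul_add, add_mul, add_mul, h, h1, h2, h3]; simp)
  simpa using (IdGen 𝒩).sub_mem h4 (idem_mem hp h)

lemma corner_mem' {p y : H →L[ℂ] H} (hp : InAlg 𝒩 p) (h : p * p = p) (hy : InAlg 𝒩 y)
    (h1 : p * y = 0) (h2 : y * p = y) : y ∈ IdGen 𝒩 := by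
  refine corner_mem (p := 1 - p) (InAlg.one.sub hp) ?_ hy ?_ ?_
  · rw [sub_mul, mul_sub, mul_sub, h]; simp
  · rw [sub_mul, h1]; simp
  · rw [mul_sub, h2]; simp

lemma factor_mem {p Y Z : H →L[ℂ] H} (hp : InAlg 𝒩 p) (h : p * p = p) (hY : InAlg 𝒩 Y)
    (hZ : InAlg 𝒩 Z) (h1 : p * Y = 0) (h2 : Y * p = Y) (h3 : p * Z = Z) (h4 : Z * p = 0) :
    Y * Z ∈ IdGen 𝒩 :=
  (IdGen 𝒩).mul_mem (corner_mem' hp h hY h1 h2) (corner_mem hp h hZ h3 h4)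

lemma mem_IdGen_of_approx {x : H →L[ℂ] H}
    (h : ∀ ε > 0, ∃ y ∈ IdGen 𝒩, ‖x - y‖ ≤ ε) : x ∈ IdGen 𝒩 := by
  have : x ∈ closure (IdGen 𝒩 : Set (H →L[ℂ] H)) := by
    rw [Metric.mem_closure_iff]
    intro ε hε
    obtain ⟨y, hy, hxy⟩ := h (ε / 2) (by positivity)
    exact ⟨y, hy, by rw [dist_eq_norm]; linarith⟩
  rwa [IdGen.closed.closure_eq] at this

/-- splitting into two orthogonal corners -/
lemma split_mem {p x : H →L[ℂ] H} (hp : InAlg 𝒩 p) (h : p * p = p) (hx : InAlg 𝒩 x)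
    (h1 : p * x * p ∈ IdGen 𝒩) (h2 : (1 - p) * x * (1 - p) ∈ IdGen 𝒩) : x ∈ IdGen 𝒩 := by
  have hq : InAlg 𝒩 (1 - p) := InAlg.one.sub hp
  have e : p * (1 - p) = 0 := by rw [mul_sub, h]; simp
  have e' : (1 - p) * p = 0 := by rw [sub_mul, h]; simp
  have h3 : p * x * (1 - p) ∈ IdGen 𝒩 := corner_mem hp h ((hp.mul hx).mul hq)
    (by rw [← mul_assoc, ← mul_assoc, h]) (by rw [mul_assoc, e', mul_zero])
  have h4 : (1 - p) * x * p ∈ IdGen 𝒩 := corner_mem' hp h ((hq.mul hx).mul hp)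
    (by rw [← mul_assoc, ← mul_assoc, e, zero_mul, zero_mul]) (by rw [mul_assoc, h])
  have : x = p * x * p + (1 - p) * x * (1 - p) + p * x * (1 - p) + (1 - p) * x * p := by noncomm_ring
  rw [this]
  exact add_mem (add_mem (add_mem h1 h2) h3) h4

/-- orthogonal sums of operators -/
lemma exists_orth_sum {ι : Type*} {T : ι → H →L[ℂ] H}
    (ho : ∀ i j, i ≠ j → ∀ x y, inner ℂ (T i x) (T j y) = 0) (C : ℝ)
    (hC : ∀ v, ∀ s : Finset ι, ∑ i ∈ s, ‖T i v‖ ^ 2 ≤ C * ‖v‖ ^ 2) :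
    ∃ S : H →L[ℂ] H, (∀ v, HasSum (fun i => T i v) (S v)) ∧ ‖S‖ ≤ Real.sqrt C := by
  have key : ∀ v, ∀ s : Finset ι, ‖∑ i ∈ s, T i v‖ ^ 2 = ∑ i ∈ s, ‖T i v‖ ^ 2 := by
    intro v s
    classical
    induction s using Finset.induction_on with
    | empty => simp
    | insert a s ha ih =>
      rw [Finset.sum_insert ha, Finset.sum_insert ha, ← ih]
      have : inner ℂ (T a v) (∑ i ∈ s, T i v) = 0 := by
        rw [inner_sum]; exact Finset.sum_eq_zero fun i hi => ho a i (by rintro rfl; exact ha hi) _ _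
      have := norm_add_sq_eq_norm_sq_add_norm_sq_of_inner_eq_zero _ _ this
      nlinarith
  have hsq : ∀ v, Summable fun i => ‖T i v‖ ^ 2 := fun v =>
    summable_of_sum_le (fun i => by positivity) (hC v)
  have hs : ∀ v, Summable fun i => T i v := by
    intro v
    rw [summable_iff_vanishing_norm]
    intro ε hε
    obtain ⟨s, hs⟩ := summable_iff_vanishing_norm.1 (hsq v) (ε ^ 2) (by positivity)
    refine ⟨s, fun t ht => ?_⟩
    have := hs t ht
    rw [← key, Real.norm_of_nonneg (by positivity)] at this
    exact lt_of_pow_lt_pow_left₀ 2 hε.le this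
  let S0 : H →ₗ[ℂ] H :=
    { toFun := fun v => ∑' i, T i v
      map_add' := fun x y => by simp only [map_add]; exact (hs x).tsum_add (hs y)
      map_smul' := fun c x => by simp only [map_smul, RingHom.id_apply]; exact (hs x).tsum_const_smul c }
  have hb : ∀ v, ‖S0 v‖ ≤ Real.sqrt C * ‖v‖ := fun v => ?_
  · exact ⟨S0.mkContinuous (Real.sqrt C) hb, fun v => (hs v).hasSum,
      LinearMap.mkContinuous_norm_le _ (Real.sqrt_nonneg _) _⟩
  refine le_of_tendsto (hs v).hasSum.norm (Filter.Eventually.of_forall fun s => ?_)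
  refine (sq_le_sq₀ (norm_nonneg _) (by positivity)).1 ?_
  rw [key]
  have h0 := hC v s
  by_cases hC0 : 0 ≤ C
  · rw [mul_pow, Real.sq_sqrt hC0]; exact h0
  · have : C * ‖v‖ ^ 2 ≤ 0 := mul_nonpos_of_nonpos_of_nonneg (by linarith) (by positivity)
    exact (h0.trans this).trans (by positivity)

/-- history recursion -/
lemma exists_seq_hist {α : Type*} {Q : ℕ → Finset α → α → Prop}
    (h : ∀ n s, ∃ y, Q n s y) : ∃ f : ℕ → α, ∀ n, ∃ s : Finset α, (∀ m < n, f m ∈ s) ∧ Q n s (f n) := by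
  classical
  choose F hF using h
  let s : ℕ → Finset α := fun n => Nat.rec ∅ (fun n t => insert (F n t) t) n
  have hs : ∀ n, s (n + 1) = insert (F n (s n)) (s n) := fun n => rfl
  refine ⟨fun n => F n (s n), fun n => ⟨s n, ?_, hF n _⟩⟩
  induction n with
  | zero => intro m hm; omega
  | succ n ih =>
    intro m hm
    rw [hs]
    rcases Nat.lt_succ_iff_lt_or_eq.1 hm with h | rfl
    · exact Finset.mem_insert_of_mem (ih m h)
    · exact Finset.mem_insert_self _ _

end NestZPD

namespace NestZPD
variable {H : Type*} [NormedAddCommGroup H] [InnerProductSpace ℂ H] [CompleteSpace H]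
variable {𝒩 : Set (Submodule ℂ H)}

lemma zpd_of_IdGen (S : Subalgebra ℂ (H →L[ℂ] H))
    (hS : ∀ T : H →L[ℂ] H, T ∈ S ↔ InAlg 𝒩 T)
    (hG : ∀ T, InAlg 𝒩 T → T ∈ IdGen 𝒩) : ZeroProductDetermined ↥S := by
  intro φ hφ h0
  let G : Subalgebra ℂ S :=
    { carrier := {s | ∀ x y : S, φ (x * s) y = φ x (s * y)}
      mul_mem' := by
        intro a b ha hb x y
        rw [← mul_assoc, hb, ha, mul_assoc]
      add_mem' := by
        intro a b ha hb x y
        rw [mul_add, map_add, LinearMap.add_apply, ha, hb, add_mul, map_add]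
      algebraMap_mem' := by
        intro r x y
        rw [Algebra.algebraMap_eq_smul_one]
        simp }
  have hc : ∀ a b : S, Continuous fun s : S => φ (a * s) b := fun a b =>
    hφ.comp ((continuous_const.mul continuous_id).prodMk continuous_const)
  have hc' : ∀ a b : S, Continuous fun s : S => φ a (s * b) := fun a b =>
    hφ.comp (continuous_const.prodMk (continuous_id.mul continuous_const))
  have hGc : IsClosed (G : Set S) := by
    have : (G : Set S) = ⋂ x : S, ⋂ y : S, {s : S | φ (x * s) y = φ x (s * y)} := by
      ext s; simp only [Set.mem_iInter]; rfl
    rw [this]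
    exact isClosed_iInter fun x => isClosed_iInter fun y => isClosed_eq (hc x y) (hc' x y)
  have hidem : ∀ e : S, e * e = e → e ∈ G := by
    intro e he x y
    have e1 : φ (x * e) ((1 - e) * y) = 0 := h0 _ _ (by
      have : (x * e) * ((1 - e) * y) = x * (e - e * e) * y := by
        simp only [mul_sub, sub_mul, mul_assoc, one_mul, mul_one]
      rw [this, he]; simp)
    have e2 : φ (x * (1 - e)) (e * y) = 0 := h0 _ _ (by
      have : (x * (1 - e)) * (e * y) = x * (e - e * e) * y := by
        simp only [mul_sub, sub_mul, mul_assoc, one_mul, mul_one]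
      rw [this, he]; simp)
    rw [sub_mul, one_mul, map_sub, sub_eq_zero] at e1
    rw [mul_sub, mul_one, map_sub, LinearMap.sub_apply, sub_eq_zero] at e2
    rw [e1, e2]
  have hSc : ∀ T ∈ Algebra.adjoin ℂ {p : H →L[ℂ] H | InAlg 𝒩 p ∧ p * p = p},
      T ∈ G.map S.val := by
    intro T hT
    have : Algebra.adjoin ℂ {p : H →L[ℂ] H | InAlg 𝒩 p ∧ p * p = p} ≤ G.map S.val := by
      refine Algebra.adjoin_le ?_
      rintro p ⟨hp, hpp⟩
      exact ⟨⟨p, (hS p).2 hp⟩, hidem _ (Subtype.ext hpp), rfl⟩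
    exact this hT
  have hall : ∀ s : S, s ∈ G := by
    intro s
    have h1 : (s : H →L[ℂ] H) ∈ closure ((G.map S.val : Subalgebra ℂ (H →L[ℂ] H)) : Set (H →L[ℂ] H)) := by
      have := hG s ((hS s).1 s.2)
      exact closure_mono (fun T hT => hSc T hT) this
    have h2 : s ∈ closure (G : Set S) := by
      rw [Topology.IsInducing.subtypeVal.closure_eq_preimage_closure_image]
      exact h1
    rwa [hGc.closure_eq] at h2
  refine ⟨⟨φ 1, hφ.comp (continuous_const.prodMk continuous_id)⟩, fun x y => ?_⟩
  have := hall x 1 y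
  rw [one_mul] at this
  exact this

end NestZPD

namespace NestZPD
variable {H : Type*} [NormedAddCommGroup H] [InnerProductSpace ℂ H] [CompleteSpace H]
variable {𝒩 : Set (Submodule ℂ H)}

lemma mul_ap (S T : H →L[ℂ] H) (x : H) : (S * T) x = S (T x) := rfl

def Atomic (𝒩 : Set (Submodule ℂ H)) (v : H) : Prop := ∀ M ∈ 𝒩, v ∈ M ∨ v ∈ Mᗮ

section atoms
variable {ι : Type*} {e : ι → H}

noncomputable def dd (e : ι → H) (M : Set ι) : H →L[ℂ] H := pr (Submodule.span ℂ (e '' M))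

def Le (𝒩 : Set (Submodule ℂ H)) (e : ι → H) (i j : ι) : Prop := ∀ M ∈ 𝒩, e j ∈ M → e i ∈ M

lemma Le.refl (i : ι) : Le 𝒩 e i i := fun _ _ h => h
lemma Le.trans {i j k : ι} (h : Le 𝒩 e i j) (h' : Le 𝒩 e j k) : Le 𝒩 e i k :=
  fun M hM hk => h M hM (h' M hM hk)
lemma Le.total (h𝒩 : IsNest 𝒩) (i j : ι) : Le 𝒩 e i j ∨ Le 𝒩 e j i := by
  by_contra! h
  simp only [Le, not_forall] at h
  obtain ⟨⟨M, hM, h1, h2⟩, N, hN, h3, h4⟩ := h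
  rcases h𝒩.chain M hM N hN with h | h
  · exact h4 (h h1)
  · exact h2 (h h3)

lemma dd_mem (he : Orthonormal ℂ e) {M : Set ι} {i : ι} (hi : i ∈ M) : dd e M (e i) = e i :=
  pr_eq_self (Submodule.subset_span ⟨i, hi, rfl⟩)

lemma dd_not_mem (he : Orthonormal ℂ e) {M : Set ι} {i : ι} (hi : i ∉ M) : dd e M (e i) = 0 := by
  refine pr_eq_zero ?_
  have : Submodule.span ℂ (e '' M) ≤ (Submodule.span ℂ {e i})ᗮ := by
    rw [Submodule.span_le]
    rintro _ ⟨j, hj, rfl⟩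
    refine Submodule.mem_orthogonal_singleton_iff_inner_right.2 (he.2 ?_)
    rintro rfl; exact hi hj
  exact Submodule.orthogonal_le this (Submodule.le_orthogonal_orthogonal _ (Submodule.mem_span_singleton_self _))

lemma dd_mono {M N : Set ι} (h : M ⊆ N) (x : H) : dd e N (dd e M x) = dd e M x :=
  pr_pr_of_le' (Submodule.span_mono (Set.image_mono h)) x
lemma dd_mono' {M N : Set ι} (h : M ⊆ N) (x : H) : dd e M (dd e N x) = dd e M x :=
  pr_pr_of_le (Submodule.span_mono (Set.image_mono h)) x

lemma ext_basis {S T : H →L[ℂ] H} (hS : S * dd e Set.univ = S) (hT : T * dd e Set.univ = T)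
    (h : ∀ j, S (e j) = T (e j)) : S = T := by
  rw [← hS, ← hT]
  ext x
  have hx := pr_mem_closure (Submodule.span ℂ (e '' Set.univ)) x
  have : (Submodule.span ℂ (e '' Set.univ)).topologicalClosure ≤ (S - T).ker := by
    refine Submodule.topologicalClosure_minimal _ ?_ (S - T).isClosed_ker
    rw [Submodule.span_le]
    rintro _ ⟨j, _, rfl⟩
    simp [h j]
  have := this hx
  simp only [LinearMap.mem_ker, ContinuousLinearMap.coe_coe, _root_.sub_apply, sub_eq_zero] at this
  exact this

lemma dd_mul_self (M : Set ι) : dd e M * dd e M = dd e M := pr_mul_self _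
lemma dd_mul_univ (M : Set ι) : dd e M * dd e Set.univ = dd e M := by
  ext x; exact dd_mono' (Set.subset_univ M) x
lemma univ_mul_dd (M : Set ι) : dd e Set.univ * dd e M = dd e M := by
  ext x; exact dd_mono (Set.subset_univ M) x
lemma mul_dd_univ {T : H →L[ℂ] H} {M : Set ι} (h : T * dd e M = T) : T * dd e Set.univ = T := by
  rw [← h, mul_assoc, dd_mul_univ]

lemma dd_inter (he : Orthonormal ℂ e) (M N : Set ι) : dd e M * dd e N = dd e (M ∩ N) := by
  refine ext_basis (mul_dd_univ (M := N) (by rw [mul_assoc, dd_mul_self])) (dd_mul_univ _) fun j => ?_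
  rw [mul_ap]
  by_cases hN : j ∈ N
  · rw [dd_mem he hN]
    by_cases hM : j ∈ M
    · rw [dd_mem he hM, dd_mem he (M := M ∩ N) ⟨hM, hN⟩]
    · rw [dd_not_mem he hM, dd_not_mem he (fun h => hM h.1)]
  · rw [dd_not_mem he hN, map_zero, dd_not_mem he (fun h => hN h.2)]

lemma dd_empty : dd e (∅ : Set ι) = 0 := by
  ext x; exact pr_eq_zero (by simp)

lemma dd_compl (he : Orthonormal ℂ e) (M : Set ι) : dd e Mᶜ = dd e Set.univ - dd e M := by
  refine ext_basis (dd_mul_univ _) (by rw [sub_mul, dd_mul_univ, dd_mul_univ]) fun j => ?_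
  rw [_root_.sub_apply, dd_mem he (Set.mem_univ j)]
  by_cases h : j ∈ M
  · rw [dd_mem he h, dd_not_mem he (by simpa using h), sub_self]
  · rw [dd_not_mem he h, dd_mem he (by simpa using h), sub_zero]

lemma dd_inAlg (h𝒩 : IsNest 𝒩) (ha : ∀ i, Atomic 𝒩 (e i)) (M : Set ι) : InAlg 𝒩 (dd e M) := by
  refine Red.inAlg h𝒩 (Red.span ?_)
  rintro N hN _ ⟨i, hi, rfl⟩
  rcases ha i N hN with h | h
  · rw [pr_eq_self h]; exact Submodule.subset_span ⟨i, hi, rfl⟩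
  · rw [pr_eq_zero h]; exact Submodule.zero_mem _

lemma support_of_inAlg (ha : ∀ i, Atomic 𝒩 (e i)) {y : H →L[ℂ] H} (hy : InAlg 𝒩 y) {i j : ι}
    (h : inner ℂ (e i) (y (e j)) ≠ 0) : Le 𝒩 e i j := by
  intro M hM hj
  refine (ha i M hM).resolve_right fun h' => h ?_
  exact Submodule.inner_left_of_mem_orthogonal (hy M hM _ hj) h'

lemma eq_zero_of_inner {w : H} (hw : dd e Set.univ w = w) (h : ∀ i, inner ℂ (e i) w = 0) : w = 0 := by
  rw [← hw]
  refine pr_eq_zero ?_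
  have : Submodule.span ℂ (e '' Set.univ) ≤ (Submodule.span ℂ {w})ᗮ := by
    rw [Submodule.span_le]
    rintro _ ⟨j, hj, rfl⟩
    refine Submodule.mem_orthogonal_singleton_iff_inner_left.2 (h j)
  exact Submodule.orthogonal_le this (Submodule.le_orthogonal_orthogonal _ (Submodule.mem_span_singleton_self _))

lemma dd_comm_pr (ha : ∀ i, Atomic 𝒩 (e i)) (M : Set ι) {N : Submodule ℂ H} (hN : N ∈ 𝒩) (x : H) :
    dd e M (pr N x) = pr N (dd e M x) := by
  refine Red.comm (Red.span ?_) hN x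
  rintro N hN _ ⟨i, hi, rfl⟩
  rcases ha i N hN with h | h
  · rw [pr_eq_self h]; exact Submodule.subset_span ⟨i, hi, rfl⟩
  · rw [pr_eq_zero h]; exact Submodule.zero_mem _

lemma inAlg_of_support (h𝒩 : IsNest 𝒩) (he : Orthonormal ℂ e) (ha : ∀ i, Atomic 𝒩 (e i))
    {T : H →L[ℂ] H} (h1 : dd e Set.univ * T = T) (h2 : T * dd e Set.univ = T)
    (h : ∀ i j, inner ℂ (e i) (T (e j)) ≠ 0 → Le 𝒩 e i j) : InAlg 𝒩 T := by
  intro N hN x hx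
  have hcomm : pr N * dd e Set.univ = dd e Set.univ * pr N := by
    ext x; exact (dd_comm_pr ha _ hN x).symm
  have key : pr N * T * pr N = T * pr N := by
    refine ext_basis (e := e) ?_ ?_ fun j => ?_
    · rw [mul_assoc, hcomm, ← mul_assoc, mul_assoc (pr N), h2]
    · rw [mul_assoc, hcomm, ← mul_assoc, h2]
    · simp only [mul_ap]
      rcases ha j N hN with hj | hj
      · rw [pr_eq_self hj, ← sub_eq_zero]
        have h3 : dd e Set.univ (T (e j)) = T (e j) := DFunLike.congr_fun h1 (e j)
        refine eq_zero_of_inner (e := e) ?_ fun i => ?_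
        · rw [map_sub, dd_comm_pr ha _ hN, h3]
        · rw [inner_sub_right, ← pr_sym]
          rcases ha i N hN with hi | hi
          · rw [pr_eq_self hi, sub_self]
          · by_cases hz : inner ℂ (e i) (T (e j)) = 0
            · rw [pr_eq_zero hi, hz]; simp
            · have hi' := h i j hz N hN hj
              have h6 : inner ℂ (e i) (e i) = 0 := Submodule.inner_right_of_mem_orthogonal hi' hi
              rw [inner_self_eq_zero] at h6
              exact absurd h6 (he.ne_zero i)
      · rw [pr_eq_zero hj]; simp
  have := DFunLike.congr_fun key x
  simp only [mul_ap, pr_eq_self hx] at this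
  exact mem_of_pr (h𝒩.closed N hN) this

lemma exists_weighted (he : Orthonormal ℂ e) (c : ι → ℂ) {C : ℝ} (hC : 0 ≤ C) (hc : ∀ i, ‖c i‖ ≤ C)
    (σ : ι → ι) (hσ : Set.InjOn σ {i | c i ≠ 0}) :
    ∃ u : H →L[ℂ] H, (∀ j, u (e j) = c j • e (σ j)) ∧ u * dd e Set.univ = u ∧ ‖u‖ ≤ C := by
  obtain ⟨u, hu, hn⟩ := exists_orth_sum (T := fun i => c i • InnerProductSpace.rankOne ℂ (e (σ i)) (e i)) (by
      intro i j hij x y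
      simp only [_root_.smul_apply, InnerProductSpace.rankOne_apply, inner_smul_left,
        inner_smul_right]
      by_cases hi : c i = 0
      · simp [hi]
      by_cases hj : c j = 0
      · simp [hj]
      rw [he.2 (fun h => hij (hσ hi hj h))]; simp) (C ^ 2) (by
      intro v s
      calc ∑ i ∈ s, ‖(c i • InnerProductSpace.rankOne ℂ (e (σ i)) (e i)) v‖ ^ 2
          ≤ ∑ i ∈ s, C ^ 2 * ‖inner ℂ (e i) v‖ ^ 2 := by
            refine Finset.sum_le_sum fun i _ => ?_
            rw [_root_.smul_apply, InnerProductSpace.rankOne_apply, norm_smul, norm_smul,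
              he.1, mul_one, mul_pow]
            have := hc i
            gcongr
        _ ≤ C ^ 2 * ‖v‖ ^ 2 := by
            rw [← Finset.mul_sum]
            have := he.sum_inner_products_le v (s := s)
            gcongr)
  rw [Real.sqrt_sq hC] at hn
  refine ⟨u, fun j => ?_, ?_, hn⟩
  · refine (hu (e j)).unique ?_
    convert hasSum_single j ?_ using 1
    · simp [InnerProductSpace.rankOne_apply, he.1]
    · intro i hi
      simp [InnerProductSpace.rankOne_apply, he.2 hi]
  · ext x
    refine (hu _).unique ?_
    convert hu x using 2 with i
    simp only [_root_.smul_apply, InnerProductSpace.rankOne_apply]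
    have h5 : inner ℂ (e i) (dd e Set.univ x) = inner ℂ (e i) x := by
      rw [dd, ← pr_sym]; congr 1; exact dd_mem he (Set.mem_univ i)
    exact congrArg (fun z => c i • z • e (σ i)) h5

lemma diag_mem (h𝒩 : IsNest 𝒩) (he : Orthonormal ℂ e) (ha : ∀ i, Atomic 𝒩 (e i)) {D : H →L[ℂ] H}
    {c : ι → ℂ} (h1 : D * dd e Set.univ = D) (h : ∀ j, D (e j) = c j • e j) : D ∈ IdGen 𝒩 := by
  refine mem_IdGen_of_approx fun ε hε => ?_
  have hc : ∀ j, c j ∈ Metric.closedBall (0 : ℂ) ‖D‖ := fun j => by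
    have := D.le_opNorm (e j)
    rw [h, norm_smul, he.1] at this
    simpa using this
  obtain ⟨t, htf, ht⟩ := Metric.totallyBounded_iff.1 (isCompact_closedBall (0 : ℂ) ‖D‖).totallyBounded ε hε
  have : ∀ j, ∃ z ∈ t, dist (c j) z < ε := fun j => by simpa using ht (hc j)
  choose f hf hfd using this
  have hsum : ∑ z ∈ htf.toFinset, z • dd e {j | f j = z} ∈ IdGen 𝒩 :=
    Subalgebra.sum_mem _ fun z _ => Subalgebra.smul_mem _
      (idem_mem (dd_inAlg h𝒩 ha _) (dd_mul_self _)) z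
  refine ⟨_, hsum, ?_⟩
  obtain ⟨u, hu, hu1, hun⟩ := exists_weighted he (fun j => c j - f j) hε.le
    (fun j => by rw [← dist_eq_norm]; exact (hfd j).le) id (Set.injOn_id _)
  have : D - ∑ z ∈ htf.toFinset, z • dd e {j | f j = z} = u := by
    refine ext_basis ?_ hu1 fun j => ?_
    · rw [sub_mul, h1, Finset.sum_mul]
      simp only [smul_mul_assoc, dd_mul_univ]
    · rw [_root_.sub_apply, h, hu, sub_smul, _root_.sum_apply]
      congr 1
      rw [Finset.sum_eq_single (f j)]
      · rw [_root_.smul_apply, dd_mem he (by simp)]; rfl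
      · intro z _ hz
        rw [_root_.smul_apply, dd_not_mem he (by simpa using hz.symm), smul_zero]
      · intro h; exact absurd ((Set.Finite.mem_toFinset _).2 (hf j)) h
  rw [this]; exact hun

lemma shift_mem (h𝒩 : IsNest 𝒩) (he : Orthonormal ℂ e) (ha : ∀ i, Atomic 𝒩 (e i)) {X : H →L[ℂ] H}
    {J J' : Set ι} (hJ : J' ⊆ J) (σ : ι → ι) (hσ : Set.InjOn σ J') (hσJ : ∀ j ∈ J', σ j ∉ J)
    (hle : ∀ j ∈ J', Le 𝒩 e (σ j) j) (h1 : dd e J * X = X) (h2 : X * dd e J' = X)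
    (hX : ∀ i, ∀ j ∈ J', inner ℂ (e i) (X (e j)) ≠ 0 → Le 𝒩 e i (σ j)) : X ∈ IdGen 𝒩 := by
  classical
  rcases isEmpty_or_nonempty ι with hι | hι
  · have : X = 0 := ext_basis (mul_dd_univ h2) (by simp) (fun j => (hι.false j).elim)
    rw [this]; exact zero_mem _
  obtain ⟨u, hu, hu1, -⟩ := exists_weighted he (fun j => if j ∈ J' then 1 else 0) zero_le_one
    (fun j => by split_ifs <;> simp) σ (by simpa using hσ)
  let τ := Function.invFunOn σ J'
  have hτ : ∀ j ∈ J', τ (σ j) = j := fun j hj => hσ.leftInvOn_invFunOn hj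
  obtain ⟨v, hv, hv1, -⟩ := exists_weighted he (fun j => if j ∈ σ '' J' then 1 else 0) zero_le_one
    (fun j => by split_ifs <;> simp) τ (by
      intro a ha b hb hab
      simp at ha hb
      obtain ⟨i, hi, rfl⟩ := ha
      obtain ⟨j, hj, rfl⟩ := hb
      rw [hτ i hi, hτ j hj] at hab
      rw [hab])
  have hfac : X = (X * v) * u := by
    refine ext_basis (mul_dd_univ h2) (by rw [mul_assoc, hu1]) fun j => ?_
    simp only [mul_ap, hu]
    by_cases hj : j ∈ J'
    · rw [if_pos hj, one_smul, hv, if_pos ⟨j, hj, rfl⟩, one_smul, hτ j hj]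
    · rw [if_neg hj, ← h2, mul_ap, dd_not_mem he hj]; simp
  rw [hfac]
  have huniv : dd e Set.univ * X = X := by rw [← h1, ← mul_assoc, univ_mul_dd]
  refine factor_mem (p := dd e Jᶜ) (dd_inAlg h𝒩 ha _) (dd_mul_self _) ?_ ?_ ?_ ?_ ?_ ?_
  · refine inAlg_of_support h𝒩 he ha (by rw [← mul_assoc, huniv]) (by rw [mul_assoc, hv1]) ?_
    intro i k h
    simp only [mul_ap, hv] at h
    by_cases hk : k ∈ σ '' J'
    · obtain ⟨j, hj, rfl⟩ := hk
      rw [if_pos ⟨j, hj, rfl⟩, one_smul, hτ j hj] at h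
      exact hX i j hj h
    · rw [if_neg hk] at h; simp at h
  · refine inAlg_of_support h𝒩 he ha ?_ hu1 ?_
    · refine ext_basis (by rw [mul_assoc, hu1]) hu1 fun j => ?_
      rw [mul_ap, hu, map_smul, dd_mem he (Set.mem_univ _)]
    · intro i j h
      rw [hu, inner_smul_right] at h
      by_cases hj : j ∈ J'
      · have : i = σ j := by
          by_contra hne
          exact h (by rw [he.2 hne, mul_zero])
        rw [this]; exact hle j hj
      · simp [hj] at h
  · rw [← mul_assoc, ← h1, ← mul_assoc, dd_inter he]; simp [dd_empty]
  · rw [mul_assoc]; congr 1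
    refine ext_basis (by rw [mul_assoc, dd_mul_univ]) hv1 fun k => ?_
    rw [mul_ap]
    by_cases hk : k ∈ J
    · rw [dd_not_mem he (by simpa using hk), map_zero, hv, if_neg, zero_smul]
      rintro ⟨j, hj, rfl⟩; exact hσJ j hj hk
    · rw [dd_mem he (by simpa using hk)]
  · refine ext_basis (by rw [mul_assoc, hu1]) hu1 fun j => ?_
    rw [mul_ap, hu]
    by_cases hj : j ∈ J'
    · rw [map_smul, dd_mem he (by simpa using hσJ j hj)]
    · simp [hj]
  · refine ext_basis (by rw [mul_assoc, dd_mul_univ]) (by simp) fun j => ?_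
    rw [mul_ap]
    by_cases hj : j ∈ J
    · rw [dd_not_mem he (by simpa using hj), map_zero]; rfl
    · rw [dd_mem he (by simpa using hj), hu, if_neg (fun h => hj (hJ h)), zero_smul]; rfl

lemma split_dd (h𝒩 : IsNest 𝒩) (he : Orthonormal ℂ e) (ha : ∀ i, Atomic 𝒩 (e i)) {y : H →L[ℂ] H}
    (hy : InAlg 𝒩 y) (h1 : dd e Set.univ * y = y) (h2 : y * dd e Set.univ = y) (J : Set ι)
    (h3 : dd e J * y * dd e J ∈ IdGen 𝒩) (h4 : dd e Jᶜ * y * dd e Jᶜ ∈ IdGen 𝒩) : y ∈ IdGen 𝒩 := by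
  refine split_mem (dd_inAlg h𝒩 ha J) (dd_mul_self _) hy h3 ?_
  convert h4 using 1
  rw [dd_compl he]
  simp only [sub_mul, mul_sub, h1, h2, one_mul, mul_one, mul_assoc]

end atoms
end NestZPD

namespace NestZPD
variable {H : Type*} [NormedAddCommGroup H] [InnerProductSpace ℂ H] [CompleteSpace H]
variable {𝒩 : Set (Submodule ℂ H)}
section atoms
variable {ι : Type*} {e : ι → H}

lemma exists_max_rel {R : ι → ι → Prop} (hr : ∀ i, R i i) (ht : ∀ i j k, R i j → R j k → R i k)
    (hto : ∀ i j, R i j ∨ R j i) (F : Finset ι) (hF : F.Nonempty) : ∃ m ∈ F, ∀ i ∈ F, R i m := by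
  classical
  induction hF using Finset.Nonempty.cons_induction with
  | singleton a => exact ⟨a, by simp, by simpa using hr a⟩
  | cons a s ha hs ih =>
    obtain ⟨m, hm, h⟩ := ih
    rcases hto a m with h1 | h1
    · refine ⟨m, by simp [hm], ?_⟩
      intro i hi
      rcases Finset.mem_cons.1 hi with rfl | hi
      · exact h1
      · exact h i hi
    · refine ⟨a, by simp, ?_⟩
      intro i hi
      rcases Finset.mem_cons.1 hi with rfl | hi
      · exact hr _
      · exact ht _ _ _ (h i hi) h1

lemma exists_pos {R : ι → ι → Prop} (hr : ∀ i, R i i) (ht : ∀ i j k, R i j → R j k → R i k)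
    (hto : ∀ i j, R i j ∨ R j i) (n : ℕ) : ∀ F : Finset ι, F.card = n → ∃ pos : ι → ℕ,
      (∀ i ∈ F, pos i < n) ∧ (∀ i ∈ F, ∀ j ∈ F, pos i = pos j → i = j) ∧
      (∀ i ∈ F, ∀ j ∈ F, pos i < pos j → R i j) ∧ (∀ m < n, ∃ i ∈ F, pos i = m) := by
  classical
  induction n with
  | zero =>
    intro F hF
    rw [Finset.card_eq_zero] at hF
    subst hF
    exact ⟨fun _ => 0, by simp, by simp, by simp, by simp⟩
  | succ n ih =>
    intro F hF
    obtain ⟨m, hm, hmax⟩ := exists_max_rel hr ht hto F (Finset.card_pos.1 (by omega))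
    obtain ⟨pos, h1, h2, h3, h4⟩ := ih (F.erase m) (by rw [Finset.card_erase_of_mem hm]; omega)
    have hp : ∀ i, i ≠ m → Function.update pos m n i = pos i := fun i hi => Function.update_of_ne hi _ _
    have hpm : Function.update pos m n m = n := Function.update_self _ _ _
    refine ⟨Function.update pos m n, ?_, ?_, ?_, ?_⟩
    · intro i hi
      by_cases him : i = m
      · rw [him, hpm]; omega
      · rw [hp i him]; have := h1 i (Finset.mem_erase.2 ⟨him, hi⟩); omega
    · intro i hi j hj hij
      by_cases him : i = m <;> by_cases hjm : j = m
      · rw [him, hjm]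
      · rw [him, hpm, hp j hjm] at hij
        have := h1 j (Finset.mem_erase.2 ⟨hjm, hj⟩); omega
      · rw [hjm, hpm, hp i him] at hij
        have := h1 i (Finset.mem_erase.2 ⟨him, hi⟩); omega
      · rw [hp i him, hp j hjm] at hij
        exact h2 i (Finset.mem_erase.2 ⟨him, hi⟩) j (Finset.mem_erase.2 ⟨hjm, hj⟩) hij
    · intro i hi j hj hij
      by_cases hjm : j = m
      · rw [hjm]; exact hmax i hi
      · by_cases him : i = m
        · rw [him, hpm, hp j hjm] at hij
          have := h1 j (Finset.mem_erase.2 ⟨hjm, hj⟩); omega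
        · rw [hp i him, hp j hjm] at hij
          exact h3 i (Finset.mem_erase.2 ⟨him, hi⟩) j (Finset.mem_erase.2 ⟨hjm, hj⟩) hij
    · intro k hk
      by_cases hkn : k = n
      · exact ⟨m, hm, by rw [hpm, hkn]⟩
      · obtain ⟨i, hi, hik⟩ := h4 k (by omega)
        rw [Finset.mem_erase] at hi
        exact ⟨i, hi.2, by rw [hp i hi.1, hik]⟩

/-- one parity class of a block diagonal operator -/
lemma parity_mem (h𝒩 : IsNest 𝒩) (he : Orthonormal ℂ e) (ha : ∀ i, Atomic 𝒩 (e i)) {T : H →L[ℂ] H}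
    (κ pos : ι → ℕ)
    (p1 : ∀ i j, κ i = κ j → pos i = pos j → i = j)
    (p2 : ∀ i j, κ i = κ j → pos i < pos j → Le 𝒩 e i j)
    (p3 : ∀ j m, m < pos j → ∃ i, κ i = κ j ∧ pos i = m)
    (J : Set ι) (hJ : ∀ i ∈ J, ∀ j, (j ∈ J ↔ pos i % 2 = pos j % 2))
    (h1 : dd e J * T = T) (h2 : T * dd e J = T)
    (hT : ∀ i j, inner ℂ (e i) (T (e j)) ≠ 0 → κ i = κ j ∧ Le 𝒩 e i j) : T ∈ IdGen 𝒩 := by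
  classical
  have hrow : ∀ i j, inner ℂ (e i) (T (e j)) ≠ 0 → i ∈ J ∧ j ∈ J := by
    intro i j h
    constructor
    · by_contra hi
      apply h
      rw [← h1, mul_ap, dd, ← pr_sym]
      have := dd_not_mem he hi
      rw [dd] at this
      rw [this, inner_zero_left]
    · by_contra hj
      apply h
      rw [← h2, mul_ap, dd_not_mem he hj, map_zero, inner_zero_right]
  let P : ι → ι → Prop := fun j i => κ i = κ j ∧ pos i + 1 = pos j
  let σ1 : ι → ι := fun j => if h : ∃ i, P j i then h.choose else j
  have hσ1 : ∀ j, (∃ i, P j i) → P j (σ1 j) := fun j h => by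
    simp only [σ1, dif_pos h]; exact h.choose_spec
  let σ2 : ι → ι := fun j => if h : ∃ i, P i j then h.choose else j
  have hσ2 : ∀ j, (∃ i, P i j) → P (σ2 j) j := fun j h => by
    simp only [σ2, dif_pos h]; exact h.choose_spec
  let C1 : Set ι := {j | j ∈ J ∧ ∃ i, P j i ∧ Le 𝒩 e j i}
  let C2 : Set ι := {j | j ∈ J ∧ j ∉ C1 ∧ ∃ i, P i j ∧ Le 𝒩 e i j}
  let C3 : Set ι := {j | j ∈ J ∧ j ∉ C1 ∧ j ∉ C2}
  let C3' : Set ι := {j | j ∈ C3 ∧ ∃ i, P j i}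
  have hP : ∀ j i i', P j i → P j i' → i = i' := fun j i i' h h' =>
    p1 _ _ (h.1.trans h'.1.symm) (by have := h.2; have := h'.2; omega)
  have hP' : ∀ j i i', P i j → P i' j → i = i' := fun j i i' h h' =>
    p1 _ _ (h.1.symm.trans h'.1) (by have := h.2; have := h'.2; omega)
  have notJ : ∀ j ∈ J, ∀ i, P j i → i ∉ J := fun j hj i h hi => by
    have := (hJ j hj i).1 hi; have := h.2; omega
  have notJ' : ∀ j ∈ J, ∀ i, P i j → i ∉ J := fun j hj i h hi => by
    have := (hJ j hj i).1 hi; have := h.2; omega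
  have leP : ∀ j i, P j i → Le 𝒩 e i j := fun j i h => p2 _ _ h.1 (by have := h.2; omega)
  have hCJ : ∀ C : Set ι, dd e J * (T * dd e C) = T * dd e C := fun C => by rw [← mul_assoc, h1]
  -- first piece
  have m1 : T * dd e C1 ∈ IdGen 𝒩 := by
    refine shift_mem h𝒩 he ha (J := J) (J' := C1) (fun j hj => hj.1) σ1 ?_ ?_ ?_ (hCJ _)
      (by rw [mul_assoc, dd_mul_self]) ?_
    · intro j hj j' hj' h
      have q1 := hσ1 j ⟨_, hj.2.choose_spec.1⟩
      have q2 := hσ1 j' ⟨_, hj'.2.choose_spec.1⟩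
      rw [h] at q1
      exact hP' _ _ _ q1 q2
    · intro j hj
      exact notJ j hj.1 _ (hσ1 j ⟨_, hj.2.choose_spec.1⟩)
    · intro j hj
      exact leP _ _ (hσ1 j ⟨_, hj.2.choose_spec.1⟩)
    · intro i j hj h
      rw [mul_ap, dd_mem he hj] at h
      obtain ⟨hJ1, i', hi', hle⟩ := hj
      have := hP _ _ _ hi' (hσ1 j ⟨_, hi'⟩)
      rw [← this]
      exact (hT i j h).2.trans hle
  have m2 : T * dd e C2 ∈ IdGen 𝒩 := by
    refine shift_mem h𝒩 he ha (J := J) (J' := C2) (fun j hj => hj.1) σ2 ?_ ?_ ?_ (hCJ _)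
      (by rw [mul_assoc, dd_mul_self]) ?_
    · intro j hj j' hj' h
      have q1 := hσ2 j ⟨_, hj.2.2.choose_spec.1⟩
      have q2 := hσ2 j' ⟨_, hj'.2.2.choose_spec.1⟩
      rw [h] at q1
      exact hP _ _ _ q1 q2
    · intro j hj
      exact notJ' j hj.1 _ (hσ2 j ⟨_, hj.2.2.choose_spec.1⟩)
    · intro j hj
      obtain ⟨hJ1, _, i', hi', hle⟩ := hj
      have := hP' _ _ _ hi' (hσ2 j ⟨_, hi'⟩)
      rwa [← this]
    · intro i j hj h
      rw [mul_ap, dd_mem he hj] at h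
      exact (hT i j h).2.trans (leP _ _ (hσ2 j ⟨_, hj.2.2.choose_spec.1⟩))
  -- diagonal
  obtain ⟨D, hD, hD1, -⟩ := exists_weighted he (fun j => if j ∈ C3 then inner ℂ (e j) (T (e j)) else 0)
    (norm_nonneg T) (fun j => by
      split_ifs
      · refine (norm_inner_le_norm _ _).trans ?_
        have := T.le_opNorm (e j)
        rw [he.1] at this ⊢
        linarith
      · simp) id (Set.injOn_id _)
  have mD : D ∈ IdGen 𝒩 := diag_mem h𝒩 he ha hD1 hD
  have hDJ : dd e J * D = D := by
    refine ext_basis (by rw [mul_assoc, hD1]) hD1 fun j => ?_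
    rw [mul_ap, hD]
    by_cases hj : j ∈ C3
    · rw [map_smul]; congr 1; exact dd_mem he hj.1
    · simp [hj]
  have offd : ∀ i, ∀ j ∈ C3, inner ℂ (e i) ((T * dd e C3 - D) (e j)) ≠ 0 →
      i ≠ j ∧ inner ℂ (e i) (T (e j)) ≠ 0 := by
    intro i j hj h
    rw [_root_.sub_apply, mul_ap, dd_mem he hj, hD, if_pos hj, inner_sub_right, inner_smul_right] at h
    by_cases hij : i = j
    · subst hij
      simp [he.1] at h
    · refine ⟨hij, ?_⟩
      rw [id, he.2 hij] at h
      simpa using h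
  have offd2 : ∀ i, ∀ j ∈ C3, inner ℂ (e i) ((T * dd e C3 - D) (e j)) ≠ 0 →
      ∃ k, P j k ∧ Le 𝒩 e i k := by
    intro i j hj h
    obtain ⟨hij, hn⟩ := offd i j hj h
    obtain ⟨hκ, hle⟩ := hT i j hn
    obtain ⟨hiJ, hjJ⟩ := hrow i j hn
    have hpar := (hJ i hiJ j).1 hjJ
    have hne : pos i ≠ pos j := fun h => hij (p1 _ _ hκ h)
    rcases lt_or_gt_of_ne hne with hlt | hgt
    · obtain ⟨k, hk1, hk2⟩ := p3 j (pos j - 1) (by omega)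
      refine ⟨k, ⟨hk1, by omega⟩, p2 _ _ (hκ.trans hk1.symm) (by omega)⟩
    · obtain ⟨k, hk1, hk2⟩ := p3 i (pos j + 1) (by omega)
      exfalso
      apply hj.2.2
      refine ⟨hjJ, hj.2.1, k, ⟨by rw [hk1, hκ], by omega⟩, ?_⟩
      exact (p2 k i hk1 (by omega)).trans hle
  have hX1 : dd e J * (T * dd e C3 - D) = T * dd e C3 - D := by rw [mul_sub, hCJ, hDJ]
  have hXu : (T * dd e C3 - D) * dd e Set.univ = T * dd e C3 - D := by
    rw [sub_mul, mul_assoc, dd_mul_univ, hD1]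
  have m3 : T * dd e C3 - D ∈ IdGen 𝒩 := by
    refine shift_mem h𝒩 he ha (J := J) (J' := C3') (fun j hj => hj.1.1) σ1 ?_ ?_ ?_ hX1 ?_ ?_
    · intro j hj j' hj' h
      have q1 := hσ1 j hj.2
      have q2 := hσ1 j' hj'.2
      rw [h] at q1
      exact hP' _ _ _ q1 q2
    · intro j hj
      exact notJ j hj.1.1 _ (hσ1 j hj.2)
    · intro j hj
      exact leP _ _ (hσ1 j hj.2)
    · refine ext_basis (by rw [mul_assoc, dd_mul_univ]) hXu fun j => ?_
      rw [mul_ap]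
      by_cases hj : j ∈ C3'
      · rw [dd_mem he hj]
      · rw [dd_not_mem he hj, map_zero]
        symm
        by_cases hj3 : j ∈ C3
        · refine eq_zero_of_inner (e := e) ?_ fun i => ?_
          · rw [← hX1, mul_ap, ← mul_ap (dd e Set.univ), univ_mul_dd]
          · by_contra hne
            obtain ⟨k, hk, _⟩ := offd2 i j hj3 hne
            exact hj ⟨hj3, k, hk⟩
        · rw [_root_.sub_apply, mul_ap, dd_not_mem he hj3, hD, if_neg hj3]; simp
    · intro i j hj h
      obtain ⟨k, hk, hle⟩ := offd2 i j hj.1 h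
      rwa [← hP _ _ _ hk (hσ1 j hj.2)]
  have hsum : T = T * dd e C1 + T * dd e C2 + (T * dd e C3 - D) + D := by
    refine ext_basis (mul_dd_univ h2) ?_ fun j => ?_
    · simp only [add_mul, hXu, hD1, mul_assoc, dd_mul_univ]
    · have e3 : (T * dd e C1 + T * dd e C2 + (T * dd e C3 - D) + D) = T * (dd e C1 + dd e C2 + dd e C3) := by
        rw [mul_add, mul_add]; abel
      rw [e3, mul_ap]
      simp only [_root_.add_apply]
      by_cases hj : j ∈ J
      · congr 1
        by_cases hc1 : j ∈ C1
        · rw [dd_mem he hc1, dd_not_mem he (M := C2) (fun h => h.2.1 hc1),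
            dd_not_mem he (M := C3) (fun h => h.2.1 hc1)]; simp
        · by_cases hc2 : j ∈ C2
          · rw [dd_mem he hc2, dd_not_mem he hc1, dd_not_mem he (M := C3) (fun h => h.2.2 hc2)]; simp
          · rw [dd_not_mem he hc2, dd_not_mem he hc1, dd_mem he (M := C3) ⟨hj, hc1, hc2⟩]; simp
      · rw [dd_not_mem he (M := C1) (fun h => hj h.1), dd_not_mem he (M := C2) (fun h => hj h.1),
          dd_not_mem he (M := C3) (fun h => hj h.1), ← h2, mul_ap, dd_not_mem he hj]; simp
  rw [hsum]
  exact add_mem (add_mem (add_mem m1 m2) m3) mD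

lemma block_mem (h𝒩 : IsNest 𝒩) (he : Orthonormal ℂ e) (ha : ∀ i, Atomic 𝒩 (e i)) {T : H →L[ℂ] H}
    (hA : InAlg 𝒩 T) (κ : ι → ℕ) (hκ : ∀ n, {i | κ i = n}.Finite)
    (h1 : dd e Set.univ * T = T) (h2 : T * dd e Set.univ = T)
    (hT : ∀ i j, inner ℂ (e i) (T (e j)) ≠ 0 → κ i = κ j) : T ∈ IdGen 𝒩 := by
  have hex := fun n => exists_pos (R := Le 𝒩 e) Le.refl (fun _ _ _ => Le.trans) (Le.total h𝒩) _
    (hκ n).toFinset rfl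
  choose ps q1 q2 q3 q4 using hex
  let pos : ι → ℕ := fun i => ps (κ i) i
  have hm : ∀ i n, κ i = n → i ∈ (hκ n).toFinset := fun i n h => by simpa using h
  have p1 : ∀ i j, κ i = κ j → pos i = pos j → i = j := fun i j h h' => by
    refine q2 (κ j) i (hm _ _ h) j (hm _ _ rfl) ?_
    simpa only [pos, h] using h'
  have p2 : ∀ i j, κ i = κ j → pos i < pos j → Le 𝒩 e i j := fun i j h h' => by
    refine q3 (κ j) i (hm _ _ h) j (hm _ _ rfl) ?_
    simpa only [pos, h] using h'
  have p3 : ∀ j m, m < pos j → ∃ i, κ i = κ j ∧ pos i = m := fun j m h => by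
    obtain ⟨i, hi, hi'⟩ := q4 (κ j) m (h.trans (q1 (κ j) j (hm _ _ rfl)))
    have hi2 : κ i = κ j := by simpa using hi
    exact ⟨i, hi2, by simpa only [pos, hi2] using hi'⟩
  have key : ∀ J : Set ι, (∀ i ∈ J, ∀ j, (j ∈ J ↔ pos i % 2 = pos j % 2)) →
      dd e J * T * dd e J ∈ IdGen 𝒩 := by
    intro J hJ
    have hd := dd_inAlg (e := e) h𝒩 ha J
    refine parity_mem h𝒩 he ha κ pos p1 p2 p3 J hJ (by rw [← mul_assoc, ← mul_assoc, dd_mul_self])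
      (by rw [mul_assoc, dd_mul_self]) fun i j h => ⟨?_, support_of_inAlg ha ((hd.mul hA).mul hd) h⟩
    apply hT
    intro h0
    apply h
    rw [mul_ap, mul_ap, dd, ← pr_sym]
    change inner ℂ (dd e J (e i)) (T (dd e J (e j))) = 0
    by_cases hi : i ∈ J <;> by_cases hj : j ∈ J
    · rw [dd_mem he hi, dd_mem he hj, h0]
    all_goals simp [dd_not_mem he, *]
  refine split_dd h𝒩 he ha hA h1 h2 {i | pos i % 2 = 0} (key _ ?_) (key _ ?_)
  · intro i hi j
    simp only [Set.mem_ofPred_eq] at hi ⊢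
    omega
  · intro i hi j
    simp only [Set.mem_compl_iff, Set.mem_ofPred_eq] at hi ⊢
    omega

end atoms
end NestZPD

namespace NestZPD
variable {H : Type*} [NormedAddCommGroup H] [InnerProductSpace ℂ H] [CompleteSpace H]
variable {𝒩 : Set (Submodule ℂ H)}
section atoms
variable {ι : Type*} {e : ι → H}

lemma dd_opnorm_le (M : Set ι) : ‖dd e M‖ ≤ 1 := pr_opnorm_le _

lemma vec_approx (he : Orthonormal ℂ e) {w : H} (hw : dd e Set.univ w = w) {δ : ℝ} (hδ : 0 < δ) :
    ∃ F0 : Finset ι, ∀ F' : Set ι, ↑F0 ⊆ F' → ‖dd e F'ᶜ w‖ ≤ δ := by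
  classical
  have hw' : w ∈ (Submodule.span ℂ (e '' Set.univ)).topologicalClosure := hw ▸ pr_mem_closure _ _
  obtain ⟨s, hs, hd⟩ := Metric.mem_closure_iff.1 hw' δ hδ
  obtain ⟨T, hT, hsT⟩ := Submodule.mem_span_finite_of_mem_span hs
  obtain ⟨F0, -, rfl⟩ := Finset.subset_set_image_iff.1 hT
  refine ⟨F0, fun F' hF' => ?_⟩
  have hz : dd e F'ᶜ s = 0 := by
    have : Submodule.span ℂ (F0.image e : Set H) ≤ (dd e F'ᶜ).ker := by
      rw [Submodule.span_le]
      intro x hx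
      rw [Finset.coe_image] at hx
      obtain ⟨j, hj, rfl⟩ := hx
      exact dd_not_mem he (by simpa using hF' hj)
    exact this hsT
  have : dd e F'ᶜ w = dd e F'ᶜ (w - s) := by rw [map_sub, hz, sub_zero]
  rw [this]
  rw [dist_eq_norm] at hd
  exact (pr_norm_le _ _).trans hd.le

lemma fin_approx (he : Orthonormal ℂ e) {y : H →L[ℂ] H} (hy : dd e Set.univ * y = y) (F : Finset ι)
    {δ : ℝ} (hδ : 0 < δ) :
    ∃ F0 : Finset ι, ∀ F' : Set ι, ↑F0 ⊆ F' → ‖dd e F'ᶜ * y * dd e ↑F‖ ≤ δ := by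
  classical
  have hyj : ∀ j, dd e Set.univ (y (e j)) = y (e j) := fun j => DFunLike.congr_fun hy (e j)
  have hδ' : 0 < δ / (F.card + 1) := by positivity
  choose G hG using fun j => vec_approx he (hyj j) hδ'
  refine ⟨F.biUnion G, fun F' hF' => ?_⟩
  have hsum : dd e (↑F : Set ι) = ∑ j ∈ F, dd e {j} := by
    refine ext_basis (dd_mul_univ _) (by rw [Finset.sum_mul]; simp only [dd_mul_univ]) fun i => ?_
    rw [_root_.sum_apply]
    by_cases hi : i ∈ F
    · rw [dd_mem he (by simpa using hi), Finset.sum_eq_single i]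
      · rw [dd_mem he (by simp)]
      · intro j _ hj; exact dd_not_mem he (by simpa using hj.symm)
      · intro h; exact absurd hi h
    · rw [dd_not_mem he (by simpa using hi), Finset.sum_eq_zero]
      intro j hj
      refine dd_not_mem he ?_
      rw [Set.mem_singleton_iff]
      rintro rfl; exact hi hj
  have hj : ∀ j ∈ F, ‖dd e F'ᶜ * y * dd e {j}‖ ≤ δ / (F.card + 1) := by
    intro j hjF
    refine ContinuousLinearMap.opNorm_le_bound _ hδ'.le fun v => ?_
    have hm : dd e {j} v ∈ Submodule.span ℂ {e j} := by
      have := pr_mem (K := Submodule.span ℂ {e j}) (Submodule.closed_of_finiteDimensional _) v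
      rwa [dd, Set.image_singleton]
    obtain ⟨c, hc⟩ := Submodule.mem_span_singleton.1 hm
    have hcn : ‖c‖ ≤ ‖v‖ := by
      have : ‖dd e {j} v‖ ≤ ‖v‖ := pr_norm_le _ _
      rwa [← hc, norm_smul, he.1, mul_one] at this
    have hb := hG j F' (fun i hi => hF' (Finset.mem_coe.2 (Finset.mem_biUnion.2 ⟨j, hjF, hi⟩)))
    rw [mul_ap, mul_ap, ← hc, map_smul, map_smul, norm_smul, mul_comm]
    exact mul_le_mul hb hcn (norm_nonneg _) hδ'.le
  rw [hsum, Finset.mul_sum]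
  refine (norm_sum_le _ _).trans ((Finset.sum_le_sum hj).trans ?_)
  rw [Finset.sum_const, nsmul_eq_mul]
  have : (F.card : ℝ) * (δ / (F.card + 1)) = δ * (F.card / (F.card + 1)) := by ring
  rw [this]
  have h2 : (F.card : ℝ) / (F.card + 1) ≤ 1 := by rw [div_le_one (by positivity)]; linarith
  nlinarith

lemma dd_adjoint (M : Set ι) : ContinuousLinearMap.adjoint (dd e M) = dd e M := pr_adjoint _

lemma fin_approx' (he : Orthonormal ℂ e) {y : H →L[ℂ] H} (hy : y * dd e Set.univ = y) (F : Finset ι)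
    {δ : ℝ} (hδ : 0 < δ) :
    ∃ F0 : Finset ι, ∀ F' : Set ι, ↑F0 ⊆ F' → ‖dd e ↑F * y * dd e F'ᶜ‖ ≤ δ := by
  have h1 : dd e Set.univ * ContinuousLinearMap.adjoint y = ContinuousLinearMap.adjoint y := by
    conv_rhs => rw [← hy]
    rw [ContinuousLinearMap.mul_def, ContinuousLinearMap.mul_def, ContinuousLinearMap.adjoint_comp, dd_adjoint]
  obtain ⟨F0, h⟩ := fin_approx he h1 F hδ
  refine ⟨F0, fun F' hF' => ?_⟩
  have h3 : ContinuousLinearMap.adjoint (dd e ↑F * y * dd e F'ᶜ) =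
      dd e F'ᶜ * ContinuousLinearMap.adjoint y * dd e ↑F := by
    rw [ContinuousLinearMap.mul_def, ContinuousLinearMap.mul_def, ContinuousLinearMap.adjoint_comp,
      ContinuousLinearMap.adjoint_comp, dd_adjoint, dd_adjoint]
    rfl
  rw [← ContinuousLinearMap.adjoint.norm_map, h3]
  exact h F' hF'

lemma block_reduce (h𝒩 : IsNest 𝒩) (he : Orthonormal ℂ e) (ha : ∀ i, Atomic 𝒩 (e i)) {y : H →L[ℂ] H}
    (hA : InAlg 𝒩 y) (κ : ι → ℕ) (hκ : ∀ n, {i | κ i = n}.Finite)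
    {ε : ℝ}
    (b1 : ∀ k, ‖dd e {i | k + 2 ≤ κ i} * y * dd e {i | κ i = k}‖ ≤ ε * (1 / 2) ^ k)
    (b2 : ∀ k, ‖dd e {i | κ i + 2 ≤ k} * y * dd e {i | κ i = k}‖ ≤ ε * (1 / 2) ^ k)
    (E : Set ι) (hE : ∀ i ∈ E, ∀ j ∈ E, κ i ≠ κ j → κ i + 2 ≤ κ j ∨ κ j + 2 ≤ κ i) :
    ∃ T ∈ IdGen 𝒩, ‖dd e E * y * dd e E - T‖ ≤ 4 * ε := by
  classical
  let A : ℕ → Set ι := fun k => E ∩ {i | κ i ≠ k}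
  let B : ℕ → Set ι := fun k => E ∩ {i | κ i = k}
  let R : ℕ → H →L[ℂ] H := fun k => dd e (A k) * y * dd e (B k)
  have hRn : ∀ k, ‖R k‖ ≤ 2 * ε * (1 / 2) ^ k := by
    intro k
    have hB : dd e (B k) = dd e {i | κ i = k} * dd e E := by
      rw [dd_inter he, Set.inter_comm]
    rcases Set.eq_empty_or_nonempty (B k) with h0 | ⟨j0, hj0⟩
    · have : 0 ≤ ε * (1 / 2) ^ k := (norm_nonneg _).trans (b1 k)
      simp only [R, h0, dd_empty, mul_zero, norm_zero]; linarith
    have hA' : dd e (A k) = dd e (A k) * (dd e {i | k + 2 ≤ κ i} + dd e {i | κ i + 2 ≤ k}) := by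
      refine ext_basis (dd_mul_univ _) (by rw [mul_assoc, add_mul, dd_mul_univ, dd_mul_univ]) fun j => ?_
      rw [mul_ap, _root_.add_apply]
      by_cases hj : j ∈ A k
      · have h3 := hE j hj.1 j0 hj0.1 (by rw [show κ j0 = k from hj0.2]; exact hj.2)
        rw [show κ j0 = k from hj0.2] at h3
        rw [dd_mem he hj]
        rcases h3 with h3 | h3
        · rw [dd_mem he (M := {i | κ i + 2 ≤ k}) h3, dd_not_mem he (by simp; omega), zero_add, dd_mem he hj]
        · rw [dd_mem he (M := {i | k + 2 ≤ κ i}) h3, dd_not_mem he (by simp; omega), add_zero, dd_mem he hj]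
      · rw [dd_not_mem he hj, map_add]
        have : ∀ M : Set ι, dd e (A k) (dd e M (e j)) = 0 := fun M => by
          rw [← mul_ap, dd_inter he]; exact dd_not_mem he (fun h => hj h.1)
        rw [this, this, add_zero]
    have e1 : R k = dd e (A k) * (dd e {i | k + 2 ≤ κ i} * y * dd e {i | κ i = k} +
        dd e {i | κ i + 2 ≤ k} * y * dd e {i | κ i = k}) * dd e E := by
      simp only [R]
      conv_lhs => rw [hA', hB]
      simp only [mul_add, add_mul, mul_assoc]
    rw [e1]
    calc _ ≤ 1 * ‖_‖ * 1 := by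
          refine (norm_mul_le _ _).trans (mul_le_mul ((norm_mul_le _ _).trans
            (mul_le_mul_of_nonneg_right (dd_opnorm_le _) (norm_nonneg _))) (dd_opnorm_le _) (norm_nonneg _) (by positivity))
      _ ≤ _ := by
          rw [one_mul, mul_one]
          refine (norm_add_le _ _).trans ?_
          have := b1 k; have := b2 k; linarith
  have hg : HasSum (fun k : ℕ => 2 * ε * (1 / 2 : ℝ) ^ k) (4 * ε) := by
    have := hasSum_geometric_two.mul_left (2 * ε)
    rwa [show 2 * ε * 2 = 4 * ε by ring] at this
  have hsm : Summable R := Summable.of_norm_bounded hg.summable hRn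
  obtain ⟨Q, hQ⟩ := hsm
  have hQn : ‖Q‖ ≤ 4 * ε := by rw [← hQ.tsum_eq]; exact tsum_of_norm_bounded hg hRn
  have hQv : ∀ v, HasSum (fun k => R k v) (Q v) := fun v =>
    hQ.mapL (ContinuousLinearMap.apply ℂ H v)
  have hd := fun M => dd_inAlg (e := e) h𝒩 ha M
  have hRA : ∀ k, InAlg 𝒩 (R k) := fun k => ((hd _).mul hA).mul (hd _)
  have hQA : InAlg 𝒩 Q := InAlg.hasSum h𝒩 hRA hQv
  refine ⟨dd e E * y * dd e E - Q, ?_, by rwa [sub_sub_cancel]⟩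
  have hQ1 : dd e Set.univ * Q = Q := by
    refine (hQ.mul_left _).unique ?_
    have h6 : (fun k => dd e Set.univ * R k) = R := funext fun k => by
      simp only [R]
      rw [← mul_assoc, ← mul_assoc, univ_mul_dd]
    rw [h6]; exact hQ
  have hQ2 : Q * dd e Set.univ = Q := by
    refine (hQ.mul_right _).unique ?_
    have h6 : (fun k => R k * dd e Set.univ) = R := funext fun k => by
      simp only [R]
      rw [mul_assoc, dd_mul_univ]
    rw [h6]; exact hQ
  refine block_mem h𝒩 he ha ((((hd _).mul hA).mul (hd _)).sub hQA) κ hκ ?_ ?_ ?_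
  · rw [mul_sub, hQ1, ← mul_assoc, ← mul_assoc, univ_mul_dd]
  · rw [sub_mul, hQ2, mul_assoc, dd_mul_univ]
  · intro i j h
    by_contra hne
    apply h
    have hQj : Q (e j) = R (κ j) (e j) := by
      refine (hQv (e j)).unique (hasSum_single _ fun k hk => ?_)
      simp only [R, mul_ap]
      rw [dd_not_mem he (M := B k) (fun h => hk h.2.symm), map_zero, map_zero]
    rw [_root_.sub_apply, hQj]
    simp only [R, mul_ap]
    by_cases hj : j ∈ E
    · rw [dd_mem he hj, dd_mem he (M := B (κ j)) ⟨hj, rfl⟩, inner_sub_right, dd, dd, ← pr_sym, ← pr_sym]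
      change inner ℂ (dd e E (e i)) _ - inner ℂ (dd e (A (κ j)) (e i)) _ = 0
      by_cases hi : i ∈ E
      · rw [dd_mem he hi, dd_mem he (M := A (κ j)) ⟨hi, hne⟩, sub_self]
      · rw [dd_not_mem he hi, dd_not_mem he (M := A (κ j)) (fun h => hi h.1), sub_self]
    · rw [dd_not_mem he hj, dd_not_mem he (M := B (κ j)) (fun h => hj h.1)]; simp

lemma atomic_mem (h𝒩 : IsNest 𝒩) (he : Orthonormal ℂ e) (ha : ∀ i, Atomic 𝒩 (e i)) [Countable ι]
    {y : H →L[ℂ] H}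
    (hA : InAlg 𝒩 y) (h1 : dd e Set.univ * y = y) (h2 : y * dd e Set.univ = y) : y ∈ IdGen 𝒩 := by
  classical
  have hfin : ∀ ε > 0, ∃ κ : ι → ℕ, (∀ n, {i | κ i = n}.Finite) ∧
    (∀ k, ‖dd e {i | k + 2 ≤ κ i} * y * dd e {i | κ i = k}‖ ≤ ε * (1 / 2) ^ k) ∧
    (∀ k, ‖dd e {i | κ i + 2 ≤ k} * y * dd e {i | κ i = k}‖ ≤ ε * (1 / 2) ^ k) := by
    intro ε hε
    obtain ⟨f, hf⟩ := exists_injective_nat ι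
    have hff : ∀ k, {i | f i ≤ k}.Finite := fun k => (Set.finite_Iic k).preimage hf.injOn
    have hstep : ∀ (k : ℕ) (F : Finset ι), ∃ F' : Finset ι, F ⊆ F' ∧ (∀ i, f i ≤ k → i ∈ F') ∧
        ‖dd e (↑F' : Set ι)ᶜ * y * dd e ↑F‖ ≤ ε / 4 * (1 / 2) ^ k ∧
        ‖dd e ↑F * y * dd e (↑F' : Set ι)ᶜ‖ ≤ ε / 4 * (1 / 2) ^ k := by
      intro k F
      obtain ⟨F1, g1⟩ := fin_approx he h1 F (show 0 < ε / 4 * (1 / 2) ^ k by positivity)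
      obtain ⟨F2, g2⟩ := fin_approx' he h2 F (show 0 < ε / 4 * (1 / 2) ^ k by positivity)
      refine ⟨F ∪ (hff k).toFinset ∪ F1 ∪ F2, ?_, ?_, g1 _ ?_, g2 _ ?_⟩
      · intro i hi; simp [hi]
      · intro i hi; simp [hi]
      · intro i hi; simp [Finset.mem_coe.1 hi]
      · intro i hi; simp [Finset.mem_coe.1 hi]
    choose g s1 s2 s3 s4 using hstep
    obtain ⟨F, hF⟩ : ∃ F : ℕ → Finset ι, ∀ k, F (k + 1) = g k (F k) :=
      ⟨fun n => Nat.rec ∅ (fun k F => g k F) n, fun k => rfl⟩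
    have hmono : Monotone F := monotone_nat_of_le_succ fun k => by rw [hF]; exact s1 k (F k)
    have hex : ∀ i, ∃ k, i ∈ F k := fun i => ⟨f i + 1, by rw [hF]; exact s2 _ _ _ le_rfl⟩
    let κ : ι → ℕ := fun i => sInf {k | i ∈ F k}
    have hκ : ∀ i k, i ∈ F k ↔ κ i ≤ k := fun i k =>
      ⟨fun h => Nat.sInf_le h, fun h => hmono h (Nat.sInf_mem (hex i))⟩
    have nb : ∀ {M M' N N' : Set ι} {δ : ℝ}, M ⊆ M' → N ⊆ N' → ‖dd e M' * y * dd e N'‖ ≤ δ →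
        ‖dd e M * y * dd e N‖ ≤ δ := by
      intro M M' N N' δ hM hN h
      have : dd e M * y * dd e N = dd e M * (dd e M' * y * dd e N') * dd e N := by
        have e1 : dd e M = dd e M * dd e M' := by rw [dd_inter he, Set.inter_eq_left.2 hM]
        have e2 : dd e N = dd e N' * dd e N := by rw [dd_inter he, Set.inter_eq_right.2 hN]
        conv_lhs => rw [e1, e2]
        simp only [mul_assoc]
      rw [this]
      refine (norm_mul_le _ _).trans ?_
      refine (mul_le_mul ((norm_mul_le _ _).trans
            (mul_le_mul_of_nonneg_right (dd_opnorm_le _) (norm_nonneg _))) (dd_opnorm_le _) (norm_nonneg _) (by positivity)).trans ?_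
      linarith
    refine ⟨κ, fun n => (F n).finite_toSet.subset fun i hi => ?_, fun k => ?_, fun k => ?_⟩
    · exact (hκ i n).2 (le_of_eq hi)
    · refine (nb (δ := ε / 4 * (1 / 2) ^ k) (M' := (↑(F (k + 1)) : Set ι)ᶜ) (N' := ↑(F k)) ?_ ?_ (by rw [hF]; exact s3 k (F k))).trans ?_
      · intro i hi
        have : k + 2 ≤ κ i := hi
        rw [Set.mem_compl_iff, Finset.mem_coe, hκ]; omega
      · intro i hi
        exact (hκ i k).2 (le_of_eq hi)
      · have : (0 : ℝ) < (1 / 2) ^ k := by positivity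
        nlinarith
    · rcases lt_or_ge k 2 with hk | hk
      · have : {i | κ i + 2 ≤ k} = ∅ := by ext i; simp; omega
        rw [this, dd_empty]; simp; positivity
      · obtain ⟨k, rfl⟩ := Nat.exists_eq_add_of_le' hk
        refine (nb (δ := ε / 4 * (1 / 2) ^ k) (M' := ↑(F k)) (N' := (↑(F (k + 1)) : Set ι)ᶜ) ?_ ?_ (by rw [hF]; exact s4 k (F k))).trans ?_
        · intro i hi
          have : κ i + 2 ≤ k + 2 := hi
          exact (hκ i k).2 (by omega)
        · intro i hi
          have : κ i = k + 2 := hi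
          rw [Set.mem_compl_iff, Finset.mem_coe, hκ]; omega
        · rw [pow_add]
          apply le_of_eq; ring
  -- for every eps split into parity classes
  refine mem_IdGen_of_approx fun ε hε => ?_
  obtain ⟨κ, k1, k2, k3⟩ := hfin (ε / 8) (by positivity)
  let E : Set ι := {i | κ i % 2 = 0}
  obtain ⟨T1, hT1, hn1⟩ := block_reduce h𝒩 he ha hA κ k1 k2 k3 E (by
    intro i hi j hj h
    have hi : κ i % 2 = 0 := hi
    have hj : κ j % 2 = 0 := hj
    omega)
  obtain ⟨T2, hT2, hn2⟩ := block_reduce h𝒩 he ha hA κ k1 k2 k3 Eᶜ (by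
    intro i hi j hj h
    have hi : ¬ κ i % 2 = 0 := hi
    have hj : ¬ κ j % 2 = 0 := hj
    omega)
  have hd := fun M => dd_inAlg (e := e) h𝒩 ha M
  have hc : ∀ M : Set ι, dd e M * dd e Mᶜ = 0 := fun M => by rw [dd_inter he]; simp [dd_empty]
  have hc' : ∀ M : Set ι, dd e Mᶜ * dd e M = 0 := fun M => by rw [dd_inter he]; simp [dd_empty]
  have c1 : dd e E * y * dd e Eᶜ ∈ IdGen 𝒩 := corner_mem (hd E) (dd_mul_self _) (((hd _).mul hA).mul (hd _))
    (by rw [← mul_assoc, ← mul_assoc, dd_mul_self]) (by rw [mul_assoc, hc', mul_zero])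
  have c2 : dd e Eᶜ * y * dd e E ∈ IdGen 𝒩 := corner_mem' (hd E) (dd_mul_self _) (((hd _).mul hA).mul (hd _))
    (by rw [← mul_assoc, ← mul_assoc, hc]; simp) (by rw [mul_assoc, dd_mul_self])
  refine ⟨T1 + T2 + dd e E * y * dd e Eᶜ + dd e Eᶜ * y * dd e E,
    add_mem (add_mem (add_mem hT1 hT2) c1) c2, ?_⟩
  have hdec : y = dd e E * y * dd e E + dd e Eᶜ * y * dd e Eᶜ + dd e E * y * dd e Eᶜ + dd e Eᶜ * y * dd e E := by
    rw [dd_compl he]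
    simp only [sub_mul, mul_sub, h1, h2, mul_assoc]
    abel
  have : y - (T1 + T2 + dd e E * y * dd e Eᶜ + dd e Eᶜ * y * dd e E) =
      (dd e E * y * dd e E - T1) + (dd e Eᶜ * y * dd e Eᶜ - T2) := by
    nth_rw 1 [hdec]; abel
  rw [this]
  refine (norm_add_le _ _).trans ?_
  linarith

end atoms
end NestZPD

namespace NestZPD
variable {H : Type*} [NormedAddCommGroup H] [InnerProductSpace ℂ H] [CompleteSpace H]
variable {𝒩 : Set (Submodule ℂ H)}

lemma pr_closure (K : Submodule ℂ H) (x : H) : pr K.topologicalClosure x = pr K x := by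
  simp only [pr, K.isClosed_topologicalClosure.submodule_topologicalClosure_eq]

lemma pr_sSup_norm_le {F : Set (Submodule ℂ H)} (hF : F.Nonempty)
    (hch : ∀ M ∈ F, ∀ N ∈ F, M ≤ N ∨ N ≤ M) {v : H} {a : ℝ} (h : ∀ N ∈ F, ‖pr N v‖ ≤ a) :
    ‖pr (sSup F) v‖ ≤ a := by
  refine le_of_forall_pos_le_add fun δ hδ => ?_
  obtain ⟨s, hs, hd⟩ := Metric.mem_closure_iff.1 (pr_mem_closure (sSup F) v) δ hδ
  have hdir : DirectedOn (· ≤ ·) F := by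
    intro M hM N hN
    rcases hch M hM N hN with h | h
    · exact ⟨N, hN, h, le_rfl⟩
    · exact ⟨M, hM, le_rfl, h⟩
  obtain ⟨N, hN, hsN⟩ := (Submodule.mem_sSup_of_directed hF hdir).1 hs
  rw [dist_eq_norm] at hd
  set w := pr (sSup F) v
  have h1 : pr N w = pr N v := pr_pr_of_le (le_sSup hN) v
  have h2 : w - pr N w = pr Nᗮ (w - s) := by
    rw [pr_orth, map_sub, pr_eq_self hsN]; abel
  have h3 : ‖w - pr N w‖ ≤ δ := by rw [h2]; exact (pr_norm_le _ _).trans hd.le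
  calc ‖w‖ = ‖pr N w + (w - pr N w)‖ := by rw [add_sub_cancel]
    _ ≤ ‖pr N w‖ + ‖w - pr N w‖ := norm_add_le _ _
    _ ≤ a + δ := by rw [h1] at h3 ⊢; exact add_le_add (h N hN) h3

lemma pr_sInf_norm_ge {F : Set (Submodule ℂ H)} (hF : F.Nonempty) (hc : ∀ N ∈ F, IsClosed (N : Set H))
    (hch : ∀ M ∈ F, ∀ N ∈ F, M ≤ N ∨ N ≤ M) {v : H} {a : ℝ} (h : ∀ N ∈ F, a ≤ ‖pr N v‖ ^ 2) :
    a ≤ ‖pr (sInf F) v‖ ^ 2 := by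
  let F' : Set (Submodule ℂ H) := (fun N => Nᗮ) '' F
  have hinf : (sSup F')ᗮ = sInf F := by
    rw [← Submodule.sInf_orthogonal]
    simp only [F', iInf_image]
    rw [sInf_eq_iInf]
    refine iInf_congr fun N => iInf_congr fun hN => ?_
    rw [Submodule.orthogonal_orthogonal_eq_closure, (hc N hN).submodule_topologicalClosure_eq]
  have hle : ‖pr (sSup F') v‖ ≤ Real.sqrt (‖v‖ ^ 2 - a) := by
    refine pr_sSup_norm_le (hF.image _) ?_ ?_
    · rintro _ ⟨M, hM, rfl⟩ _ ⟨N, hN, rfl⟩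
      exact (hch M hM N hN).symm.imp Submodule.orthogonal_le Submodule.orthogonal_le
    · rintro _ ⟨N, hN, rfl⟩
      refine Real.le_sqrt_of_sq_le ?_
      have := norm_sq_pr N v
      have := h N hN
      rw [pr_orth]; linarith
  obtain ⟨N, hN⟩ := hF
  have h0 : 0 ≤ ‖v‖ ^ 2 - a := by
    have := h N hN; have := norm_sq_pr N v; nlinarith [sq_nonneg ‖v - pr N v‖]
  have h2 : ‖pr (sSup F') v‖ ^ 2 ≤ ‖v‖ ^ 2 - a := by
    rw [← Real.sq_sqrt h0]; gcongr
  have h3 := norm_sq_pr (sSup F')ᗮ v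
  rw [pr_orth, sub_sub_cancel, ← pr_orth, hinf] at h3
  linarith

def NoAtom (𝒩 : Set (Submodule ℂ H)) (C : Submodule ℂ H) : Prop := ∀ v ∈ C, Atomic 𝒩 v → v = 0

lemma ivt (h𝒩 : IsNest 𝒩) {C : Submodule ℂ H} (hC : Red 𝒩 C) (hna : NoAtom 𝒩 C) {v : H} (hv : v ∈ C)
    {α : ℝ} (h0 : 0 ≤ α) (h1 : α ≤ ‖v‖ ^ 2) : ∃ N ∈ 𝒩, ‖pr N v‖ ^ 2 = α := by
  let A : Set (Submodule ℂ H) := {N | N ∈ 𝒩 ∧ ‖pr N v‖ ^ 2 ≤ α}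
  let B : Set (Submodule ℂ H) := {N | N ∈ 𝒩 ∧ α ≤ ‖pr N v‖ ^ 2}
  have hAn : A.Nonempty := ⟨⊥, h𝒩.bot, by
    rw [pr_eq_zero (by simp)]; simpa using h0⟩
  have hBn : B.Nonempty := ⟨⊤, h𝒩.top, by
    rwa [pr_eq_self (by trivial)]⟩
  have hA0 := h𝒩.sup A (fun N h => h.1) hAn
  have hB1 := h𝒩.inf B (fun N h => h.1) hBn
  have n0 : ‖pr (sSup A).topologicalClosure v‖ ^ 2 ≤ α := by
    rw [pr_closure]
    have : ‖pr (sSup A) v‖ ≤ Real.sqrt α := pr_sSup_norm_le hAn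
      (fun M hM N hN => h𝒩.chain M hM.1 N hN.1) fun N hN => Real.le_sqrt_of_sq_le hN.2
    rw [← Real.sq_sqrt h0]; gcongr
  have n1 : α ≤ ‖pr (sInf B) v‖ ^ 2 := pr_sInf_norm_ge hBn (fun N hN => h𝒩.closed N hN.1)
    (fun M hM N hN => h𝒩.chain M hM.1 N hN.1) fun N hN => hN.2
  set N0 := (sSup A).topologicalClosure
  set N1 := sInf B
  rcases h𝒩.chain _ hB1 _ hA0 with h | h
  · refine ⟨N0, hA0, le_antisymm n0 (n1.trans ?_)⟩
    have := pr_norm_mono h v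
    gcongr
  · have hw : pr N1 v - pr N0 v = 0 := by
      refine hna _ (C.sub_mem (hC _ hB1 _ hv) (hC _ hA0 _ hv)) fun M hM => ?_
      by_cases hMa : ‖pr M v‖ ^ 2 ≤ α
      · right
        have hle : M ≤ N0 := (le_sSup (show M ∈ A from ⟨hM, hMa⟩)).trans (Submodule.le_topologicalClosure _)
        refine Submodule.orthogonal_le hle ?_
        rw [← pr_pr_of_le h]
        exact sub_pr_mem _ _
      · left
        have hle : N1 ≤ M := sInf_le (show M ∈ B from ⟨hM, (not_le.1 hMa).le⟩)
        exact M.sub_mem (hle (pr_mem (h𝒩.closed _ hB1) v)) ((h.trans hle) (pr_mem (h𝒩.closed _ hA0) v))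
    rw [sub_eq_zero] at hw
    exact ⟨N0, hA0, le_antisymm n0 (hw ▸ n1)⟩

lemma le_of_norm_lt (h𝒩 : IsNest 𝒩) {M N : Submodule ℂ H} (hM : M ∈ 𝒩) (hN : N ∈ 𝒩) {v : H}
    (h : ‖pr M v‖ ^ 2 < ‖pr N v‖ ^ 2) : M ≤ N := by
  refine (h𝒩.chain M hM N hN).resolve_right fun h' => ?_
  have := pr_norm_mono h' v
  have : ‖pr N v‖ ^ 2 ≤ ‖pr M v‖ ^ 2 := by gcongr
  linarith

lemma sub_mem_orth {M N : Submodule ℂ H} (h : M ≤ N) (v : H) : pr N v - pr M v ∈ Mᗮ := by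
  rw [← pr_pr_of_le h]; exact sub_pr_mem _ _

/-- subdivision of an interval -/
lemma subint (h𝒩 : IsNest 𝒩) {C : Submodule ℂ H} (hC : Red 𝒩 C) (hna : NoAtom 𝒩 C) {v : H} (hv : v ∈ C)
    (hv0 : v ≠ 0) {M N : Submodule ℂ H} (hM : M ∈ 𝒩) (hN : N ∈ 𝒩) (hvN : v ∈ N) (hvM : v ∈ Mᗮ) :
    ∃ Ns : ℕ → Submodule ℂ H, (∀ i, Ns i ∈ 𝒩) ∧ Monotone Ns ∧ (∀ i, M ≤ Ns i ∧ Ns i ≤ N) ∧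
      (∀ i, ∃ w ∈ C, w ≠ 0 ∧ w ∈ Ns (i + 1) ∧ w ∈ (Ns i)ᗮ) ∧
      ∀ x, Filter.Tendsto (fun i => ‖pr (Ns (i + 1)) x - pr (Ns i) x‖) Filter.atTop (𝓝 0) := by
  have hvp : 0 < ‖v‖ ^ 2 := by positivity
  have hα : ∀ i : ℕ, 0 < (1 - 1 / ((i : ℝ) + 2)) * ‖v‖ ^ 2 ∧ (1 - 1 / ((i : ℝ) + 2)) * ‖v‖ ^ 2 < ‖v‖ ^ 2 := by
    intro i
    have hi : (0 : ℝ) ≤ i := by positivity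
    have a1 : 1 / ((i : ℝ) + 2) < 1 := by rw [div_lt_one (by linarith)]; linarith
    have a2 : 0 < 1 / ((i : ℝ) + 2) := by positivity
    constructor
    · apply mul_pos <;> linarith
    · nlinarith
  choose Ns hNs hNv using fun i : ℕ => ivt h𝒩 hC hna hv (hα i).1.le (hα i).2.le
  have hlt : ∀ i, ‖pr (Ns i) v‖ ^ 2 < ‖pr (Ns (i + 1)) v‖ ^ 2 := by
    intro i
    rw [hNv, hNv]
    refine mul_lt_mul_of_pos_right ?_ hvp
    have : 1 / (((i + 1 : ℕ) : ℝ) + 2) < 1 / ((i : ℝ) + 2) := by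
      apply one_div_lt_one_div_of_lt
      · positivity
      · push_cast; linarith
    linarith
  have hmono : Monotone Ns := monotone_nat_of_le_succ fun i => le_of_norm_lt h𝒩 (hNs _) (hNs _) (hlt i)
  refine ⟨Ns, hNs, hmono, fun i => ⟨?_, ?_⟩, fun i => ?_, fun x => ?_⟩
  · refine le_of_norm_lt (v := v) h𝒩 hM (hNs _) ?_
    rw [pr_eq_zero hvM, hNv]; simpa using (hα i).1
  · refine le_of_norm_lt (v := v) h𝒩 (hNs _) hN ?_
    rw [pr_eq_self hvN, hNv]; exact (hα i).2
  · refine ⟨pr (Ns (i + 1)) v - pr (Ns i) v, C.sub_mem (hC _ (hNs _) _ hv) (hC _ (hNs _) _ hv), ?_,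
      (Ns (i+1)).sub_mem (pr_mem (h𝒩.closed _ (hNs _)) _) (hmono (Nat.le_succ i) (pr_mem (h𝒩.closed _ (hNs _)) _)),
      sub_mem_orth (hmono (Nat.le_succ i)) v⟩
    intro h
    have := hlt i
    rw [sub_eq_zero.1 h] at this
    exact lt_irrefl _ this
  · have hm : Monotone fun i => ‖pr (Ns i) x‖ ^ 2 := fun i j hij => by
      have := pr_norm_mono (hmono hij) x
      dsimp only; gcongr
    have hb : BddAbove (Set.range fun i => ‖pr (Ns i) x‖ ^ 2) := ⟨‖x‖ ^ 2, by
      rintro _ ⟨i, rfl⟩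
      have := pr_norm_le (Ns i) x
      dsimp only; gcongr⟩
    have ht := tendsto_atTop_ciSup hm hb
    have ht2 := ((Filter.tendsto_add_atTop_iff_nat 1).2 ht).sub ht
    rw [sub_self] at ht2
    have ht3 := ht2.sqrt
    rw [Real.sqrt_zero] at ht3
    refine ht3.congr fun i => ?_
    rw [← norm_sq_pr_sub (hmono (Nat.le_succ i)), Real.sqrt_sq (norm_nonneg _)]

lemma nonvanish {L : ℕ → Submodule ℂ H} (hL : ∀ k m, ∀ x ∈ L m, pr (L k) x ∈ L m) {a : H}
    (ha : ‖a‖ = 1) (hn : ∀ m, ‖pr (L m) a‖ ≤ (1 / 4) ^ (m + 1)) : a - pr (⨆ m, L m) a ≠ 0 := by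
  intro h0
  obtain ⟨P, hP0, hP⟩ : ∃ P : ℕ → H →L[ℂ] H, P 0 = 1 ∧ ∀ k, P (k + 1) = P k * (1 - pr (L k)) :=
    ⟨fun k => Nat.rec 1 (fun k p => p * (1 - pr (L k))) k, rfl, fun _ => rfl⟩
  have hPk : ∀ k x, P (k + 1) x = P k (x - pr (L k) x) := fun k x => by rw [hP]; rfl
  have hPn : ∀ k x, ‖P k x‖ ≤ ‖x‖ := by
    intro k
    induction k with
    | zero => intro x; rw [hP0]; exact le_rfl
    | succ k ih =>
      intro x
      rw [hPk]
      refine (ih _).trans ?_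
      rw [← pr_orth]; exact pr_norm_le _ _
  have hest : ∀ k, ‖a - P k a‖ ≤ 1 / 3 - (1 / 3) * (1 / 4) ^ k := by
    intro k
    induction k with
    | zero => rw [hP0]; simp
    | succ k ih =>
      have e1 : a - P (k + 1) a = (a - P k a) + P k (pr (L k) a) := by rw [hPk, map_sub]; abel
      rw [e1]
      refine (norm_add_le _ _).trans ?_
      have := (hPn k (pr (L k) a)).trans (hn k)
      rw [pow_succ] at this ⊢
      linarith
  have hkill : ∀ m j, ∀ x ∈ L m, P (m + 1 + j) x = 0 := by
    intro m j
    induction j with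
    | zero => intro x hx; rw [add_zero, hPk, pr_eq_self hx, sub_self, map_zero]
    | succ j ih => intro x hx; rw [← add_assoc, hPk]; exact ih _ ((L m).sub_mem hx (hL _ _ _ hx))
  have hev : ∀ s ∈ ⨆ m, L m, ∃ k, ∀ j ≥ k, P j s = 0 := by
    intro s hs
    induction hs using Submodule.iSup_induction' with
    | mem i x hx =>
      refine ⟨i + 1, fun j hj => ?_⟩
      obtain ⟨l, rfl⟩ := Nat.exists_eq_add_of_le hj
      exact hkill i l x hx
    | zero => exact ⟨0, fun j _ => map_zero _⟩
    | add x y _ _ hx hy =>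
      obtain ⟨k, hk⟩ := hx
      obtain ⟨l, hl⟩ := hy
      exact ⟨max k l, fun j hj => by
        rw [map_add, hk j (le_trans (le_max_left _ _) hj), hl j (le_trans (le_max_right _ _) hj), add_zero]⟩
  have hmem : a ∈ (⨆ m, L m).topologicalClosure := by
    rw [sub_eq_zero.1 h0]; exact pr_mem_closure _ _
  obtain ⟨s, hs, hd⟩ := Metric.mem_closure_iff.1 hmem (1 / 4) (by norm_num)
  obtain ⟨k, hk⟩ := hev s hs
  rw [dist_eq_norm] at hd
  have e2 : P k a = P k (a - s) := by rw [map_sub, hk k le_rfl, sub_zero]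
  have h3 : ‖P k a‖ ≤ 1 / 4 := by rw [e2]; exact (hPn _ _).trans hd.le
  have h4 := hest k
  have h5 : ‖a‖ ≤ ‖a - P k a‖ + ‖P k a‖ := by
    calc ‖a‖ = ‖(a - P k a) + P k a‖ := by rw [sub_add_cancel]
      _ ≤ _ := norm_add_le _ _
  have h6 : (0 : ℝ) < (1 / 3) * (1 / 4) ^ k := by positivity
  rw [ha] at h5
  linarith

end NestZPD

namespace NestZPD
variable {H : Type*} [NormedAddCommGroup H] [InnerProductSpace ℂ H] [CompleteSpace H]
variable {𝒩 : Set (Submodule ℂ H)}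

/-- interval subspace -/
noncomputable def iv (M N : Submodule ℂ H) : Submodule ℂ H := N ⊓ Mᗮ

lemma iv_closed {M N : Submodule ℂ H} (hN : IsClosed (N : Set H)) : IsClosed (iv M N : Set H) :=
  hN.inter (Submodule.isClosed_orthogonal M)

lemma pr_iv {M N : Submodule ℂ H} (hM : IsClosed (M : Set H)) (hN : IsClosed (N : Set H)) (h : M ≤ N)
    (x : H) : pr (iv M N) x = pr N x - pr M x := by
  refine pr_eq_of (Submodule.le_topologicalClosure _
    ⟨N.sub_mem (pr_mem hN x) (h (pr_mem hM x)), sub_mem_orth h x⟩) ?_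
  rw [← sub_add]
  refine Submodule.add_mem _ (Submodule.orthogonal_le inf_le_left (sub_pr_mem N x)) ?_
  refine Submodule.orthogonal_le (inf_le_right : iv M N ≤ Mᗮ) ?_
  exact Submodule.le_orthogonal_orthogonal M (pr_mem hM x)

lemma red_iv (h𝒩 : IsNest 𝒩) {M N : Submodule ℂ H} (hM : M ∈ 𝒩) (hN : N ∈ 𝒩) : Red 𝒩 (iv M N) :=
  (Red.of_mem h𝒩 hN).inf (Red.of_mem h𝒩 hM).orth

lemma Red.iv_map (h𝒩 : IsNest 𝒩) {M N K : Submodule ℂ H} (hM : M ∈ 𝒩) (hN : N ∈ 𝒩) (h : M ≤ N)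
    (hK : Red 𝒩 K) : Red {iv M N} K := by
  rintro _ rfl x hx
  rw [pr_iv (h𝒩.closed _ hM) (h𝒩.closed _ hN) h]
  exact K.sub_mem (hK _ hN _ hx) (hK _ hM _ hx)

lemma Red.swap {K L : Submodule ℂ H} (hK : IsClosed (K : Set H)) (h : Red {K} L) : Red {L} K := by
  rintro _ rfl x hx
  have := h.comm rfl x
  rw [pr_eq_self hx] at this
  rw [this]; exact pr_mem hK _

lemma red_iSup_of {J : ℕ → Submodule ℂ H} {L : Submodule ℂ H} (hJ : ∀ m, IsClosed (J m : Set H))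
    (hL : IsClosed (L : Set H)) (h : ∀ m, Red {J m} L) : Red {⨆ m, J m} L := by
  have h1 : Red {L} (⨆ m, J m) := Red.iSup fun m => (h m).swap (hJ m)
  have h2 := h1.closure.swap hL
  rintro _ rfl x hx
  rw [← pr_closure]; exact h2 _ rfl x hx

def Rooms (𝒩 : Set (Submodule ℂ H)) (C K : Submodule ℂ H) : Prop :=
  ∀ M ∈ 𝒩, ∀ N ∈ 𝒩, ∀ v ∈ C, v ≠ 0 → v ∈ N → v ∈ Mᗮ → ∃ y ∈ K, y ≠ 0 ∧ y ∈ N ∧ y ∈ Mᗮ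

lemma le_of_nz (h𝒩 : IsNest 𝒩) {M N : Submodule ℂ H} (hM : M ∈ 𝒩) (hN : N ∈ 𝒩) {v : H} (hv : v ≠ 0)
    (h1 : v ∈ N) (h2 : v ∈ Mᗮ) : M ≤ N := by
  refine (h𝒩.chain M hM N hN).resolve_right fun h => hv ?_
  have := Submodule.inner_right_of_mem_orthogonal (h h1) h2
  exact inner_self_eq_zero.1 this

lemma base [TopologicalSpace.SeparableSpace H] (h𝒩 : IsNest 𝒩) {C : Submodule ℂ H}
    (hCc : IsClosed (C : Set H)) (hC : Red 𝒩 C) (hna : NoAtom 𝒩 C) (hC0 : ∃ v ∈ C, v ≠ 0) :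
    ∃ B : ℕ → Submodule ℂ H × Submodule ℂ H, (∀ n, (B n).1 ∈ 𝒩 ∧ (B n).2 ∈ 𝒩) ∧
      (∀ n, ∃ v ∈ C, v ≠ 0 ∧ v ∈ (B n).2 ∧ v ∈ ((B n).1)ᗮ) ∧
      ∀ M ∈ 𝒩, ∀ N ∈ 𝒩, ∀ v ∈ C, v ≠ 0 → v ∈ N → v ∈ Mᗮ → ∃ n, M ≤ (B n).1 ∧ (B n).2 ≤ N := by
  let c : ℕ → H := fun n => pr C (TopologicalSpace.denseSeq H n)
  have hc : ∀ n, c n ∈ C := fun n => pr_mem hCc _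
  have hex : ∀ (n : ℕ) (q : ℚ), ∃ N ∈ 𝒩, 0 ≤ q → (q : ℝ) ≤ ‖c n‖ ^ 2 → ‖pr N (c n)‖ ^ 2 = q := by
    intro n q
    by_cases h : 0 ≤ q ∧ (q : ℝ) ≤ ‖c n‖ ^ 2
    · obtain ⟨N, hN, h'⟩ := ivt h𝒩 hC hna (hc n) (by exact_mod_cast h.1) h.2
      exact ⟨N, hN, fun _ _ => h'⟩
    · exact ⟨⊤, h𝒩.top, fun a b => absurd ⟨a, b⟩ h⟩
  choose R hR hRn using hex
  let T := {p : ℕ × ℚ × ℚ // 0 ≤ p.2.1 ∧ p.2.1 < p.2.2 ∧ (p.2.2 : ℝ) ≤ ‖c p.1‖ ^ 2}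
  have hcov : ∀ M ∈ 𝒩, ∀ N ∈ 𝒩, ∀ v ∈ C, v ≠ 0 → v ∈ N → v ∈ Mᗮ →
      ∃ t : T, M ≤ R t.1.1 t.1.2.1 ∧ R t.1.1 t.1.2.2 ≤ N := by
    intro M hM N hN v hv hv0 hvN hvM
    have hMN := le_of_nz h𝒩 hM hN hv0 hvN hvM
    obtain ⟨n, hn⟩ : ∃ n, ‖TopologicalSpace.denseSeq H n - v‖ < ‖v‖ := by
      obtain ⟨n, hn⟩ := (TopologicalSpace.denseRange_denseSeq H).exists_dist_lt v (norm_pos_iff.2 hv0)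
      exact ⟨n, by rwa [dist_comm, dist_eq_norm] at hn⟩
    have hcn : ‖c n - v‖ < ‖v‖ := by
      have : c n - v = pr C (TopologicalSpace.denseSeq H n - v) := by
        rw [map_sub, pr_eq_self hv]
      rw [this]; exact (pr_norm_le _ _).trans_lt hn
    have hlt : ‖pr M (c n)‖ ^ 2 < ‖pr N (c n)‖ ^ 2 := by
      have e := norm_sq_pr_sub hMN (c n)
      have : pr N (c n) - pr M (c n) ≠ 0 := by
        intro h0
        have h1 : pr (iv M N) (c n - v) = - v := by
          rw [map_sub, pr_iv (h𝒩.closed _ hM) (h𝒩.closed _ hN) hMN, h0,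
            pr_eq_self (show v ∈ iv M N from ⟨hvN, hvM⟩), zero_sub]
        have h2 := pr_norm_le (iv M N) (c n - v)
        rw [h1, norm_neg] at h2
        linarith
      have : 0 < ‖pr N (c n) - pr M (c n)‖ ^ 2 := by positivity
      linarith
    obtain ⟨q1, h1, h1'⟩ := exists_rat_btwn hlt
    obtain ⟨q2, h2, h2'⟩ := exists_rat_btwn h1'
    have hb : ‖pr N (c n)‖ ^ 2 ≤ ‖c n‖ ^ 2 := by
      have := pr_norm_le N (c n)
      gcongr
    have p1 : 0 ≤ q1 := by
      have : (0 : ℝ) ≤ q1 := (sq_nonneg _).trans h1.le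
      exact_mod_cast this
    have p2 : q1 < q2 := by exact_mod_cast h2
    refine ⟨⟨(n, q1, q2), p1, p2, by linarith⟩, ?_, ?_⟩
    · refine le_of_norm_lt (v := c n) h𝒩 hM (hR _ _) ?_
      rw [hRn n q1 p1 (by linarith)]; exact h1
    · refine le_of_norm_lt (v := c n) h𝒩 (hR _ _) hN ?_
      rw [hRn n q2 (p1.trans p2.le) (by linarith)]; exact h2'
  obtain ⟨v, hv, hv0⟩ := hC0
  obtain ⟨t0, -⟩ := hcov ⊥ h𝒩.bot ⊤ h𝒩.top v hv hv0 trivial (by simp)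
  haveI : Nonempty T := ⟨t0⟩
  obtain ⟨g, hg⟩ := exists_surjective_nat T
  refine ⟨fun k => (R (g k).1.1 (g k).1.2.1, R (g k).1.1 (g k).1.2.2), fun n => ⟨hR _ _, hR _ _⟩, ?_, ?_⟩
  · intro k
    dsimp only
    generalize g k = t
    obtain ⟨⟨n, q1, q2⟩, p0, p1, p2⟩ := t
    dsimp only at *
    have p1' : (q1 : ℝ) < q2 := by exact_mod_cast p1
    have e1 := hRn n q1 p0 (by linarith)
    have e2 := hRn n q2 (p0.trans p1.le) p2
    have hlt : ‖pr (R n q1) (c n)‖ ^ 2 < ‖pr (R n q2) (c n)‖ ^ 2 := by rw [e1, e2]; exact p1'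
    have hle := le_of_norm_lt h𝒩 (hR _ _) (hR _ _) hlt
    refine ⟨pr (R n q2) (c n) - pr (R n q1) (c n), C.sub_mem (hC _ (hR _ _) _ (hc _)) (hC _ (hR _ _) _ (hc _)), ?_,
      Submodule.sub_mem _ (pr_mem (h𝒩.closed _ (hR _ _)) _) (hle (pr_mem (h𝒩.closed _ (hR _ _)) _)),
      sub_mem_orth hle _⟩
    intro h
    rw [sub_eq_zero.1 h] at hlt
    exact lt_irrefl _ hlt
  · intro M hM N hN v hv hv0 hvN hvM
    obtain ⟨t, ht⟩ := hcov M hM N hN v hv hv0 hvN hvM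
    obtain ⟨n, rfl⟩ := hg t
    exact ⟨n, ht⟩

lemma normalize {C : Submodule ℂ H} {w : H} (hw : w ∈ C) (h0 : w ≠ 0) :
    ∃ c : ℂ, ‖c • w‖ = 1 := ⟨((‖w‖⁻¹ : ℝ) : ℂ), by
  rw [norm_smul]; simp [h0]⟩

lemma exists_split [TopologicalSpace.SeparableSpace H] (h𝒩 : IsNest 𝒩) {C : Submodule ℂ H}
    (hCc : IsClosed (C : Set H)) (hC : Red 𝒩 C) (hna : NoAtom 𝒩 C) :
    ∃ E : Submodule ℂ H, IsClosed (E : Set H) ∧ Red 𝒩 E ∧ E ≤ C ∧ Rooms 𝒩 C E ∧ Rooms 𝒩 C (C ⊓ Eᗮ) := by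
  by_cases hC0 : ∃ v ∈ C, v ≠ 0
  swap
  · push Not at hC0
    refine ⟨⊥, isClosed_singleton, ?_, bot_le, ?_, ?_⟩
    · exact Red.of_mem h𝒩 h𝒩.bot
    · intro M _ N _ v hv h0; exact absurd (hC0 v hv) h0
    · intro M _ N _ v hv h0; exact absurd (hC0 v hv) h0
  obtain ⟨B, hB, hBv, hcov⟩ := base h𝒩 hCc hC hna hC0
  let Q : ℕ → Finset ((Submodule ℂ H × Submodule ℂ H × Submodule ℂ H) × (H × H)) →
      ((Submodule ℂ H × Submodule ℂ H × Submodule ℂ H) × (H × H)) → Prop := fun n s y =>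
    (y.1.1 ∈ 𝒩 ∧ y.1.2.1 ∈ 𝒩 ∧ y.1.2.2 ∈ 𝒩) ∧ (y.1.1 ≤ y.1.2.1 ∧ y.1.2.1 ≤ y.1.2.2) ∧
    ((B n).1 ≤ y.1.1 ∧ y.1.2.2 ≤ (B n).2) ∧ (y.2.1 ∈ C ∧ y.2.1 ∈ iv y.1.1 y.1.2.1 ∧ ‖y.2.1‖ = 1) ∧
    (y.2.2 ∈ C ∧ y.2.2 ∈ iv y.1.2.1 y.1.2.2 ∧ ‖y.2.2‖ = 1) ∧
    ∀ z ∈ s, ‖pr (iv y.1.1 y.1.2.1) z.2.2‖ ≤ (1 / 4) ^ (n + 1) ∧ ‖pr (iv y.1.2.1 y.1.2.2) z.2.1‖ ≤ (1 / 4) ^ (n + 1)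
  have hQ : ∀ n s, ∃ y, Q n s y := by
    intro n s
    obtain ⟨v, hv, hv0, hv2, hv1⟩ := hBv n
    obtain ⟨Ns, hNs, hmono, hbt, hw, hlim⟩ := subint h𝒩 hC hna hv hv0 (hB n).1 (hB n).2 hv2 hv1
    have hpos : (0 : ℝ) < (1 / 4) ^ (n + 1) := by positivity
    have hev : ∀ᶠ i in Filter.atTop, ∀ z ∈ s, ‖pr (Ns (i + 1)) z.2.2 - pr (Ns i) z.2.2‖ < (1 / 4) ^ (n + 1) ∧
        ‖pr (Ns (i + 1 + 1)) z.2.1 - pr (Ns (i + 1)) z.2.1‖ < (1 / 4) ^ (n + 1) := by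
      rw [Filter.eventually_all_finset]
      intro z hz
      refine ((hlim z.2.2).eventually_lt_const hpos).and ?_
      exact ((Filter.tendsto_add_atTop_iff_nat 1).2 (hlim z.2.1)).eventually_lt_const hpos
    obtain ⟨i, hi⟩ := hev.exists
    obtain ⟨a, haC, ha0, ha1, ha2⟩ := hw i
    obtain ⟨b, hbC, hb0, hb1, hb2⟩ := hw (i + 1)
    obtain ⟨ca, hca⟩ := normalize haC ha0
    obtain ⟨cb, hcb⟩ := normalize hbC hb0
    refine ⟨((Ns i, Ns (i + 1), Ns (i + 1 + 1)), (ca • a, cb • b)), ⟨hNs _, hNs _, hNs _⟩,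
      ⟨hmono (Nat.le_succ _), hmono (Nat.le_succ _)⟩, ⟨(hbt _).1, (hbt _).2⟩,
      ⟨C.smul_mem _ haC, Submodule.smul_mem _ _ ⟨ha1, ha2⟩, hca⟩,
      ⟨C.smul_mem _ hbC, Submodule.smul_mem _ _ ⟨hb1, hb2⟩, hcb⟩, fun z hz => ?_⟩
    dsimp only
    rw [pr_iv (h𝒩.closed _ (hNs _)) (h𝒩.closed _ (hNs _)) (hmono (Nat.le_succ _)),
      pr_iv (h𝒩.closed _ (hNs _)) (h𝒩.closed _ (hNs _)) (hmono (Nat.le_succ _))]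
    exact ⟨(hi z hz).1.le, (hi z hz).2.le⟩
  obtain ⟨f, hf⟩ := exists_seq_hist hQ
  let I : ℕ → Submodule ℂ H := fun n => iv (f n).1.1 (f n).1.2.1
  let J : ℕ → Submodule ℂ H := fun n => iv (f n).1.2.1 (f n).1.2.2
  obtain ⟨a, ha⟩ : ∃ a : ℕ → H, ∀ n, a n = (f n).2.1 := ⟨_, fun _ => rfl⟩
  obtain ⟨b, hb⟩ : ∃ b : ℕ → H, ∀ n, b n = (f n).2.2 := ⟨_, fun _ => rfl⟩
  have hIc : ∀ n, IsClosed (I n : Set H) := fun n => by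
    obtain ⟨s, -, h, -⟩ := hf n; exact iv_closed (h𝒩.closed _ h.2.1)
  have hJc : ∀ n, IsClosed (J n : Set H) := fun n => by
    obtain ⟨s, -, h, -⟩ := hf n; exact iv_closed (h𝒩.closed _ h.2.2)
  have hIr : ∀ n, Red 𝒩 (I n) := fun n => by
    obtain ⟨s, -, h, -⟩ := hf n; exact red_iv h𝒩 h.1 h.2.1
  have hJr : ∀ n, Red 𝒩 (J n) := fun n => by
    obtain ⟨s, -, h, -⟩ := hf n; exact red_iv h𝒩 h.2.1 h.2.2
  have hIm : ∀ n K, Red 𝒩 K → Red {I n} K := fun n K hK => by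
    obtain ⟨s, -, h, h', -⟩ := hf n; exact hK.iv_map h𝒩 h.1 h.2.1 h'.1
  have hJm : ∀ n K, Red 𝒩 K → Red {J n} K := fun n K hK => by
    obtain ⟨s, -, h, h', -⟩ := hf n; exact hK.iv_map h𝒩 h.2.1 h.2.2 h'.2
  have hIB : ∀ n x, x ∈ I n → x ∈ (B n).2 ∧ x ∈ ((B n).1)ᗮ := fun n x hx => by
    obtain ⟨s, -, h, h', h2, -⟩ := hf n
    exact ⟨h2.2 (h'.2 hx.1), Submodule.orthogonal_le h2.1 hx.2⟩
  have hJB : ∀ n x, x ∈ J n → x ∈ (B n).2 ∧ x ∈ ((B n).1)ᗮ := fun n x hx => by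
    obtain ⟨s, -, h, h', h2, -⟩ := hf n
    exact ⟨h2.2 hx.1, Submodule.orthogonal_le (h2.1.trans h'.1) hx.2⟩
  have haI : ∀ n, a n ∈ C ∧ a n ∈ I n ∧ ‖a n‖ = 1 := fun n => by
    rw [ha]; obtain ⟨s, -, h, h', h2, h3, -⟩ := hf n; exact h3
  have hbJ : ∀ n, b n ∈ C ∧ b n ∈ J n ∧ ‖b n‖ = 1 := fun n => by
    rw [hb]; obtain ⟨s, -, h, h', h2, h3, h4, -⟩ := hf n; exact h4
  have hsm : ∀ n m, n < m → ‖pr (I m) (b n)‖ ≤ (1 / 4) ^ (m + 1) ∧ ‖pr (J m) (a n)‖ ≤ (1 / 4) ^ (m + 1) := by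
    intro n m hnm
    rw [ha, hb]
    obtain ⟨s, hs, h, h', h2, h3, h4, h5⟩ := hf m
    exact h5 _ (hs n hnm)
  have hpow : ∀ n m : ℕ, ((1 : ℝ) / 4) ^ (n + 1 + m + 1) ≤ (1 / 4) ^ (m + 1) := fun n m =>
    pow_le_pow_of_le_one (by norm_num) (by norm_num) (by omega)
  have ha' : ∀ n, a n - pr (⨆ m, J (n + 1 + m)) (a n) ≠ 0 := fun n => by
    refine nonvanish (fun k m => hJm _ _ (hJr _) _ rfl) (haI n).2.2 fun m => ?_
    exact (hsm n (n + 1 + m) (by omega)).2.trans (hpow n m)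
  have hb' : ∀ n, b n - pr (⨆ m, I (n + 1 + m)) (b n) ≠ 0 := fun n => by
    refine nonvanish (fun k m => hIm _ _ (hIr _) _ rfl) (hbJ n).2.2 fun m => ?_
    exact (hsm n (n + 1 + m) (by omega)).1.trans (hpow n m)
  let G : ℕ → Submodule ℂ H := fun n => C ⊓ I n ⊓ (⨆ m, J (n + 1 + m))ᗮ
  have hGr : ∀ n, Red 𝒩 (G n) := fun n => (hC.inf (hIr n)).inf (Red.iSup fun m => hJr _).orth
  refine ⟨(⨆ n, G n).topologicalClosure, Submodule.isClosed_topologicalClosure _,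
    (Red.iSup hGr).closure, ?_, ?_, ?_⟩
  · exact Submodule.topologicalClosure_minimal _ (iSup_le fun n => inf_le_left.trans inf_le_left) hCc
  · intro M hM N hN v hv hv0 hvN hvM
    obtain ⟨n, h1, h2⟩ := hcov M hM N hN v hv hv0 hvN hvM
    have hmI : a n - pr (⨆ m, J (n + 1 + m)) (a n) ∈ I n := (I n).sub_mem (haI n).2.1
      (red_iSup_of (fun _ => hJc _) (hIc n) (fun m => hJm _ _ (hIr n)) _ rfl _ (haI n).2.1)
    have hmC : a n - pr (⨆ m, J (n + 1 + m)) (a n) ∈ C := C.sub_mem (haI n).1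
      (red_iSup_of (fun _ => hJc _) hCc (fun m => hJm _ _ hC) _ rfl _ (haI n).1)
    exact ⟨_, Submodule.le_topologicalClosure _ (Submodule.mem_iSup_of_mem n ⟨⟨hmC, hmI⟩, sub_pr_mem _ _⟩),
      ha' n, h2 (hIB n _ hmI).1, Submodule.orthogonal_le h1 (hIB n _ hmI).2⟩
  · intro M hM N hN v hv hv0 hvN hvM
    obtain ⟨n, h1, h2⟩ := hcov M hM N hN v hv hv0 hvN hvM
    have hmJ : b n - pr (⨆ m, I (n + 1 + m)) (b n) ∈ J n := (J n).sub_mem (hbJ n).2.1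
      (red_iSup_of (fun _ => hIc _) (hJc n) (fun m => hIm _ _ (hJr n)) _ rfl _ (hbJ n).2.1)
    have hmC : b n - pr (⨆ m, I (n + 1 + m)) (b n) ∈ C := C.sub_mem (hbJ n).1
      (red_iSup_of (fun _ => hIc _) hCc (fun m => hIm _ _ hC) _ rfl _ (hbJ n).1)
    refine ⟨_, ⟨hmC, ?_⟩, hb' n, h2 (hJB n _ hmJ).1, Submodule.orthogonal_le h1 (hJB n _ hmJ).2⟩
    have ho := sub_pr_mem (⨆ m, I (n + 1 + m)) (b n)
    generalize b n - pr (⨆ m, I (n + 1 + m)) (b n) = β at *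
    suffices hs : ∀ k, β ∈ (G k)ᗮ by
      rw [SetLike.mem_coe, Submodule.orthogonal_closure, ← Submodule.iInf_orthogonal, Submodule.mem_iInf]
      exact hs
    intro k
    rcases lt_trichotomy k n with hk | rfl | hk
    · obtain ⟨l, rfl⟩ := Nat.exists_eq_add_of_lt hk
      have e : k + l + 1 = k + 1 + l := by omega
      rw [e] at hmJ
      refine Submodule.orthogonal_le (inf_le_right : G k ≤ _) ?_
      exact Submodule.le_orthogonal_orthogonal _ (Submodule.mem_iSup_of_mem (p := fun m => J (k + 1 + m)) l hmJ)
    · refine Submodule.orthogonal_le (inf_le_left.trans (inf_le_right.trans inf_le_left) : G k ≤ (f k).1.2.1) ?_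
      exact hmJ.2
    · obtain ⟨l, rfl⟩ := Nat.exists_eq_add_of_lt hk
      have e : n + l + 1 = n + 1 + l := by omega
      rw [e]
      refine Submodule.orthogonal_le ((inf_le_left.trans inf_le_right).trans ?_) ho
      exact le_iSup (fun m => I (n + 1 + m)) l

end NestZPD

namespace NestZPD
variable {H : Type*} [NormedAddCommGroup H] [InnerProductSpace ℂ H] [CompleteSpace H]
variable {𝒩 : Set (Submodule ℂ H)}

lemma orthonormal_iv {n : ℕ} {N : ℕ → Submodule ℂ H} (hN : Monotone N) {u : Fin n → H} (k : ℕ)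
    (hu : ∀ i, ‖u i‖ = 1) (h1 : ∀ i : Fin n, u i ∈ N (i + k + 1)) (h2 : ∀ i : Fin n, u i ∈ (N (i + k))ᗮ) :
    Orthonormal ℂ u := by
  have key : ∀ i j : Fin n, i < j → inner ℂ (u i) (u j) = 0 := by
    intro i j hij
    have hij' : (i : ℕ) < j := hij
    exact Submodule.inner_right_of_mem_orthogonal (hN (by omega) (h1 i)) (h2 j)
  refine ⟨hu, fun i j hij => ?_⟩
  rcases lt_or_gt_of_ne hij with h | h
  · exact key i j h
  · exact inner_eq_zero_symm.1 (key j i h)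

lemma rooms_inf (h𝒩 : IsNest 𝒩) {C K : Submodule ℂ H} (hK : Red 𝒩 K) (hKC : K ≤ C)
    (hna : NoAtom 𝒩 C) (hR : Rooms 𝒩 C K) (W : Submodule ℂ H) [FiniteDimensional ℂ W]
    {M N : Submodule ℂ H} (hM : M ∈ 𝒩) (hN : N ∈ 𝒩) {v : H} (hv : v ∈ C) (hv0 : v ≠ 0) (hvN : v ∈ N)
    (hvM : v ∈ Mᗮ) : ∃ y ∈ K, ‖y‖ = 1 ∧ y ∈ N ∧ y ∈ Mᗮ ∧ y ∈ Wᗮ := by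
  obtain ⟨y, hy, hy0, hyN, hyM⟩ := hR M hM N hN v hv hv0 hvN hvM
  obtain ⟨Ns, hNs, hmono, hbt, hw, -⟩ := subint h𝒩 hK (fun v hv => hna v (hKC hv)) hy hy0 hM hN hyN hyM
  choose w hwK hw0 hw1 hw2 using hw
  let u : Fin (Module.finrank ℂ W + 1) → H := fun i => w i
  have hli : LinearIndependent ℂ u := by
    have key : ∀ i j : Fin (Module.finrank ℂ W + 1), i < j → inner ℂ (u i) (u j) = 0 := by
      intro i j hij
      have hij' : (i : ℕ) < j := hij
      exact Submodule.inner_right_of_mem_orthogonal (hmono (by omega) (hw1 i)) (hw2 j)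
    refine linearIndependent_of_ne_zero_of_inner_eq_zero (fun i => hw0 i) fun i j hij => ?_
    rcases lt_or_gt_of_ne hij with h | h
    · exact key i j h
    · exact inner_eq_zero_symm.1 (key j i h)
  let T : (Fin (Module.finrank ℂ W + 1) → ℂ) →ₗ[ℂ] W :=
    W.orthogonalProjection.toLinearMap ∘ₗ Fintype.linearCombination ℂ u
  have hT : LinearMap.ker T ≠ ⊥ := LinearMap.ker_ne_bot_of_finrank_lt (by simp)
  obtain ⟨c, hc, hc0⟩ := (Submodule.ne_bot_iff _).1 hT
  have hx0 : Fintype.linearCombination ℂ u c ≠ 0 := by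
    intro h
    refine hc0 (funext fun i => ?_)
    rw [Fintype.linearCombination_apply] at h
    exact Fintype.linearIndependent_iff.1 hli c h i
  have hxW : Fintype.linearCombination ℂ u c ∈ Wᗮ := by
    have : W.orthogonalProjection (Fintype.linearCombination ℂ u c) = 0 := hc
    exact Submodule.orthogonalProjection_eq_zero_iff.1 this
  have hmem : ∀ L : Submodule ℂ H, (∀ i, w i ∈ L) → Fintype.linearCombination ℂ u c ∈ L := by
    intro L hL
    rw [Fintype.linearCombination_apply]
    exact L.sum_mem fun i _ => L.smul_mem _ (hL i)
  have hxK := hmem K hwK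
  obtain ⟨d, hd⟩ := normalize hxK hx0
  exact ⟨_, K.smul_mem d hxK, hd, N.smul_mem d (hmem N fun i => (hbt _).2 (hw1 i)),
    Submodule.smul_mem _ d (hmem _ fun i => Submodule.orthogonal_le (hbt _).1 (hw2 i)),
    Submodule.smul_mem _ d hxW⟩

noncomputable def ro {n : ℕ} (e f : Fin n → H) : H →L[ℂ] H := ∑ i, InnerProductSpace.rankOne ℂ (e i) (f i)

lemma ro_apply {n : ℕ} (e f : Fin n → H) (x : H) : ro e f x = ∑ i, inner ℂ (f i) x • e i := by
  simp [ro, _root_.sum_apply, InnerProductSpace.rankOne_apply]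

lemma ro_norm {n : ℕ} {e f : Fin n → H} (he : Orthonormal ℂ e) (hf : Orthonormal ℂ f) : ‖ro e f‖ ≤ 1 := by
  refine ContinuousLinearMap.opNorm_le_bound _ zero_le_one fun x => ?_
  rw [one_mul, ro_apply]
  refine le_of_sq_le_sq ?_ (norm_nonneg _)
  have h1 := he.inner_sum (fun i => inner ℂ (f i) x) (fun i => inner ℂ (f i) x) Finset.univ
  have h2 : ‖∑ i, inner ℂ (f i) x • e i‖ ^ 2 = ∑ i, ‖(inner ℂ (f i) x : ℂ)‖ ^ 2 := by
    rw [inner_self_eq_norm_sq_to_K] at h1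
    have h3 : ((‖∑ i, inner ℂ (f i) x • e i‖ ^ 2 : ℝ) : ℂ) = ((∑ i, ‖(inner ℂ (f i) x : ℂ)‖ ^ 2 : ℝ) : ℂ) := by
      push_cast
      refine h1.trans (Finset.sum_congr rfl fun i _ => ?_)
      rw [Complex.conj_mul']
    exact_mod_cast h3
  rw [h2]
  exact hf.sum_inner_products_le x

lemma ro_left {n : ℕ} {e f : Fin n → H} {K : Submodule ℂ H} (h : ∀ i, e i ∈ K) : pr K * ro e f = ro e f := by
  ext x
  rw [mul_ap, ro_apply]
  exact pr_eq_self (K.sum_mem fun i _ => K.smul_mem _ (h i))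

lemma ro_right {n : ℕ} {e f : Fin n → H} {K : Submodule ℂ H} (h : ∀ i, f i ∈ K) : ro e f * pr K = ro e f := by
  ext x
  rw [mul_ap, ro_apply, ro_apply]
  refine Finset.sum_congr rfl fun i _ => ?_
  rw [← pr_sym, pr_eq_self (h i)]

lemma ro_mul {n : ℕ} {e f g : Fin n → H} (hf : Orthonormal ℂ f) (x : H) : ro e f (ro f g x) = ro e g x := by
  rw [ro_apply e f, ro_apply e g]
  refine Finset.sum_congr rfl fun i _ => ?_
  rw [ro_apply, hf.inner_right_fintype]

/-- a good factorization pair -/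
structure Pair (𝒩 : Set (Submodule ℂ H)) (K2 K W : Submodule ℂ H) (α β : H →L[ℂ] H) (W' : Submodule ℂ H) :
    Prop where
  ia : InAlg 𝒩 α
  ib : InAlg 𝒩 β
  na : ‖α‖ ≤ 1
  nb : ‖β‖ ≤ 1
  ka : pr K * α = α
  kb : β * pr K = β
  fd : FiniteDimensional ℂ W'
  le : W' ≤ K2
  orth : W' ≤ Wᗮ
  wa : α * pr W' = α
  wb : pr W' * β = β

def Approx (𝒩 : Set (Submodule ℂ H)) (K2 K : Submodule ℂ H) : Prop :=
  ∀ W : Submodule ℂ H, FiniteDimensional ℂ W → ∀ X : Finset H, (∀ x ∈ X, x ∈ K) → ∀ ε : ℝ, 0 < ε →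
    ∃ α β W', Pair 𝒩 K2 K W α β W' ∧ ∀ x ∈ X, ‖α (β x) - x‖ ≤ ε

lemma Pair.zero (K2 K W : Submodule ℂ H) : Pair 𝒩 K2 K W 0 0 ⊥ where
  ia := InAlg.zero
  ib := InAlg.zero
  na := by simp
  nb := by simp
  ka := by simp
  kb := by simp
  fd := inferInstance
  le := bot_le
  orth := bot_le
  wa := by simp
  wb := by simp

noncomputable def cyc (𝒩 : Set (Submodule ℂ H)) (w : H) : Submodule ℂ H :=
  (Submodule.span ℂ {x | ∃ N ∈ 𝒩, x = pr N w}).topologicalClosure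

lemma pr_mem_cyc {N : Submodule ℂ H} (hN : N ∈ 𝒩) (w : H) : pr N w ∈ cyc 𝒩 w :=
  Submodule.le_topologicalClosure _ (Submodule.subset_span ⟨N, hN, rfl⟩)

lemma cyc_le (w : H) {K : Submodule ℂ H} (hKc : IsClosed (K : Set H)) (hK : Red 𝒩 K) (hw : w ∈ K) : cyc 𝒩 w ≤ K := by
  refine Submodule.topologicalClosure_minimal _ (Submodule.span_le.2 ?_) hKc
  rintro _ ⟨N, hN, rfl⟩
  exact hK N hN w hw

lemma cyc_red (h𝒩 : IsNest 𝒩) (w : H) : Red 𝒩 (cyc 𝒩 w) := by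
  refine Red.closure (Red.span ?_)
  rintro M hM _ ⟨N, hN, rfl⟩
  refine Submodule.subset_span ?_
  rcases h𝒩.chain M hM N hN with h | h
  · exact ⟨M, hM, pr_pr_of_le h w⟩
  · exact ⟨N, hN, pr_pr_of_le' h w⟩

lemma cyc_fin (h𝒩 : IsNest 𝒩) {C K2 : Submodule ℂ H} (hC : Red 𝒩 C) (hna : NoAtom 𝒩 C) (hK2 : Red 𝒩 K2)
    (hK2C : K2 ≤ C) (hR : Rooms 𝒩 C K2) {w : H} (hw : w ∈ C) (W : Submodule ℂ H) [FiniteDimensional ℂ W]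
    {δ : ℝ} (hδ : 0 < δ) : ∃ α β W', Pair 𝒩 K2 (cyc 𝒩 w) W α β W' ∧
      ∀ N ∈ 𝒩, ‖α (β (pr N w)) - pr N w‖ ≤ δ := by
  by_cases hw0 : w = 0
  · exact ⟨0, 0, ⊥, Pair.zero _ _ _, fun N hN => by simp [hw0, hδ.le]⟩
  have hwp : 0 < ‖w‖ ^ 2 := by positivity
  obtain ⟨n, hn⟩ : ∃ n : ℕ, 2 * ‖w‖ ^ 2 / (δ / 3) ^ 2 ≤ n := exists_nat_ge _
  obtain ⟨r, hr⟩ : ∃ r : ℝ, r = n + 2 := ⟨_, rfl⟩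
  have hrp : 0 < r := by rw [hr]; positivity
  have hrn : 2 * ‖w‖ ^ 2 / r ≤ (δ / 3) ^ 2 := by
    rw [div_le_iff₀ (by positivity)] at hn ⊢
    rw [hr]; nlinarith [sq_nonneg (δ / 3)]
  have hex : ∀ i : ℕ, ∃ N ∈ 𝒩, i ≤ n + 2 → ‖pr N w‖ ^ 2 = (i / r) * ‖w‖ ^ 2 := by
    intro i
    by_cases hi : i ≤ n + 2
    · have hi' : (i : ℝ) ≤ r := by rw [hr]; exact_mod_cast hi
      obtain ⟨N, hN, h⟩ := ivt (α := (i / r) * ‖w‖ ^ 2) h𝒩 hC hna hw (by positivity) (by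
        have : (i : ℝ) / r ≤ 1 := (div_le_one hrp).2 hi'
        nlinarith)
      exact ⟨N, hN, fun _ => h⟩
    · exact ⟨⊤, h𝒩.top, fun h => absurd h hi⟩
  choose N' hN' hNw' using hex
  obtain ⟨N, hNdef⟩ : ∃ N : ℕ → Submodule ℂ H, ∀ i, N i = N' (min i (n + 2)) := ⟨_, fun _ => rfl⟩
  have hN : ∀ i, N i ∈ 𝒩 := fun i => by rw [hNdef]; exact hN' _
  have hNw : ∀ i ≤ n + 2, ‖pr (N i) w‖ ^ 2 = (i / r) * ‖w‖ ^ 2 := fun i hi => by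
    rw [hNdef, min_eq_left hi, hNw' i hi]
  have hmono : Monotone N := by
    intro i j hij
    rw [hNdef, hNdef]
    rcases (min_le_min_right (n + 2) hij).eq_or_lt with h | h
    · rw [h]
    · refine le_of_norm_lt (v := w) h𝒩 (hN' _) (hN' _) ?_
      rw [hNw' _ (min_le_right _ _), hNw' _ (min_le_right _ _)]
      have : ((min i (n + 2) : ℕ) : ℝ) < ((min j (n + 2) : ℕ) : ℝ) := by exact_mod_cast h
      gcongr
  obtain ⟨h, hh⟩ : ∃ h : ℕ → H, ∀ i, h i = pr (N (i + 1)) w - pr (N i) w := ⟨_, fun _ => rfl⟩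
  have hnorm : ∀ i < n + 2, ‖h i‖ ^ 2 = ‖w‖ ^ 2 / r := by
    intro i hi
    rw [hh, norm_sq_pr_sub (hmono (Nat.le_succ i)), hNw _ (by omega), hNw _ (by omega)]
    push_cast; field_simp; ring
  have hm1 : ∀ i, h i ∈ N (i + 1) := fun i => by
    rw [hh]
    exact Submodule.sub_mem _ (pr_mem (h𝒩.closed _ (hN _)) _) (hmono (Nat.le_succ i) (pr_mem (h𝒩.closed _ (hN _)) _))
  have hm2 : ∀ i, h i ∈ (N i)ᗮ := fun i => by
    rw [hh]; exact sub_mem_orth (hmono (Nat.le_succ i)) _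
  have hhC : ∀ i, h i ∈ C := fun i => by
    rw [hh]; exact C.sub_mem (hC _ (hN _) _ hw) (hC _ (hN _) _ hw)
  have hhc : ∀ i, h i ∈ cyc 𝒩 w := fun i => by
    rw [hh]; exact Submodule.sub_mem _ (pr_mem_cyc (hN _) w) (pr_mem_cyc (hN _) w)
  have hh0 : ∀ i < n + 2, h i ≠ 0 := fun i hi h0 => by
    have := hnorm i hi
    rw [h0, norm_zero] at this
    have : 0 < ‖w‖ ^ 2 / r := by positivity
    simp at *
    linarith
  obtain ⟨c, hc⟩ : ∃ c : ℝ, c = Real.sqrt (r / ‖w‖ ^ 2) := ⟨_, rfl⟩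
  have hc0 : 0 ≤ c := hc ▸ Real.sqrt_nonneg _
  have hc2 : c ^ 2 = r / ‖w‖ ^ 2 := by rw [hc, Real.sq_sqrt (by positivity)]
  have hcn : ∀ i < n + 2, ‖(c : ℂ) • h i‖ = 1 := fun i hi => by
    have : ‖(c : ℂ) • h i‖ ^ 2 = 1 := by
      rw [norm_smul, mul_pow, hnorm i hi, Complex.norm_real, Real.norm_eq_abs, sq_abs, hc2]
      field_simp
    exact (pow_eq_one_iff_of_nonneg (norm_nonneg _) two_ne_zero).1 this
  have hy : ∀ i : Fin n, ∃ y ∈ K2, ‖y‖ = 1 ∧ y ∈ N (i + 1 + 1) ∧ y ∈ (N (i + 1))ᗮ ∧ y ∈ Wᗮ := fun i =>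
    rooms_inf h𝒩 hK2 hK2C hna hR W (hN _) (hN _) (hhC _) (hh0 (i + 1) (by omega)) (hm1 _) (hm2 _)
  choose f hfK hf1 hfN hfM hfW using hy
  let e : Fin n → H := fun i => (c : ℂ) • h i
  let g : Fin n → H := fun i => (c : ℂ) • h (i + 2)
  have he : Orthonormal ℂ e := orthonormal_iv hmono 0 (fun i => hcn _ (by omega))
    (fun i => Submodule.smul_mem _ _ (hm1 _)) (fun i => Submodule.smul_mem _ _ (hm2 _))
  have hg : Orthonormal ℂ g := orthonormal_iv hmono 2 (fun i => hcn _ (by omega))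
    (fun i => Submodule.smul_mem _ _ (hm1 _)) (fun i => Submodule.smul_mem _ _ (hm2 _))
  have hf : Orthonormal ℂ f := orthonormal_iv hmono 1 hf1 hfN hfM
  have hfs : ∀ i, f i ∈ Submodule.span ℂ (Set.range f) := fun i => Submodule.subset_span ⟨i, rfl⟩
  refine ⟨ro e f, ro f g, Submodule.span ℂ (Set.range f), ⟨?_, ?_, ro_norm he hf, ro_norm hf hg,
    ro_left fun i => Submodule.smul_mem _ _ (hhc _), ro_right fun i => Submodule.smul_mem _ _ (hhc _),
    FiniteDimensional.span_of_finite _ (Set.finite_range f),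
    Submodule.span_le.2 (by rintro _ ⟨i, rfl⟩; exact hfK i),
    Submodule.span_le.2 (by rintro _ ⟨i, rfl⟩; exact hfW i), ro_right hfs, ro_left hfs⟩, ?_⟩
  · exact InAlg.sum _ fun i _ => inAlg_rankOne (hN (i + 1)) (fun M hM => h𝒩.chain M hM _ (hN _))
      (Submodule.smul_mem _ _ (hm1 _)) (hfM i)
  · exact InAlg.sum _ fun i _ => inAlg_rankOne (hN (i + 2)) (fun M hM => h𝒩.chain M hM _ (hN _))
      (hfN i) (Submodule.smul_mem _ _ (hm2 _))
  intro M hM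
  rw [ro_mul hf]
  have hN0 : pr (N 0) w = 0 := by
    have := hNw 0 (by omega)
    simpa using this
  have hR1 : ∀ j ≤ n + 2, ro e g (pr (N j) w) = pr (N (j - 2)) w := by
    intro j hj
    have hi : ∀ i : Fin n, inner ℂ (g i) (pr (N j) w) • e i = if (i : ℕ) + 2 < j then h i else 0 := by
      intro i
      split_ifs with hij
      · have e1 : pr (N j) (h (i + 2)) = h (i + 2) := pr_eq_self (hmono (by omega) (hm1 _))
        have e2 : inner ℂ (h (i + 2)) w = ((‖h (i + 2)‖ ^ 2 : ℝ) : ℂ) := by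
          have hiv : h (i + 2) = pr (iv (N (i + 2)) (N (i + 2 + 1))) w := by
            rw [pr_iv (h𝒩.closed _ (hN _)) (h𝒩.closed _ (hN _)) (hmono (Nat.le_succ _)), hh]
          rw [hiv, pr_sym]
          nth_rewrite 1 [← pr_sym]
          rw [pr_sym]
          exact inner_pr_self _ _
        simp only [g, e]
        rw [← pr_sym, map_smul, e1, inner_smul_left, e2, hnorm _ (by omega), smul_smul]
        have : (starRingEnd ℂ) (c : ℂ) * ((‖w‖ ^ 2 / r : ℝ) : ℂ) * (c : ℂ) = 1 := by
          rw [Complex.conj_ofReal]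
          norm_cast
          have : c * (‖w‖ ^ 2 / r) * c = c ^ 2 * (‖w‖ ^ 2 / r) := by ring
          rw [this, hc2]; field_simp
        rw [this, one_smul]
      · have : inner ℂ (g i) (pr (N j) w) = 0 := by
          refine Submodule.inner_left_of_mem_orthogonal (pr_mem (h𝒩.closed _ (hN _)) w) ?_
          exact Submodule.orthogonal_le (hmono (by omega)) (Submodule.smul_mem _ _ (hm2 (i + 2)))
        rw [this, zero_smul]
    rw [ro_apply, Finset.sum_congr rfl fun i _ => hi i,
      Fin.sum_univ_eq_sum_range (fun i => if i + 2 < j then h i else 0) n, ← Finset.sum_filter]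
    have : Finset.filter (fun i => i + 2 < j) (Finset.range n) = Finset.range (j - 2) := by
      ext i; simp only [Finset.mem_filter, Finset.mem_range]; omega
    rw [this, Finset.sum_congr rfl fun i _ => hh i, Finset.sum_range_sub (fun i => pr (N i) w), hN0, sub_zero]
  obtain ⟨j, hj⟩ : ∃ j : ℕ, j = ⌊‖pr M w‖ ^ 2 * r / ‖w‖ ^ 2⌋₊ := ⟨_, rfl⟩
  have hM1 : ‖pr M w‖ ^ 2 ≤ ‖w‖ ^ 2 := by
    have := pr_norm_le M w
    gcongr
  have hjn : j ≤ n + 2 := by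
    rw [hj]
    refine Nat.floor_le_of_le ?_
    push_cast
    rw [div_le_iff₀ hwp, ← hr]; nlinarith
  have hj1 : (j : ℝ) / r * ‖w‖ ^ 2 ≤ ‖pr M w‖ ^ 2 := by
    have := Nat.floor_le (show 0 ≤ ‖pr M w‖ ^ 2 * r / ‖w‖ ^ 2 by positivity)
    rw [← hj, le_div_iff₀ hwp] at this
    rw [div_mul_eq_mul_div, div_le_iff₀ hrp]; exact this
  have hj2 : ‖pr M w‖ ^ 2 ≤ (j : ℝ) / r * ‖w‖ ^ 2 + ‖w‖ ^ 2 / r := by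
    have := (Nat.lt_floor_add_one (‖pr M w‖ ^ 2 * r / ‖w‖ ^ 2)).le
    rw [← hj, div_le_iff₀ hwp] at this
    have e : (j : ℝ) / r * ‖w‖ ^ 2 + ‖w‖ ^ 2 / r = ((j + 1) * ‖w‖ ^ 2) / r := by field_simp
    rw [e, le_div_iff₀ hrp]; exact this
  have hrn' : ‖w‖ ^ 2 / r ≤ (δ / 3) ^ 2 := by
    have : 0 ≤ ‖w‖ ^ 2 / r := by positivity
    have e : 2 * ‖w‖ ^ 2 / r = 2 * (‖w‖ ^ 2 / r) := by ring
    linarith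
  have d1 : ‖pr M w - pr (N j) w‖ ≤ δ / 3 := by
    refine le_of_sq_le_sq ?_ (by positivity)
    rcases h𝒩.chain _ (hN j) M hM with hle | hle
    · rw [norm_sq_pr_sub hle, hNw j hjn]; linarith
    · rw [norm_sub_rev, norm_sq_pr_sub hle, hNw j hjn]
      have : 0 ≤ (δ / 3) ^ 2 := by positivity
      linarith
  have d2 : ‖pr (N j) w - pr (N (j - 2)) w‖ ≤ δ / 3 := by
    refine le_of_sq_le_sq ?_ (by positivity)
    rw [norm_sq_pr_sub (hmono (by omega)), hNw j hjn, hNw (j - 2) (by omega)]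
    have : (j : ℝ) ≤ ((j - 2 : ℕ) : ℝ) + 2 := by
      have : j ≤ (j - 2) + 2 := by omega
      exact_mod_cast this
    refine le_trans ?_ hrn
    rw [← sub_mul, ← sub_div, div_mul_eq_mul_div]
    gcongr
    linarith
  have e3 : ro e g (pr M w) - pr M w = ro e g (pr M w - pr (N j) w) - (pr (N j) w - pr (N (j - 2)) w)
      - (pr M w - pr (N j) w) := by
    rw [map_sub, hR1 j hjn]; abel
  rw [e3]
  have d3 : ‖ro e g (pr M w - pr (N j) w)‖ ≤ δ / 3 := by
    refine ((ro e g).le_opNorm _).trans ?_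
    have := ro_norm he hg
    nlinarith [norm_nonneg (pr M w - pr (N j) w)]
  have := norm_sub_le (ro e g (pr M w - pr (N j) w) - (pr (N j) w - pr (N (j - 2)) w)) (pr M w - pr (N j) w)
  have := norm_sub_le (ro e g (pr M w - pr (N j) w)) (pr (N j) w - pr (N (j - 2)) w)
  linarith

end NestZPD

namespace NestZPD
variable {H : Type*} [NormedAddCommGroup H] [InnerProductSpace ℂ H] [CompleteSpace H]
variable {𝒩 : Set (Submodule ℂ H)}

lemma ap_le {T : H →L[ℂ] H} (hT : ‖T‖ ≤ 1) (x : H) : ‖T x‖ ≤ ‖x‖ :=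
  (T.le_opNorm x).trans (by nlinarith [norm_nonneg x])

lemma ap2_le {S T : H →L[ℂ] H} (hS : ‖S‖ ≤ 1) (hT : ‖T‖ ≤ 1) (x : H) : ‖S (T x)‖ ≤ ‖x‖ :=
  (ap_le hS _).trans (ap_le hT x)

lemma tendsto_closed {T : ℕ → H →L[ℂ] H} (hT : ∀ k, ‖T k‖ ≤ 1) {X : Set H}
    (h : ∀ x ∈ X, Filter.Tendsto (fun k => T k x) Filter.atTop (𝓝 x)) {v : H}
    (hv : v ∈ (Submodule.span ℂ X).topologicalClosure) :
    Filter.Tendsto (fun k => T k v) Filter.atTop (𝓝 v) := by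
  have hs : ∀ s ∈ Submodule.span ℂ X, Filter.Tendsto (fun k => T k s) Filter.atTop (𝓝 s) := by
    intro s hs
    induction hs using Submodule.span_induction with
    | mem x hx => exact h x hx
    | zero => simp
    | add x y _ _ hx hy => simpa using hx.add hy
    | smul c x _ hx => simpa using hx.const_smul c
  rw [Metric.tendsto_atTop]
  intro ε hε
  obtain ⟨s, hsm, hd⟩ := Metric.mem_closure_iff.1 hv (ε / 3) (by positivity)
  obtain ⟨n, hn⟩ := Metric.tendsto_atTop.1 (hs s hsm) (ε / 3) (by positivity)
  refine ⟨n, fun k hk => ?_⟩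
  have h1 := hn k hk
  have h2 : dist (T k v) (T k s) ≤ dist v s := by
    rw [dist_eq_norm, dist_eq_norm, ← map_sub]; exact ap_le (hT k) _
  have h3 := dist_triangle4 (T k v) (T k s) s v
  rw [dist_comm s v] at h3
  linarith

lemma mul_norm_le_one {S T : H →L[ℂ] H} (hS : ‖S‖ ≤ 1) (hT : ‖T‖ ≤ 1) : ‖S * T‖ ≤ 1 :=
  ContinuousLinearMap.opNorm_le_bound _ zero_le_one fun x => by
    rw [one_mul]; exact ap2_le hS hT x

lemma approx_cyc (h𝒩 : IsNest 𝒩) {C K2 : Submodule ℂ H} (hC : Red 𝒩 C) (hna : NoAtom 𝒩 C) (hK2 : Red 𝒩 K2)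
    (hK2C : K2 ≤ C) (hR : Rooms 𝒩 C K2) {w : H} (hw : w ∈ C) : Approx 𝒩 K2 (cyc 𝒩 w) := by
  intro W hW X hX ε hε
  choose α β W' hP hN using fun k : ℕ =>
    cyc_fin h𝒩 hC hna hK2 hK2C hR hw W (δ := 1 / ((k : ℝ) + 1)) (by positivity)
  have ht : ∀ x ∈ X, Filter.Tendsto (fun k => (α k * β k) x) Filter.atTop (𝓝 x) := by
    intro x hx
    refine tendsto_closed (fun k => mul_norm_le_one (hP k).na (hP k).nb) ?_ (hX x hx)
    rintro _ ⟨N, hN', rfl⟩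
    rw [tendsto_iff_norm_sub_tendsto_zero]
    refine squeeze_zero (fun _ => norm_nonneg _) (fun k => hN k N hN') ?_
    exact tendsto_one_div_add_atTop_nhds_zero_nat
  have hev : ∀ᶠ k in Filter.atTop, ∀ x ∈ X, ‖(α k * β k) x - x‖ < ε := by
    rw [Filter.eventually_all_finset]
    intro x hx
    exact (tendsto_iff_norm_sub_tendsto_zero.1 (ht x hx)).eventually_lt_const hε
  obtain ⟨k, hk⟩ := hev.exists
  exact ⟨α k, β k, W' k, hP k, fun x hx => (hk x hx).le⟩

lemma pr_pr_orth {P Q : Submodule ℂ H} (h : P ≤ Qᗮ) (x : H) : pr P (pr Q x) = 0 := by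
  refine pr_eq_zero (Submodule.orthogonal_le h ?_)
  rw [Submodule.orthogonal_orthogonal_eq_closure]; exact pr_mem_closure Q x

lemma pr_sq_add_le {P Q : Submodule ℂ H} (h : P ≤ Qᗮ) (x : H) : ‖pr P x‖ ^ 2 + ‖pr Q x‖ ^ 2 ≤ ‖x‖ ^ 2 := by
  have e : pr P x = pr P (x - pr Q x) := by rw [map_sub, pr_pr_orth h, sub_zero]
  have := norm_sq_pr Q x
  have h2 : ‖pr P x‖ ≤ ‖x - pr Q x‖ := by rw [e]; exact pr_norm_le _ _
  have : ‖pr P x‖ ^ 2 ≤ ‖x - pr Q x‖ ^ 2 := by gcongr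
  linarith

lemma pr_mul_orth {P Q : Submodule ℂ H} (h : P ≤ Qᗮ) : pr P * pr Q = 0 := by
  ext x; exact pr_pr_orth h x

lemma norm_add_orth {P1 P2 Q1 Q2 : Submodule ℂ H} {A B : H →L[ℂ] H} (hP : P1 ≤ P2ᗮ) (hQ : Q1 ≤ Q2ᗮ)
    (hA : pr P1 * A = A) (hB : pr P2 * B = B) (hA' : A * pr Q1 = A) (hB' : B * pr Q2 = B)
    (nA : ‖A‖ ≤ 1) (nB : ‖B‖ ≤ 1) : ‖A + B‖ ≤ 1 := by
  refine ContinuousLinearMap.opNorm_le_bound _ zero_le_one fun x => ?_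
  rw [one_mul, _root_.add_apply]
  refine le_of_sq_le_sq ?_ (norm_nonneg _)
  have hi : inner ℂ (A x) (B x) = 0 := by
    rw [← hA, ← hB, mul_ap, mul_ap, pr_sym, pr_pr_orth hP, inner_zero_right]
  have h1 := norm_add_sq_eq_norm_sq_add_norm_sq_of_inner_eq_zero _ _ hi
  have h2 : ‖A x‖ ≤ ‖pr Q1 x‖ := by rw [← hA', mul_ap]; exact ap_le nA _
  have h3 : ‖B x‖ ≤ ‖pr Q2 x‖ := by rw [← hB', mul_ap]; exact ap_le nB _
  have h4 := pr_sq_add_le hQ x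
  nlinarith [norm_nonneg (A x), norm_nonneg (B x)]

lemma pr_mul_of_le {K L : Submodule ℂ H} (h : K ≤ L) : pr K * pr L = pr K := by
  ext x; exact pr_pr_of_le h x
lemma pr_mul_of_le' {K L : Submodule ℂ H} (h : K ≤ L) : pr L * pr K = pr K := by
  ext x; exact pr_pr_of_le' h x

lemma left_of_le {K L : Submodule ℂ H} (h : K ≤ L) {A : H →L[ℂ] H} (hA : pr K * A = A) : pr L * A = A := by
  rw [← hA, ← mul_assoc, pr_mul_of_le' h]
lemma right_of_le {K L : Submodule ℂ H} (h : K ≤ L) {A : H →L[ℂ] H} (hA : A * pr K = A) : A * pr L = A := by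
  rw [← hA, mul_assoc, pr_mul_of_le h]

lemma orth_symm {K L : Submodule ℂ H} (h : K ≤ Lᗮ) : L ≤ Kᗮ :=
  (Submodule.le_orthogonal_orthogonal L).trans (Submodule.orthogonal_le h)

lemma Pair.mono {K2 K L W α' : Submodule ℂ H} {α β : H →L[ℂ] H} (h : K ≤ L) (hP : Pair 𝒩 K2 K W α β α') :
    Pair 𝒩 K2 L W α β α' :=
  ⟨hP.ia, hP.ib, hP.na, hP.nb, left_of_le h hP.ka, right_of_le h hP.kb, hP.fd, hP.le, hP.orth, hP.wa, hP.wb⟩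

lemma approx_sup {K2 Ka Kb K : Submodule ℂ H} (hab : Ka ≤ Kbᗮ)
    (hKa : Ka ≤ K) (hKb : Kb ≤ K) (hac : IsClosed (Ka : Set H)) (hbc : IsClosed (Kb : Set H))
    (hK : ∀ x ∈ K, x = pr Ka x + pr Kb x) (ha : Approx 𝒩 K2 Ka) (hb : Approx 𝒩 K2 Kb) : Approx 𝒩 K2 K := by
  classical
  intro W hW X hX ε hε
  obtain ⟨α, β, W1, hP, h1⟩ := ha W hW (X.image (pr Ka)) (by
    intro x hx
    obtain ⟨y, -, rfl⟩ := Finset.mem_image.1 hx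
    exact pr_mem hac _) (ε / 2) (by positivity)
  haveI := hP.fd
  obtain ⟨α', β', W2, hP', h2⟩ := hb (W ⊔ W1) inferInstance (X.image (pr Kb)) (by
    intro x hx
    obtain ⟨y, -, rfl⟩ := Finset.mem_image.1 hx
    exact pr_mem hbc _) (ε / 2) (by positivity)
  haveI := hP'.fd
  have hW12 : W2 ≤ W1ᗮ := hP'.orth.trans (Submodule.orthogonal_le le_sup_right)
  have hW21 : W1 ≤ W2ᗮ := orth_symm hW12
  refine ⟨α + α', β + β', W1 ⊔ W2, ⟨hP.ia.add hP'.ia, hP.ib.add hP'.ib,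
    norm_add_orth hab hW21 hP.ka hP'.ka hP.wa hP'.wa hP.na hP'.na,
    norm_add_orth hW21 hab hP.wb hP'.wb hP.kb hP'.kb hP.nb hP'.nb,
    ?_, ?_, inferInstance, sup_le hP.le hP'.le,
    sup_le hP.orth (hP'.orth.trans (Submodule.orthogonal_le le_sup_left)), ?_, ?_⟩, ?_⟩
  · rw [mul_add, left_of_le hKa hP.ka, left_of_le hKb hP'.ka]
  · rw [add_mul, right_of_le hKa hP.kb, right_of_le hKb hP'.kb]
  · rw [add_mul, right_of_le le_sup_left hP.wa, right_of_le le_sup_right hP'.wa]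
  · rw [mul_add, left_of_le le_sup_left hP.wb, left_of_le le_sup_right hP'.wb]
  · intro x hx
    have c1 : α * β' = 0 := by
      rw [← hP.wa, ← hP'.wb, mul_assoc, ← mul_assoc (pr W1), pr_mul_orth hW21, zero_mul, mul_zero]
    have c2 : α' * β = 0 := by
      rw [← hP'.wa, ← hP.wb, mul_assoc, ← mul_assoc (pr W2), pr_mul_orth hW12, zero_mul, mul_zero]
    have e0 : (α + α') * (β + β') = α * β * pr Ka + α' * β' * pr Kb := by
      rw [mul_assoc, hP.kb, mul_assoc, hP'.kb, add_mul, mul_add, mul_add, c1, c2]; abel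
    have e1 : (α + α') ((β + β') x) - x = (α (β (pr Ka x)) - pr Ka x) + (α' (β' (pr Kb x)) - pr Kb x) := by
      have : (α + α') ((β + β') x) = ((α + α') * (β + β')) x := rfl
      rw [this, e0]
      nth_rewrite 2 [hK x (hX x hx)]
      rw [_root_.add_apply, mul_ap, mul_ap, mul_ap, mul_ap]; abel
    rw [e1]
    refine (norm_add_le _ _).trans ?_
    have := h1 _ (Finset.mem_image_of_mem _ hx)
    have := h2 _ (Finset.mem_image_of_mem _ hx)
    linarith

lemma approx_fin (h𝒩 : IsNest 𝒩) {C K1 K2 : Submodule ℂ H} (hC : Red 𝒩 C) (hna : NoAtom 𝒩 C)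
    (hK2 : Red 𝒩 K2) (hK2C : K2 ≤ C) (hR : Rooms 𝒩 C K2) (hK1c : IsClosed (K1 : Set H)) (hK1 : Red 𝒩 K1)
    (hK1C : K1 ≤ C) (X : Finset H) (hX : ∀ x ∈ X, x ∈ K1) :
    ∃ K : Submodule ℂ H, IsClosed (K : Set H) ∧ Red 𝒩 K ∧ K ≤ K1 ∧ (∀ x ∈ X, x ∈ K) ∧ Approx 𝒩 K2 K := by
  classical
  induction X using Finset.induction_on with
  | empty =>
    refine ⟨⊥, isClosed_singleton, Red.of_mem h𝒩 h𝒩.bot, bot_le, by simp, ?_⟩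
    intro W hW X hX ε hε
    refine ⟨0, 0, ⊥, Pair.zero _ _ _, fun x hx => ?_⟩
    have : x = 0 := by simpa using hX x hx
    simp [this, hε.le]
  | insert v X hv ih =>
    obtain ⟨K, hKc, hK, hKK, hXK, hA⟩ := ih fun x hx => hX x (Finset.mem_insert_of_mem hx)
    have hvK : v ∈ K1 := hX v (Finset.mem_insert_self _ _)
    obtain ⟨w, hw⟩ : ∃ w, w = v - pr K v := ⟨_, rfl⟩
    have hw1 : w ∈ K1 := by rw [hw]; exact K1.sub_mem hvK (hKK (pr_mem hKc v))
    have hwo : w ∈ Kᗮ := by rw [hw]; exact sub_pr_mem K v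
    have ho : cyc 𝒩 w ≤ Kᗮ := cyc_le w (Submodule.isClosed_orthogonal K) hK.orth hwo
    have ho' := orth_symm ho
    have hcc : IsClosed (cyc 𝒩 w : Set H) := Submodule.isClosed_topologicalClosure _
    have hcr := cyc_red h𝒩 w
    refine ⟨(K ⊔ cyc 𝒩 w).topologicalClosure, Submodule.isClosed_topologicalClosure _,
      (hK.sup hcr).closure, ?_, ?_, ?_⟩
    · exact Submodule.topologicalClosure_minimal _ (sup_le hKK (cyc_le w hK1c hK1 hw1)) hK1c
    · intro x hx
      refine Submodule.le_topologicalClosure _ ?_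
      rcases Finset.mem_insert.1 hx with rfl | hx
      · have : x = pr K x + w := by rw [hw]; abel
        rw [this]
        refine Submodule.add_mem_sup (pr_mem hKc x) ?_
        have := pr_mem_cyc h𝒩.top w
        rwa [pr_eq_self (K := ⊤) Submodule.mem_top] at this
      · exact Submodule.mem_sup_left (hXK x hx)
    · refine approx_sup ho' (le_sup_left.trans (Submodule.le_topologicalClosure _))
        (le_sup_right.trans (Submodule.le_topologicalClosure _)) hKc hcc ?_ hA
        (approx_cyc h𝒩 hC hna hK2 hK2C hR (hK1C hw1))
      intro x hx
      have hcl : IsClosed {x : H | x = pr K x + pr (cyc 𝒩 w) x} :=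
        isClosed_eq continuous_id (by fun_prop)
      have : (K ⊔ cyc 𝒩 w : Submodule ℂ H).topologicalClosure ≤
          LinearMap.eqLocus (LinearMap.id) (pr K + pr (cyc 𝒩 w)).toLinearMap := by
        refine Submodule.topologicalClosure_minimal _ (sup_le ?_ ?_) hcl
        · intro y hy
          show y = pr K y + pr (cyc 𝒩 w) y
          rw [pr_eq_self hy, pr_eq_zero (ho' hy), add_zero]
        · intro y hy
          show y = pr K y + pr (cyc 𝒩 w) y
          rw [pr_eq_self hy, pr_eq_zero (ho hy), zero_add]
      exact this hx

lemma approx_fd (h𝒩 : IsNest 𝒩) {C K1 K2 : Submodule ℂ H} (hC : Red 𝒩 C) (hna : NoAtom 𝒩 C)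
    (hK2 : Red 𝒩 K2) (hK2C : K2 ≤ C) (hR : Rooms 𝒩 C K2) (hK1c : IsClosed (K1 : Set H)) (hK1 : Red 𝒩 K1)
    (hK1C : K1 ≤ C) (W E : Submodule ℂ H) [FiniteDimensional ℂ W] [FiniteDimensional ℂ E] (hE : E ≤ K1)
    {δ : ℝ} (hδ : 0 < δ) : ∃ α β W', Pair 𝒩 K2 K1 W α β W' ∧ ∀ u ∈ E, ‖α (β u) - u‖ ≤ δ * ‖u‖ := by
  classical
  let b := stdOrthonormalBasis ℂ E
  let X : Finset H := Finset.univ.image fun i => (b i : H)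
  obtain ⟨K, hKc, hK, hKK, hXK, hA⟩ := approx_fin h𝒩 hC hna hK2 hK2C hR hK1c hK1 hK1C X (by
    intro x hx
    obtain ⟨i, -, rfl⟩ := Finset.mem_image.1 hx
    exact hE (b i).2)
  obtain ⟨n, hn⟩ : ∃ n : ℝ, n = Module.finrank ℂ E := ⟨_, rfl⟩
  have hn0 : 0 ≤ n := by rw [hn]; positivity
  obtain ⟨α, β, W', hP, h⟩ := hA W inferInstance X hXK (δ / (n + 1)) (by positivity)
  refine ⟨α, β, W', hP.mono hKK, fun u hu => ?_⟩
  have hb : ∀ i, ‖α (β (b i)) - b i‖ ≤ δ / (n + 1) := fun i => h _ (Finset.mem_image_of_mem _ (Finset.mem_univ i))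
  have e : u = ∑ i, inner ℂ (b i : H) u • (b i : H) := by
    have := b.sum_repr' ⟨u, hu⟩
    have h2 := congrArg (Subtype.val) this
    simpa using h2.symm
  have e2 : α (β u) - u = ∑ i, inner ℂ (b i : H) u • (α (β (b i)) - b i) := by
    have e3 : α (β u) - u = (α * β - 1) u := rfl
    rw [e3]
    nth_rewrite 1 [e]
    rw [map_sum]
    refine Finset.sum_congr rfl fun i _ => ?_
    rw [map_smul]; rfl
  rw [e2]
  calc ‖∑ i, inner ℂ (b i : H) u • (α (β (b i)) - b i)‖
      ≤ ∑ i : Fin (Module.finrank ℂ E), ‖u‖ * (δ / (n + 1)) := by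
        refine norm_sum_le_of_le _ fun i _ => ?_
        rw [norm_smul]
        refine mul_le_mul ?_ (hb i) (norm_nonneg _) (norm_nonneg _)
        refine (norm_inner_le_norm _ _).trans ?_
        have : ‖(b i : H)‖ = 1 := b.orthonormal.1 i
        rw [this, one_mul]
    _ = n * (‖u‖ * (δ / (n + 1))) := by
        rw [Finset.sum_const, Finset.card_univ, Fintype.card_fin, nsmul_eq_mul, hn]
    _ = (n / (n + 1)) * (δ * ‖u‖) := by ring
    _ ≤ 1 * (δ * ‖u‖) := by
        gcongr
        rw [div_le_one (by linarith)]; linarith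
    _ = δ * ‖u‖ := one_mul _

end NestZPD

namespace NestZPD
variable {H : Type*} [NormedAddCommGroup H] [InnerProductSpace ℂ H] [CompleteSpace H]
variable {𝒩 : Set (Submodule ℂ H)}

lemma dsum {E : ℕ → Submodule ℂ H} (hE : Monotone E) (v : H) (j n : ℕ) :
    ∑ k ∈ Finset.range n, ‖pr (E (k + 1 + j)) v - pr (E (k + j)) v‖ ^ 2 ≤ ‖v‖ ^ 2 := by
  have : ∀ k, ‖pr (E (k + 1 + j)) v - pr (E (k + j)) v‖ ^ 2 = ‖pr (E (k + 1 + j)) v‖ ^ 2 - ‖pr (E (k + j)) v‖ ^ 2 :=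
    fun k => norm_sq_pr_sub (hE (by omega)) v
  rw [Finset.sum_congr rfl fun k _ => this k, Finset.sum_range_sub (fun k => ‖pr (E (k + j)) v‖ ^ 2)]
  have h1 := pr_norm_le (E (n + j)) v
  have : ‖pr (E (n + j)) v‖ ^ 2 ≤ ‖v‖ ^ 2 := by gcongr
  nlinarith [sq_nonneg ‖pr (E (0 + j)) v‖]

lemma gsum {T : ℕ → H →L[ℂ] H} {E : ℕ → Submodule ℂ H} (hE : Monotone E) (hEc : ∀ k, IsClosed (E k : Set H))
    (hT1 : ∀ k, ‖T k‖ ≤ 1) (hT : ∀ k, ∀ u ∈ E k, ‖T k u - u‖ ≤ (1 / 2) ^ k / 64 * ‖u‖)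
    (hTE : ∀ k x, T k (pr (E (k + 1)) x) = T k x) (v : H) (s : Finset ℕ) :
    ∑ k ∈ s, ‖T (k + 1) v - T k v‖ ^ 2 ≤ 21 * ‖v‖ ^ 2 := by
  let d : ℕ → ℝ := fun k => ‖pr (E (k + 1)) v - pr (E k) v‖
  have hd0 : ∀ k, 0 ≤ d k := fun k => norm_nonneg _
  have hD : ∀ k, ‖T k v - pr (E k) v‖ ≤ d k + (1 / 2) ^ k / 64 * ‖v‖ := by
    intro k
    have e : T k v - pr (E k) v = T k (pr (E (k + 1)) v - pr (E k) v) + (T k (pr (E k) v) - pr (E k) v) := by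
      rw [map_sub, hTE]; abel
    rw [e]
    refine (norm_add_le _ _).trans (add_le_add (ap_le (hT1 k) _) ?_)
    refine (hT k _ (pr_mem (hEc k) v)).trans ?_
    gcongr
    exact pr_norm_le _ _
  have hG : ∀ k, ‖T (k + 1) v - T k v‖ ≤ 2 * d k + d (k + 1) + (1 / 2) ^ k / 32 * ‖v‖ := by
    intro k
    have e : T (k + 1) v - T k v = (T (k + 1) v - pr (E (k + 1)) v) + (pr (E (k + 1)) v - pr (E k) v)
      - (T k v - pr (E k) v) := by abel
    rw [e]
    refine (norm_sub_le _ _).trans ?_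
    have h1 := norm_add_le (T (k + 1) v - pr (E (k + 1)) v) (pr (E (k + 1)) v - pr (E k) v)
    have h2 := hD k
    have h3 := hD (k + 1)
    have h4 : ‖pr (E (k + 1)) v - pr (E k) v‖ = d k := rfl
    have h5 : ((1 : ℝ) / 2) ^ (k + 1) = (1 / 2) ^ k / 2 := by rw [pow_succ]; ring
    have h6 : 0 ≤ ((1 : ℝ) / 2) ^ k * ‖v‖ := by positivity
    rw [h5] at h3
    nlinarith
  have hG2 : ∀ k, ‖T (k + 1) v - T k v‖ ^ 2 ≤ 3 * (4 * d k ^ 2 + d (k + 1) ^ 2 + (1 / 2) ^ k * ‖v‖ ^ 2) := by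
    intro k
    have h1 := hG k
    have h2 : ‖T (k + 1) v - T k v‖ ^ 2 ≤ (2 * d k + d (k + 1) + (1 / 2) ^ k / 32 * ‖v‖) ^ 2 := by gcongr
    refine h2.trans ?_
    have h3 : ((1 / 2 : ℝ) ^ k / 32 * ‖v‖) ^ 2 ≤ (1 / 2) ^ k * ‖v‖ ^ 2 := by
      rw [mul_pow]
      gcongr
      have a : (0 : ℝ) ≤ (1 / 2) ^ k := by positivity
      have b : ((1 : ℝ) / 2) ^ k ≤ 1 := pow_le_one₀ (by norm_num) (by norm_num)
      nlinarith
    generalize (1 / 2 : ℝ) ^ k / 32 * ‖v‖ = z at *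
    nlinarith [sq_nonneg (2 * d k - d (k + 1)), sq_nonneg (2 * d k - z), sq_nonneg (d (k + 1) - z)]
  obtain ⟨n, hn⟩ := s.exists_nat_subset_range
  calc ∑ k ∈ s, ‖T (k + 1) v - T k v‖ ^ 2 ≤ ∑ k ∈ Finset.range n, ‖T (k + 1) v - T k v‖ ^ 2 :=
        Finset.sum_le_sum_of_subset_of_nonneg hn fun _ _ _ => sq_nonneg _
    _ ≤ ∑ k ∈ Finset.range n, 3 * (4 * d k ^ 2 + d (k + 1) ^ 2 + (1 / 2) ^ k * ‖v‖ ^ 2) :=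
        Finset.sum_le_sum fun k _ => hG2 k
    _ = 3 * (4 * ∑ k ∈ Finset.range n, d k ^ 2 + ∑ k ∈ Finset.range n, d (k + 1) ^ 2
          + (∑ k ∈ Finset.range n, (1 / 2 : ℝ) ^ k) * ‖v‖ ^ 2) := by
        rw [← Finset.mul_sum, Finset.sum_add_distrib, Finset.sum_add_distrib, Finset.mul_sum, Finset.sum_mul]
    _ ≤ 21 * ‖v‖ ^ 2 := by
        have h1 := dsum hE v 0 n
        have h2 := dsum hE v 1 n
        have h3 := sum_geometric_two_le n
        have h4 : (∑ k ∈ Finset.range n, (1 / 2 : ℝ) ^ k) * ‖v‖ ^ 2 ≤ 2 * ‖v‖ ^ 2 := by gcongr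
        have h1' : ∑ k ∈ Finset.range n, d k ^ 2 ≤ ‖v‖ ^ 2 := h1
        have h2' : ∑ k ∈ Finset.range n, d (k + 1) ^ 2 ≤ ‖v‖ ^ 2 := h2
        linarith

lemma sum_shift {g : ℕ → ℝ} {C : ℝ} (h : ∀ s : Finset ℕ, ∑ k ∈ s, g k ≤ C) (j : ℕ) (s : Finset ℕ) :
    ∑ k ∈ s, g (k + j) ≤ C := by
  have := h (s.map (addRightEmbedding j))
  rwa [Finset.sum_map] at this

lemma gsum1 {T : ℕ → H →L[ℂ] H} {v : H}
    (h : ∀ s : Finset ℕ, ∑ k ∈ s, ‖T (k + 1) v - T k v‖ ^ 2 ≤ 21 * ‖v‖ ^ 2) (s : Finset ℕ) :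
    ∑ k ∈ s, ‖T (k + 2) v - T (k + 1) v‖ ^ 2 ≤ 21 * ‖v‖ ^ 2 :=
  sum_shift (g := fun k => ‖T (k + 1) v - T k v‖ ^ 2) h 1 s

lemma gsum3 {T : ℕ → H →L[ℂ] H} {v : H}
    (h : ∀ s : Finset ℕ, ∑ k ∈ s, ‖T (k + 1) v - T k v‖ ^ 2 ≤ 21 * ‖v‖ ^ 2) (s : Finset ℕ) :
    ∑ k ∈ s, ‖T (k + 3) v - T k v‖ ^ 2 ≤ 189 * ‖v‖ ^ 2 := by
  have h1 := sum_shift (g := fun k => ‖T (k + 1) v - T k v‖ ^ 2) h 1 s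
  have h2 := sum_shift (g := fun k => ‖T (k + 1) v - T k v‖ ^ 2) h 2 s
  have h0 := h s
  have hk : ∀ k, ‖T (k + 3) v - T k v‖ ^ 2 ≤ 3 * (‖T (k + 1) v - T k v‖ ^ 2 + ‖T (k + 1 + 1) v - T (k + 1) v‖ ^ 2
      + ‖T (k + 2 + 1) v - T (k + 2) v‖ ^ 2) := by
    intro k
    have e : T (k + 3) v - T k v = (T (k + 2 + 1) v - T (k + 2) v) + (T (k + 1 + 1) v - T (k + 1) v)
      + (T (k + 1) v - T k v) := by
      show T (k + 3) v - T k v = (T (k + 3) v - T (k + 2) v) + (T (k + 2) v - T (k + 1) v) + (T (k + 1) v - T k v)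
      abel
    rw [e]
    generalize T (k + 2 + 1) v - T (k + 2) v = a
    generalize T (k + 1 + 1) v - T (k + 1) v = b
    generalize T (k + 1) v - T k v = c
    have : ‖a + b + c‖ ≤ ‖a‖ + ‖b‖ + ‖c‖ := norm_add₃_le
    have : ‖a + b + c‖ ^ 2 ≤ (‖a‖ + ‖b‖ + ‖c‖) ^ 2 := by gcongr
    nlinarith [sq_nonneg (‖a‖ - ‖b‖), sq_nonneg (‖a‖ - ‖c‖), sq_nonneg (‖b‖ - ‖c‖)]
  refine (Finset.sum_le_sum fun k _ => hk k).trans ?_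
  rw [← Finset.mul_sum, Finset.sum_add_distrib, Finset.sum_add_distrib]
  linarith

lemma adj_close {S : H →L[ℂ] H} (hS : ‖S‖ ≤ 1) {u : H} {δ : ℝ} (hδ : 0 ≤ δ)
    (h : ‖S u - u‖ ≤ δ ^ 2 / 2 * ‖u‖) : ‖ContinuousLinearMap.adjoint S u - u‖ ≤ δ * ‖u‖ := by
  refine le_of_sq_le_sq ?_ (by positivity)
  have hS' : ‖ContinuousLinearMap.adjoint S‖ ≤ 1 := by
    rw [LinearIsometryEquiv.norm_map]; exact hS
  have h1 := ap_le hS' u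
  have h2 := norm_sub_sq (𝕜 := ℂ) (ContinuousLinearMap.adjoint S u) u
  rw [ContinuousLinearMap.adjoint_inner_left] at h2
  have h3 : RCLike.re (inner ℂ u (S u)) = ‖u‖ ^ 2 + RCLike.re (inner ℂ u (S u - u)) := by
    rw [inner_sub_right, map_sub, inner_self_eq_norm_sq]; ring
  have h4 : |RCLike.re (inner ℂ u (S u - u))| ≤ ‖u‖ * ‖S u - u‖ :=
    (RCLike.abs_re_le_norm _).trans (norm_inner_le_norm _ _)
  have h5 := (abs_le.1 h4).1
  have h6 : ‖u‖ * ‖S u - u‖ ≤ ‖u‖ * (δ ^ 2 / 2 * ‖u‖) := by gcongr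
  have h7 : ‖ContinuousLinearMap.adjoint S u‖ ^ 2 ≤ ‖u‖ ^ 2 := by gcongr
  rw [h2, h3, mul_pow]
  nlinarith

end NestZPD

namespace NestZPD
variable {H : Type*} [NormedAddCommGroup H] [InnerProductSpace ℂ H] [CompleteSpace H]
variable {𝒩 : Set (Submodule ℂ H)}

structure Quad (H : Type*) [NormedAddCommGroup H] [InnerProductSpace ℂ H] where
  A : H →L[ℂ] H
  B : H →L[ℂ] H
  W : Submodule ℂ H
  E : Submodule ℂ H

structure Quad.Ok (𝒩 : Set (Submodule ℂ H)) (K1 K2 : Submodule ℂ H) (z : Quad H) : Prop where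
  fd : FiniteDimensional ℂ z.E
  le : z.E ≤ K1
  pair : Pair 𝒩 K2 K1 ⊥ z.A z.B z.W

lemma Pair.A_mem {K2 K W α' : Submodule ℂ H} {α β : H →L[ℂ] H} (hP : Pair 𝒩 K2 K W α β α') (x : H) :
    α x ∈ α'.map α.toLinearMap := by
  have := hP.fd
  refine ⟨pr α' x, pr_mem (Submodule.closed_of_finiteDimensional _) x, ?_⟩
  exact congrArg (fun T => T x) hP.wa

lemma Pair.B_mem {K2 K W α' : Submodule ℂ H} {α β : H →L[ℂ] H} (hP : Pair 𝒩 K2 K W α β α') (x : H) :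
    ContinuousLinearMap.adjoint β x ∈ α'.map (ContinuousLinearMap.adjoint β).toLinearMap := by
  have := hP.fd
  refine ⟨pr α' x, pr_mem (Submodule.closed_of_finiteDimensional _) x, ?_⟩
  have h := congrArg ContinuousLinearMap.adjoint hP.wb
  rw [ContinuousLinearMap.mul_def, ContinuousLinearMap.adjoint_comp, pr_adjoint] at h
  exact congrArg (fun T => T x) h

lemma Pair.A_le {K2 K W α' : Submodule ℂ H} {α β : H →L[ℂ] H} (hP : Pair 𝒩 K2 K W α β α')
    (hK : IsClosed (K : Set H)) : α'.map α.toLinearMap ≤ K := by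
  rintro _ ⟨x, -, rfl⟩
  have h : pr K (α x) = α x := congrArg (fun T => T x) hP.ka
  show α x ∈ K
  rw [← h]; exact pr_mem hK _

lemma Pair.B_le {K2 K W α' : Submodule ℂ H} {α β : H →L[ℂ] H} (hP : Pair 𝒩 K2 K W α β α')
    (hK : IsClosed (K : Set H)) : α'.map (ContinuousLinearMap.adjoint β).toLinearMap ≤ K := by
  rintro _ ⟨x, -, rfl⟩
  have h := congrArg ContinuousLinearMap.adjoint hP.kb
  rw [ContinuousLinearMap.mul_def, ContinuousLinearMap.adjoint_comp, pr_adjoint] at h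
  have h : pr K (ContinuousLinearMap.adjoint β x) = ContinuousLinearMap.adjoint β x := congrArg (fun T => T x) h
  show ContinuousLinearMap.adjoint β x ∈ K
  rw [← h]; exact pr_mem hK _

open Classical in
noncomputable def Quad.big (𝒩 : Set (Submodule ℂ H)) (K1 K2 : Submodule ℂ H) (z : Quad H) : Submodule ℂ H :=
  if z.Ok 𝒩 K1 K2 then z.E ⊔ z.W.map z.A.toLinearMap ⊔ z.W.map (ContinuousLinearMap.adjoint z.B).toLinearMap else ⊥

open Classical in
noncomputable def Quad.wig (𝒩 : Set (Submodule ℂ H)) (K1 K2 : Submodule ℂ H) (z : Quad H) : Submodule ℂ H :=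
  if z.Ok 𝒩 K1 K2 then z.W else ⊥

lemma Quad.big_fd (K1 K2 : Submodule ℂ H) (z : Quad H) : FiniteDimensional ℂ (z.big 𝒩 K1 K2) := by
  unfold Quad.big
  by_cases h : z.Ok 𝒩 K1 K2
  · rw [if_pos h]
    have := h.fd
    have := h.pair.fd
    infer_instance
  · rw [if_neg h]; infer_instance

lemma Quad.wig_fd (K1 K2 : Submodule ℂ H) (z : Quad H) : FiniteDimensional ℂ (z.wig 𝒩 K1 K2) := by
  unfold Quad.wig
  by_cases h : z.Ok 𝒩 K1 K2
  · rw [if_pos h]; exact h.pair.fd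
  · rw [if_neg h]; infer_instance

lemma Quad.big_le {K1 : Submodule ℂ H} (hK : IsClosed (K1 : Set H)) (K2 : Submodule ℂ H) (z : Quad H) :
    z.big 𝒩 K1 K2 ≤ K1 := by
  unfold Quad.big
  split_ifs with h
  · exact sup_le (sup_le h.le (h.pair.A_le hK)) (h.pair.B_le hK)
  · exact bot_le

lemma fd_sup {ι : Type*} (s : Finset ι) (f : ι → Submodule ℂ H) (h : ∀ i, FiniteDimensional ℂ (f i)) :
    FiniteDimensional ℂ (s.sup f : Submodule ℂ H) := by
  classical
  induction s using Finset.induction_on with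
  | empty => rw [Finset.sup_empty]; infer_instance
  | insert a s ha ih => rw [Finset.sup_insert]; have := h a; infer_instance

lemma exists_seq [TopologicalSpace.SeparableSpace H] (h𝒩 : IsNest 𝒩) {C K1 K2 : Submodule ℂ H} (hC : Red 𝒩 C)
    (hna : NoAtom 𝒩 C)
    (hK2 : Red 𝒩 K2) (hK2C : K2 ≤ C) (hR : Rooms 𝒩 C K2) (hK1c : IsClosed (K1 : Set H)) (hK1 : Red 𝒩 K1)
    (hK1C : K1 ≤ C) : ∃ (A B : ℕ → H →L[ℂ] H) (W E : ℕ → Submodule ℂ H),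
      (∀ k, Pair 𝒩 K2 K1 ⊥ (A k) (B k) (W k)) ∧ (∀ k, FiniteDimensional ℂ (E k)) ∧ (∀ k, E k ≤ K1) ∧
      A 0 = 0 ∧ A 1 = 0 ∧ Monotone E ∧ (∀ k x, A k x ∈ E (k + 1)) ∧
      (∀ k x, ContinuousLinearMap.adjoint (B k) x ∈ E (k + 1)) ∧ (∀ m n, m < n → W n ≤ (W m)ᗮ) ∧
      (∀ m n, m ≤ n → 2 ≤ n → pr K1 (TopologicalSpace.denseSeq H m) ∈ E n) ∧
      ∀ k, ∀ u ∈ E k, ‖A k (B k u) - u‖ ≤ ((1 / 2) ^ k / 64) ^ 2 / 2 * ‖u‖ := by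
  classical
  obtain ⟨f, hf⟩ := exists_seq_hist (α := Quad H) (Q := fun n s y => y.Ok 𝒩 K1 K2 ∧
    (n ≤ 1 → y = ⟨0, 0, ⊥, ⊥⟩) ∧ (2 ≤ n → (∀ z ∈ s, z.Ok 𝒩 K1 K2 → z.big 𝒩 K1 K2 ≤ y.E ∧ y.W ≤ z.Wᗮ) ∧
      ∀ m ≤ n, pr K1 (TopologicalSpace.denseSeq H m) ∈ y.E) ∧
      ∀ u ∈ y.E, ‖y.A (y.B u) - u‖ ≤ ((1 / 2) ^ n / 64) ^ 2 / 2 * ‖u‖) (by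
    intro n s
    by_cases hn : n ≤ 1
    · refine ⟨⟨0, 0, ⊥, ⊥⟩, ⟨by dsimp only; infer_instance, bot_le, Pair.zero _ _ _⟩, fun _ => rfl, fun h => by omega, ?_⟩
      intro u hu
      rw [(Submodule.mem_bot ℂ).1 hu]
      simp
    · let X : Submodule ℂ H := Submodule.span ℂ
        (((Finset.range (n + 1)).image fun m => pr K1 (TopologicalSpace.denseSeq H m) : Finset H) : Set H)
      have hX : FiniteDimensional ℂ X := FiniteDimensional.span_finset ℂ _
      have hXK : X ≤ K1 := by
        refine Submodule.span_le.2 ?_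
        intro x hx
        simp only [Finset.coe_image, Set.mem_image] at hx
        obtain ⟨m, -, rfl⟩ := hx
        exact pr_mem hK1c _
      have h1 := fd_sup s (Quad.big 𝒩 K1 K2) (Quad.big_fd K1 K2)
      have h2 := fd_sup s (Quad.wig 𝒩 K1 K2) (Quad.wig_fd K1 K2)
      obtain ⟨α, β, W', hP, hb⟩ := approx_fd h𝒩 hC hna hK2 hK2C hR hK1c hK1 hK1C (s.sup (Quad.wig 𝒩 K1 K2))
        (X ⊔ s.sup (Quad.big 𝒩 K1 K2)) (sup_le hXK (Finset.sup_le fun z _ => Quad.big_le hK1c K2 z))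
        (δ := ((1 / 2) ^ n / 64) ^ 2 / 2) (by positivity)
      refine ⟨⟨α, β, W', X ⊔ s.sup (Quad.big 𝒩 K1 K2)⟩, ⟨by dsimp only; infer_instance,
        sup_le hXK (Finset.sup_le fun z _ => Quad.big_le hK1c K2 z),
        ⟨hP.ia, hP.ib, hP.na, hP.nb, hP.ka, hP.kb, hP.fd, hP.le, by simp, hP.wa, hP.wb⟩⟩,
        fun h => absurd h hn, fun _ => ⟨?_, ?_⟩, hb⟩
      · intro z hz hzo
        refine ⟨(Finset.le_sup (f := Quad.big 𝒩 K1 K2) hz).trans le_sup_right, ?_⟩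
        refine hP.orth.trans (Submodule.orthogonal_le ?_)
        have : z.wig 𝒩 K1 K2 = z.W := by unfold Quad.wig; rw [if_pos hzo]
        rw [← this]
        exact Finset.le_sup (f := Quad.wig 𝒩 K1 K2) hz
      · intro m hm
        refine Submodule.mem_sup_left (Submodule.subset_span ?_)
        simp only [Finset.coe_image, Set.mem_image]
        exact ⟨m, by simp; omega, rfl⟩)
  have hok : ∀ n, (f n).Ok 𝒩 K1 K2 := fun n => (hf n).choose_spec.2.1
  have h01 : ∀ n, n ≤ 1 → f n = ⟨0, 0, ⊥, ⊥⟩ := fun n => (hf n).choose_spec.2.2.1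
  have hbig : ∀ m n, m < n → 2 ≤ n → (f m).big 𝒩 K1 K2 ≤ (f n).E ∧ (f n).W ≤ (f m).Wᗮ := by
    intro m n hmn hn
    obtain ⟨s, hs, h⟩ := hf n
    exact (h.2.2.1 hn).1 _ (hs m hmn) (hok m)
  have hbe : ∀ m, (f m).big 𝒩 K1 K2 = (f m).E ⊔ (f m).W.map (f m).A.toLinearMap ⊔
      (f m).W.map (ContinuousLinearMap.adjoint (f m).B).toLinearMap := by
    intro m; unfold Quad.big; rw [if_pos (hok m)]
  refine ⟨fun n => (f n).A, fun n => (f n).B, fun n => (f n).W, fun n => (f n).E, fun k => (hok k).pair,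
    fun k => (hok k).fd, fun k => (hok k).le, ?_, ?_, ?_, ?_, ?_, ?_, ?_, ?_⟩
  · simp [h01 0]
  · simp [h01 1]
  · refine monotone_nat_of_le_succ fun n => ?_
    by_cases hn : n = 0
    · subst hn; simp [h01 0]
    · exact (le_sup_left.trans le_sup_left).trans ((hbe n).symm.le.trans (hbig n (n + 1) (by omega) (by omega)).1)
  · intro n x
    by_cases hn : n = 0
    · subst hn; simp [h01 0]
    · exact ((le_sup_right.trans le_sup_left).trans
        ((hbe n).symm.le.trans (hbig n (n + 1) (by omega) (by omega)).1)) ((hok n).pair.A_mem x)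
  · intro n x
    by_cases hn : n = 0
    · subst hn; simp [h01 0]
    · exact (le_sup_right.trans
        ((hbe n).symm.le.trans (hbig n (n + 1) (by omega) (by omega)).1)) ((hok n).pair.B_mem x)
  · intro m n hmn
    by_cases hn : n ≤ 1
    · simp [h01 n hn]
    · exact (hbig m n hmn (by omega)).2
  · intro m n hmn hn
    exact ((hf n).choose_spec.2.2.2.1 hn).2 m hmn
  · exact fun n => (hf n).choose_spec.2.2.2.2

end NestZPD

namespace NestZPD
variable {H : Type*} [NormedAddCommGroup H] [InnerProductSpace ℂ H] [CompleteSpace H]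
variable {𝒩 : Set (Submodule ℂ H)}

lemma ad_mul (S T : H →L[ℂ] H) : ContinuousLinearMap.adjoint (S * T) = ContinuousLinearMap.adjoint T * ContinuousLinearMap.adjoint S := by
  rw [ContinuousLinearMap.mul_def, ContinuousLinearMap.adjoint_comp]; rfl

lemma ad_norm (S : H →L[ℂ] H) : ‖ContinuousLinearMap.adjoint S‖ = ‖S‖ := LinearIsometryEquiv.norm_map _ _

lemma ad_pr {T : H →L[ℂ] H} {E : Submodule ℂ H} (h : ∀ x, T x ∈ E) (x : H) : ContinuousLinearMap.adjoint T (pr E x) = ContinuousLinearMap.adjoint T x := by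
  refine ext_inner_left ℂ fun y => ?_
  rw [ContinuousLinearMap.adjoint_inner_right, ContinuousLinearMap.adjoint_inner_right, ← pr_sym, pr_eq_self (h y)]

lemma ad_pr' {T : H →L[ℂ] H} {E : Submodule ℂ H} (h : ∀ x, ContinuousLinearMap.adjoint T x ∈ E) (x : H) : T (pr E x) = T x := by
  have := ad_pr h x
  rwa [ContinuousLinearMap.adjoint_adjoint] at this

lemma right_close {S T : H →L[ℂ] H} (hS : ‖S‖ ≤ 1) {E : Submodule ℂ H} (h : ∀ x, ContinuousLinearMap.adjoint S x ∈ E) {δ : ℝ} (hδ : 0 ≤ δ)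
    (hT : ∀ u ∈ E, ‖ContinuousLinearMap.adjoint T u - u‖ ≤ δ * ‖u‖) (v : H) : ‖S (T v) - S v‖ ≤ δ * ‖v‖ := by
  have h1 : ‖ContinuousLinearMap.adjoint (S * T - S)‖ ≤ δ := by
    refine ContinuousLinearMap.opNorm_le_bound _ hδ fun x => ?_
    rw [map_sub, ad_mul, _root_.sub_apply]
    refine (hT _ (h x)).trans ?_
    gcongr
    exact ap_le (by rw [ad_norm]; exact hS) x
  rw [ad_norm] at h1
  exact (S * T - S).le_of_opNorm_le h1 v

lemma seq_close {S : ℕ → H →L[ℂ] H} {E : ℕ → Submodule ℂ H} (hS1 : ∀ k, ‖S k‖ ≤ 1) (hE : Monotone E)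
    (hSE : ∀ k x, S k x ∈ E (k + 1)) (hSa : ∀ k x, ContinuousLinearMap.adjoint (S k) x ∈ E (k + 1))
    (hd : ∀ k, ∀ u ∈ E k, ‖S k u - u‖ ≤ (1 / 2) ^ k / 64 * ‖u‖)
    (hda : ∀ k, ∀ u ∈ E k, ‖ContinuousLinearMap.adjoint (S k) u - u‖ ≤ (1 / 2) ^ k / 64 * ‖u‖) (k : ℕ) (v : H) :
    ‖(S (k + 3) - S k) (S (k + 3) (S (k + 2) v - S (k + 1) v)) - (S (k + 2) v - S (k + 1) v)‖
      ≤ (1 / 2) ^ k / 8 * ‖v‖ := by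
  have h1 := right_close (hS1 k) (hSa k) (δ := (1 / 2) ^ (k + 1) / 64) (by positivity) (hda (k + 1)) v
  have h2 := right_close (hS1 k) (E := E (k + 2)) (fun x => hE (by omega) (hSa k x)) (δ := (1 / 2) ^ (k + 2) / 64)
    (by positivity) (hda (k + 2)) v
  set a := S (k + 2) v - S (k + 1) v with ha
  have haE : a ∈ E (k + 3) := Submodule.sub_mem _ (hSE (k + 2) v) (hE (by omega) (hSE (k + 1) v))
  have h3 := hd (k + 3) a haE
  have h4 : ‖a‖ ≤ 2 * ‖v‖ := by
    refine (norm_sub_le _ _).trans ?_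
    have := ap_le (hS1 (k + 2)) v
    have := ap_le (hS1 (k + 1)) v
    linarith
  have h5 : ‖S k a‖ ≤ (1 / 2) ^ (k + 2) / 64 * ‖v‖ + (1 / 2) ^ (k + 1) / 64 * ‖v‖ := by
    have : S k a = (S k (S (k + 2) v) - S k v) - (S k (S (k + 1) v) - S k v) := by rw [ha, map_sub]; abel
    rw [this]
    exact (norm_sub_le _ _).trans (add_le_add h2 h1)
  have e : (S (k + 3) - S k) (S (k + 3) a) - a = S (k + 3) (S (k + 3) a - a) + (S (k + 3) a - a)
      - S k (S (k + 3) a - a) - S k a := by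
    rw [_root_.sub_apply, map_sub (S (k + 3)) (S (k + 3) a) a, map_sub (S k) (S (k + 3) a) a]; abel
  rw [e]
  generalize S (k + 3) a - a = b at *
  have h6 := ap_le (hS1 (k + 3)) b
  have h7 := ap_le (hS1 k) b
  have h8 : ‖S (k + 3) b + b - S k b - S k a‖ ≤ ‖S (k + 3) b‖ + ‖b‖ + ‖S k b‖ + ‖S k a‖ :=
    (norm_sub_le _ _).trans (add_le_add ((norm_sub_le _ _).trans (add_le_add (norm_add_le _ _) le_rfl)) le_rfl)
  have h9 : (1 / 2 : ℝ) ^ (k + 3) / 64 * ‖a‖ ≤ (1 / 2 : ℝ) ^ (k + 3) / 64 * (2 * ‖v‖) := by gcongr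
  have p1 : ((1 : ℝ) / 2) ^ (k + 1) = (1 / 2) ^ k / 2 := by rw [pow_succ]; ring
  have p2 : ((1 : ℝ) / 2) ^ (k + 2) = (1 / 2) ^ k / 4 := by rw [pow_add]; ring
  have p3 : ((1 : ℝ) / 2) ^ (k + 3) = (1 / 2) ^ k / 8 := by rw [pow_add]; ring
  rw [p3] at h3 h9
  rw [p1, p2] at h5
  have h10 : 0 ≤ ((1 : ℝ) / 2) ^ k * ‖v‖ := by positivity
  nlinarith

lemma orth_sum' {W : ℕ → Submodule ℂ H} (hWW : ∀ i j, i ≠ j → ∀ x ∈ W i, ∀ y ∈ W j, inner ℂ x y = 0)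
    {T : ℕ → H →L[ℂ] H} (hT : ∀ k x, T k x ∈ W (k + 3)) {G : ℕ → H → H} (hG : ∀ k x, ‖T k x‖ ≤ ‖G k x‖) {C : ℝ}
    (hC : ∀ v, ∀ s : Finset ℕ, ∑ k ∈ s, ‖G k v‖ ^ 2 ≤ C * ‖v‖ ^ 2) :
    ∃ S : H →L[ℂ] H, ∀ v, HasSum (fun i => T i v) (S v) := by
  obtain ⟨S, hS, -⟩ := exists_orth_sum (T := T)
    (fun i j hij x y => hWW (i + 3) (j + 3) (by omega) _ (hT i x) _ (hT j y)) C (by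
      intro v s
      refine le_trans (Finset.sum_le_sum fun k _ => ?_) (hC v s)
      have := hG k v
      gcongr)
  exact ⟨S, hS⟩

set_option maxHeartbeats 1600000 in
lemma assembly [TopologicalSpace.SeparableSpace H] (h𝒩 : IsNest 𝒩) {C K1 K2 : Submodule ℂ H} (hC : Red 𝒩 C)
    (hna : NoAtom 𝒩 C)
    (hK2 : Red 𝒩 K2) (hK2C : K2 ≤ C) (hR : Rooms 𝒩 C K2) (hK1c : IsClosed (K1 : Set H)) (hK1 : Red 𝒩 K1)
    (hK1C : K1 ≤ C) (h12 : K1 ≤ K2ᗮ) : ∃ Y Z : H →L[ℂ] H, InAlg 𝒩 Y ∧ InAlg 𝒩 Z ∧ pr K2 * Y = 0 ∧ Y * pr K2 = Y ∧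
      pr K2 * Z = Z ∧ ‖pr K1 - Y * Z‖ ≤ 1 / 2 := by
  obtain ⟨A, B, W, E, hP, hfd, hEK, hA0, hA1, hE, hAE, hBE, hW, hden, hap⟩ :=
    exists_seq h𝒩 hC hna hK2 hK2C hR hK1c hK1 hK1C
  obtain ⟨S, hS⟩ : ∃ S : ℕ → H →L[ℂ] H, ∀ k, S k = A k * B k := ⟨_, fun _ => rfl⟩
  have hEc : ∀ k, IsClosed (E k : Set H) := fun k => by
    have := hfd k
    exact Submodule.closed_of_finiteDimensional _
  have hWc : ∀ k, IsClosed (W k : Set H) := fun k => by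
    have := (hP k).fd
    exact Submodule.closed_of_finiteDimensional _
  have hSi : ∀ k, InAlg 𝒩 (S k) := fun k => by rw [hS]; exact (hP k).ia.mul (hP k).ib
  have hS1 : ∀ k, ‖S k‖ ≤ 1 := fun k => by rw [hS]; exact mul_norm_le_one (hP k).na (hP k).nb
  have hSE : ∀ k x, S k x ∈ E (k + 1) := fun k x => by rw [hS]; exact hAE k _
  have hSa : ∀ k x, ContinuousLinearMap.adjoint (S k) x ∈ E (k + 1) := fun k x => by rw [hS, ad_mul]; exact hBE k _
  have hd2 : ∀ k, ∀ u ∈ E k, ‖S k u - u‖ ≤ ((1 / 2) ^ k / 64) ^ 2 / 2 * ‖u‖ := fun k u hu => by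
    rw [hS]; exact hap k u hu
  have hda : ∀ k, ∀ u ∈ E k, ‖ContinuousLinearMap.adjoint (S k) u - u‖ ≤ (1 / 2) ^ k / 64 * ‖u‖ := fun k u hu =>
    adj_close (hS1 k) (by positivity) (hd2 k u hu)
  have hd : ∀ k, ∀ u ∈ E k, ‖S k u - u‖ ≤ (1 / 2) ^ k / 64 * ‖u‖ := fun k u hu => by
    refine (hd2 k u hu).trans ?_
    have a : (0 : ℝ) ≤ (1 / 2) ^ k := by positivity
    have b : ((1 : ℝ) / 2) ^ k ≤ 1 := pow_le_one₀ (by norm_num) (by norm_num)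
    refine mul_le_mul_of_nonneg_right ?_ (norm_nonneg u)
    nlinarith
  have hBW : ∀ k x, B k x ∈ W k := fun k x => by
    have : pr (W k) (B k x) = B k x := congrArg (fun T => T x) (hP k).wb
    rw [← this]; exact pr_mem (hWc k) _
  have hAW : ∀ k x, ContinuousLinearMap.adjoint (A k) x ∈ W k := fun k x => by
    have h := congrArg ContinuousLinearMap.adjoint (hP k).wa
    rw [ad_mul, pr_adjoint] at h
    have : pr (W k) (ContinuousLinearMap.adjoint (A k) x) = ContinuousLinearMap.adjoint (A k) x := congrArg (fun T => T x) h
    rw [← this]; exact pr_mem (hWc k) _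
  have hWW : ∀ i j, i ≠ j → ∀ x ∈ W i, ∀ y ∈ W j, inner ℂ x y = 0 := by
    intro i j hij x hx y hy
    rcases lt_or_gt_of_ne hij with h | h
    · exact Submodule.inner_right_of_mem_orthogonal hx (hW i j h hy)
    · exact Submodule.inner_left_of_mem_orthogonal hy (hW j i h hx)
  have hAn : ∀ k, ‖ContinuousLinearMap.adjoint (A k)‖ ≤ 1 := fun k => by rw [ad_norm]; exact (hP k).na
  have hSan : ∀ k, ‖ContinuousLinearMap.adjoint (S k)‖ ≤ 1 := fun k => by rw [ad_norm]; exact hS1 k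
  have hZs : ∀ v, ∀ s : Finset ℕ, ∑ k ∈ s, ‖S (k + 2) v - S (k + 1) v‖ ^ 2 ≤ 21 * ‖v‖ ^ 2 := fun v s =>
    gsum1 (fun s => gsum hE hEc hS1 hd (fun k x => ad_pr' (hSa k) x) v s) s
  have hYs : ∀ v, ∀ s : Finset ℕ, ∑ k ∈ s, ‖ContinuousLinearMap.adjoint (S (k + 3)) v -
      ContinuousLinearMap.adjoint (S k) v‖ ^ 2 ≤ 189 * ‖v‖ ^ 2 := by
    intro v s
    have h0 := fun s => gsum (T := fun k => ContinuousLinearMap.adjoint (S k)) hE hEc hSan hda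
      (fun k x => ad_pr (hSE k) x) v s
    exact gsum3 (T := fun k => ContinuousLinearMap.adjoint (S k)) h0 s
  obtain ⟨Z, hZ⟩ := orth_sum' hWW (T := fun k => B (k + 3) * (S (k + 2) - S (k + 1)))
    (fun k x => hBW (k + 3) ((S (k + 2) - S (k + 1)) x)) (G := fun k x => S (k + 2) x - S (k + 1) x)
    (fun k x => ap_le (hP (k + 3)).nb ((S (k + 2) - S (k + 1)) x)) hZs
  obtain ⟨Ya, hY⟩ := orth_sum' hWW (T := fun k => ContinuousLinearMap.adjoint (A (k + 3)) * (ContinuousLinearMap.adjoint (S (k + 3)) - ContinuousLinearMap.adjoint (S k)))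
    (fun k x => hAW (k + 3) ((ContinuousLinearMap.adjoint (S (k + 3)) - ContinuousLinearMap.adjoint (S k)) x))
    (G := fun k x => ContinuousLinearMap.adjoint (S (k + 3)) x - ContinuousLinearMap.adjoint (S k) x)
    (fun k x => ap_le (hAn (k + 3)) ((ContinuousLinearMap.adjoint (S (k + 3)) - ContinuousLinearMap.adjoint (S k)) x)) hYs
  have hYW : ∀ k, ∀ w ∈ W (k + 3), ContinuousLinearMap.adjoint Ya w = (S (k + 3) - S k) (A (k + 3) w) := by
    intro k w hw
    refine ext_inner_right ℂ fun y => ?_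
    rw [ContinuousLinearMap.adjoint_inner_left]
    have h1 := (innerSL ℂ w).hasSum (hY y)
    have h2 := hasSum_single (f := fun j => innerSL ℂ w ((ContinuousLinearMap.adjoint (A (j + 3)) * (ContinuousLinearMap.adjoint (S (j + 3)) - ContinuousLinearMap.adjoint (S j))) y)) k
      (fun j hj => hWW (k + 3) (j + 3) (by omega) w hw _ (hAW (j + 3) ((ContinuousLinearMap.adjoint (S (j + 3)) - ContinuousLinearMap.adjoint (S j)) y)))
    have h3 := h1.unique h2
    simp only [innerSL_apply_apply] at h3
    rw [h3]
    show inner ℂ w (ContinuousLinearMap.adjoint (A (k + 3)) ((ContinuousLinearMap.adjoint (S (k + 3)) - ContinuousLinearMap.adjoint (S k)) y)) = _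
    rw [ContinuousLinearMap.adjoint_inner_right, ← map_sub, ContinuousLinearMap.adjoint_inner_right]
  have hYZ : ∀ v, HasSum (fun k => (S (k + 3) - S k) (S (k + 3) (S (k + 2) v - S (k + 1) v))) (ContinuousLinearMap.adjoint Ya (Z v)) := by
    intro v
    have h := (ContinuousLinearMap.adjoint Ya).hasSum (hZ v)
    have e : ∀ k, ContinuousLinearMap.adjoint Ya ((B (k + 3) * (S (k + 2) - S (k + 1))) v) =
        (S (k + 3) - S k) (S (k + 3) (S (k + 2) v - S (k + 1) v)) := by
      intro k
      have e2 : ∀ x, S (k + 3) x = A (k + 3) (B (k + 3) x) := fun x => by rw [hS]; rfl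
      rw [e2 (_ - _)]
      exact hYW k _ (hBW (k + 3) _)
    simp only [e] at h
    exact h
  have hlim : ∀ v, Filter.Tendsto (fun k => S k v) Filter.atTop (𝓝 (pr K1 v)) := by
    intro v
    have e : ∀ k, S k v = S k (pr K1 v) := by
      intro k
      rw [hS]
      have : B k (pr K1 v) = B k v := congrArg (fun T => T v) (hP k).kb
      exact congrArg (A k) this.symm
    simp only [e]
    refine tendsto_closed hS1 (X := Set.range fun m => pr K1 (TopologicalSpace.denseSeq H m)) ?_ ?_
    · rintro _ ⟨m, rfl⟩
      refine tendsto_iff_norm_sub_tendsto_zero.2 ?_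
      dsimp only
      generalize hu : pr K1 (TopologicalSpace.denseSeq H m) = u
      have hlim0 : Filter.Tendsto (fun k : ℕ => (1 / 2 : ℝ) ^ k / 64 * ‖u‖) Filter.atTop (𝓝 (0 / 64 * ‖u‖)) :=
        ((tendsto_pow_atTop_nhds_zero_of_lt_one (by norm_num) (by norm_num)).div_const _).mul_const _
      rw [zero_div, zero_mul] at hlim0
      refine squeeze_zero' (Filter.Eventually.of_forall fun k => norm_nonneg _) ?_ hlim0
      filter_upwards [Filter.eventually_ge_atTop (m + 2)] with k hk
      exact hd k u (hu ▸ hden m k (by omega) (by omega))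
    · have hr : v ∈ closure (Set.range (TopologicalSpace.denseSeq H)) := TopologicalSpace.denseRange_denseSeq H v
      refine closure_mono ?_ (map_mem_closure (pr K1).continuous hr (t := Set.range fun m => pr K1 (TopologicalSpace.denseSeq H m)) ?_)
      · exact Submodule.subset_span
      · rintro _ ⟨m, rfl⟩; exact ⟨m, rfl⟩
  have hA2 : ∀ k x, ContinuousLinearMap.adjoint (A k) (pr K2 x) = 0 := by
    intro k x
    have h : pr K2 * A k = 0 := by
      rw [← (hP k).ka, ← mul_assoc, pr_mul_orth (orth_symm h12), zero_mul]
    have h := congrArg ContinuousLinearMap.adjoint h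
    rw [ad_mul, pr_adjoint, map_zero] at h
    exact congrArg (fun T => T x) h
  refine ⟨ContinuousLinearMap.adjoint Ya, Z, ?_, ?_, ?_, ?_, ?_, ?_⟩
  · refine InAlg.of_adjoint h𝒩 fun N hN x hx => ?_
    rw [ContinuousLinearMap.adjoint_adjoint]
    refine (Submodule.isClosed_orthogonal N).mem_of_tendsto (hY x)
      (Filter.Eventually.of_forall fun s => Nᗮ.sum_mem fun k _ => ?_)
    have := InAlg.adjoint (((hSi (k + 3)).sub (hSi k)).mul (hP (k + 3)).ia) hN hx
    rwa [ad_mul, map_sub] at this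
  · exact InAlg.hasSum h𝒩 (fun k => (hP (k + 3)).ib.mul ((hSi (k + 2)).sub (hSi (k + 1)))) hZ
  · have : Ya * pr K2 = 0 := by
      ext x
      refine (hY (pr K2 x)).unique ?_
      have e : ∀ k, (ContinuousLinearMap.adjoint (A (k + 3)) * (ContinuousLinearMap.adjoint (S (k + 3)) - ContinuousLinearMap.adjoint (S k))) (pr K2 x) = 0 := by
        intro k
        rw [hS, hS, ad_mul, ad_mul, mul_ap, _root_.sub_apply, mul_ap, mul_ap, hA2, hA2]
        simp
      simp only [e]
      exact hasSum_zero
    have := congrArg ContinuousLinearMap.adjoint this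
    rwa [ad_mul, pr_adjoint, map_zero] at this
  · have : pr K2 * Ya = Ya := by
      ext x
      have := (pr K2).hasSum (hY x)
      have e : ∀ k, pr K2 ((ContinuousLinearMap.adjoint (A (k + 3)) * (ContinuousLinearMap.adjoint (S (k + 3)) - ContinuousLinearMap.adjoint (S k))) x) =
          (ContinuousLinearMap.adjoint (A (k + 3)) * (ContinuousLinearMap.adjoint (S (k + 3)) - ContinuousLinearMap.adjoint (S k))) x := fun k => pr_eq_self ((hP (k + 3)).le (hAW (k + 3) ((ContinuousLinearMap.adjoint (S (k + 3)) - ContinuousLinearMap.adjoint (S k)) x)))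
      simp only [e] at this
      exact this.unique (hY x)
    have := congrArg ContinuousLinearMap.adjoint this
    rwa [ad_mul, pr_adjoint] at this
  · ext x
    have := (pr K2).hasSum (hZ x)
    have e : ∀ k, pr K2 ((B (k + 3) * (S (k + 2) - S (k + 1))) x) =
        (B (k + 3) * (S (k + 2) - S (k + 1))) x := fun k => pr_eq_self ((hP (k + 3)).le (hBW (k + 3) ((S (k + 2) - S (k + 1)) x)))
    simp only [e] at this
    exact this.unique (hZ x)
  · refine ContinuousLinearMap.opNorm_le_bound _ (by norm_num) fun v => ?_
    rw [_root_.sub_apply, mul_ap]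
    have h1 := (hYZ v).tendsto_sum_nat
    have h2 := ((Filter.tendsto_add_atTop_iff_nat 1).2 (hlim v)).sub h1
    refine le_of_tendsto h2.norm (Filter.Eventually.of_forall fun n => ?_)
    have e : S (n + 1) v = ∑ k ∈ Finset.range n, (S (k + 2) v - S (k + 1) v) := by
      rw [Finset.sum_range_sub (fun k => S (k + 1) v)]
      simp [hS, hA1]
    rw [e, ← Finset.sum_sub_distrib]
    refine (norm_sum_le _ _).trans ?_
    have h3 : ∀ k ∈ Finset.range n, ‖(S (k + 2) v - S (k + 1) v) -
        (S (k + 3) - S k) (S (k + 3) (S (k + 2) v - S (k + 1) v))‖ ≤ (1 / 2) ^ k * (‖v‖ / 8) := by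
      intro k _
      rw [norm_sub_rev]
      refine (seq_close hS1 hE hSE hSa hd hda k v).trans (le_of_eq (by ring))
    refine (Finset.sum_le_sum h3).trans ?_
    rw [← Finset.sum_mul]
    have h4 := sum_geometric_two_le n
    nlinarith [norm_nonneg v]

end NestZPD

namespace NestZPD
variable {H : Type*} [NormedAddCommGroup H] [InnerProductSpace ℂ H] [CompleteSpace H]
variable {𝒩 : Set (Submodule ℂ H)}

lemma half_mem [TopologicalSpace.SeparableSpace H] (h𝒩 : IsNest 𝒩) {C K1 K2 : Submodule ℂ H} (hC : Red 𝒩 C)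
    (hna : NoAtom 𝒩 C)
    (hK2 : Red 𝒩 K2) (hK2C : K2 ≤ C) (hR : Rooms 𝒩 C K2) (hK1c : IsClosed (K1 : Set H)) (hK1 : Red 𝒩 K1)
    (hK1C : K1 ≤ C) (h12 : K1 ≤ K2ᗮ) {x : H →L[ℂ] H} (hx : InAlg 𝒩 x) (h1 : pr K1 * x = x) (h2 : x * pr K1 = x) :
    x ∈ IdGen 𝒩 := by
  obtain ⟨Y, Z, hY, hZ, hpY, hYp, hpZ, hn⟩ := assembly h𝒩 hC hna hK2 hK2C hR hK1c hK1 hK1C h12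
  obtain ⟨t, ht⟩ : ∃ t, t = pr K1 - Y * Z := ⟨_, rfl⟩
  rw [← ht] at hn
  have hti : InAlg 𝒩 t := ht ▸ (hK1.inAlg h𝒩).sub (hY.mul hZ)
  have hpt : pr K2 * t = 0 := by
    rw [ht, mul_sub, ← mul_assoc, hpY, zero_mul, sub_zero, pr_mul_orth (orth_symm h12)]
  have hptY : ∀ n : ℕ, pr K2 * (t ^ n * Y) = 0 := by
    intro n
    cases n with
    | zero => rw [pow_zero, one_mul, hpY]
    | succ n => rw [pow_succ', mul_assoc, ← mul_assoc, hpt, zero_mul]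
  have hxp : x * pr K2 = 0 := by rw [← h2, mul_assoc, pr_mul_orth h12, mul_zero]
  have key : ∀ n : ℕ, x - t ^ n * x ∈ IdGen 𝒩 := by
    intro n
    induction n with
    | zero => simp
    | succ n ih =>
      have e : x - t ^ (n + 1) * x = (x - t ^ n * x) + (t ^ n * Y) * (Z * x) := by
        have : t * x = x - Y * (Z * x) := by rw [ht, sub_mul, h1, mul_assoc]
        rw [pow_succ, mul_assoc, this, mul_sub, mul_assoc]; abel
      rw [e]
      refine add_mem ih (factor_mem (p := pr K2) (hK2.inAlg h𝒩) (pr_mul_self _) ((hti.pow n).mul hY) (hZ.mul hx)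
        (hptY n) ?_ ?_ ?_)
      · rw [mul_assoc, hYp]
      · rw [← mul_assoc, hpZ]
      · rw [mul_assoc, hxp, mul_zero]
  refine mem_IdGen_of_approx fun ε hε => ?_
  have hlim : Filter.Tendsto (fun n : ℕ => (1 / 2 : ℝ) ^ n * ‖x‖) Filter.atTop (𝓝 (0 * ‖x‖)) :=
    (tendsto_pow_atTop_nhds_zero_of_lt_one (by norm_num) (by norm_num)).mul_const _
  rw [zero_mul] at hlim
  obtain ⟨n, hn1, hn2⟩ := ((hlim.eventually (gt_mem_nhds hε)).and (Filter.eventually_ge_atTop 1)).exists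
  refine ⟨_, key n, ?_⟩
  rw [sub_sub_cancel]
  refine (norm_mul_le _ _).trans (le_trans ?_ hn1.le)
  gcongr
  exact (norm_pow_le' t (by omega)).trans (by gcongr)

lemma cont_mem [TopologicalSpace.SeparableSpace H] (h𝒩 : IsNest 𝒩) {C : Submodule ℂ H} (hCc : IsClosed (C : Set H))
    (hC : Red 𝒩 C) (hna : NoAtom 𝒩 C) {x : H →L[ℂ] H} (hx : InAlg 𝒩 x) (h1 : pr C * x = x) (h2 : x * pr C = x) :
    x ∈ IdGen 𝒩 := by
  obtain ⟨E, hEc, hE, hEC, hRE, hRF⟩ := exists_split h𝒩 hCc hC hna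
  have hF : Red 𝒩 (C ⊓ Eᗮ) := hC.inf hE.orth
  have hFc : IsClosed ((C ⊓ Eᗮ : Submodule ℂ H) : Set H) := hCc.inter (Submodule.isClosed_orthogonal E)
  have hFE : C ⊓ Eᗮ ≤ Eᗮ := inf_le_right
  have hprF : pr (C ⊓ Eᗮ) = (1 - pr E) * pr C := by
    ext v
    rw [mul_ap, _root_.sub_apply]
    show _ = pr C v - pr E (pr C v)
    refine pr_eq_of (Submodule.le_topologicalClosure _ ⟨?_, sub_pr_mem _ _⟩) ?_
    · exact C.sub_mem (pr_mem hCc v) (hEC (pr_mem hEc _))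
    · have : v - (pr C v - pr E (pr C v)) = (v - pr C v) + pr E (pr C v) := by abel
      rw [this]
      refine Submodule.add_mem _ (Submodule.orthogonal_le inf_le_left (sub_pr_mem C v)) ?_
      exact orth_symm hFE (pr_mem hEc _)
  have hprF' : pr (C ⊓ Eᗮ) = pr C * (1 - pr E) := by
    rw [hprF, sub_mul, one_mul, mul_sub, mul_one, pr_mul_of_le hEC, pr_mul_of_le' hEC]
  have hEi := hE.inAlg h𝒩
  refine split_mem hEi (pr_mul_self E) hx ?_ ?_
  · refine half_mem h𝒩 hC hna hF inf_le_left hRF hEc hE hEC (orth_symm hFE) ((hEi.mul hx).mul hEi) ?_ ?_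
    · rw [← mul_assoc, ← mul_assoc, pr_mul_self]
    · rw [mul_assoc, pr_mul_self]
  · have e : (1 - pr E) * x * (1 - pr E) = pr (C ⊓ Eᗮ) * x * pr (C ⊓ Eᗮ) := by
      conv_rhs => rw [hprF]
      conv_rhs => rw [mul_assoc (1 - pr E) (pr C) x, h1, ← hprF, hprF', ← mul_assoc, mul_assoc (1 - pr E) x (pr C), h2]
    rw [e]
    have hFi := hF.inAlg h𝒩
    refine half_mem h𝒩 hC hna hE hEC hRE hFc hF inf_le_left hFE ((hFi.mul hx).mul hFi) ?_ ?_
    · rw [← mul_assoc, ← mul_assoc, pr_mul_self]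
    · rw [mul_assoc, pr_mul_self]

lemma Atomic.pr_mem_span {v : H} (h : Atomic 𝒩 v) {N : Submodule ℂ H} (hN : N ∈ 𝒩) {X : Set H} (hv : v ∈ X) :
    pr N v ∈ Submodule.span ℂ X := by
  rcases h N hN with h | h
  · rw [pr_eq_self h]; exact Submodule.subset_span hv
  · rw [pr_eq_zero h]; exact Submodule.zero_mem _

lemma Atomic.smul {v : H} (h : Atomic 𝒩 v) (c : ℂ) : Atomic 𝒩 (c • v) := fun M hM =>
  (h M hM).imp (fun h => M.smul_mem c h) (fun h => Mᗮ.smul_mem c h)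

lemma all_mem [TopologicalSpace.SeparableSpace H] (h𝒩 : IsNest 𝒩) {x : H →L[ℂ] H} (hx : InAlg 𝒩 x) :
    x ∈ IdGen 𝒩 := by
  obtain ⟨L, hL⟩ := zorn_subset {L : Set H | Orthonormal ℂ (Subtype.val : L → H) ∧ ∀ v ∈ L, Atomic 𝒩 v} (by
    intro c hc hchain
    refine ⟨⋃₀ c, ⟨orthonormal_sUnion_of_directed hchain.directedOn fun s hs => (hc hs).1, ?_⟩,
      fun s hs => Set.subset_sUnion_of_mem hs⟩
    rintro v ⟨s, hs, hv⟩
    exact (hc hs).2 v hv)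
  have hLo := hL.prop.1
  have hLa := hL.prop.2
  have hcount : Countable L := by
    refine Set.Countable.to_subtype (Set.PairwiseDisjoint.countable_of_isOpen (s := fun v : H => Metric.ball v (1 / 2))
      ?_ (fun v _ => Metric.isOpen_ball) (fun v _ => ⟨v, Metric.mem_ball_self (by norm_num)⟩))
    intro a ha b hb hab
    refine Metric.ball_disjoint_ball ?_
    have h1 : ‖a‖ = 1 := hLo.1 ⟨a, ha⟩
    have h2 : ‖b‖ = 1 := hLo.1 ⟨b, hb⟩
    have h3 : inner ℂ a b = 0 := hLo.2 (i := ⟨a, ha⟩) (j := ⟨b, hb⟩) (fun h => hab (congrArg Subtype.val h))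
    have h4 := norm_sub_sq (𝕜 := ℂ) a b
    rw [h3, h1, h2, map_zero] at h4
    rw [dist_eq_norm]
    nlinarith [norm_nonneg (a - b)]
  have hg : Red 𝒩 (Submodule.span ℂ L) := Red.span fun N hN v hv => (hLa v hv).pr_mem_span hN hv
  have hna : NoAtom 𝒩 (Submodule.span ℂ L)ᗮ := by
    intro v hv ha
    by_contra h0
    obtain ⟨c, hc⟩ := normalize hv h0
    have hw : c • v ∈ (Submodule.span ℂ L)ᗮ := Submodule.smul_mem _ c hv
    have hnot : c • v ∉ L := by
      intro hmem
      have := Submodule.inner_right_of_mem_orthogonal (Submodule.subset_span hmem) hw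
      rw [inner_self_eq_zero] at this
      rw [this, norm_zero] at hc
      exact zero_ne_one hc
    have : insert (c • v) L ⊆ L := hL.le_of_ge ⟨?_, ?_⟩ (Set.subset_insert _ _)
    · exact hnot (this (Set.mem_insert _ _))
    · refine ⟨?_, ?_⟩
      · rintro ⟨u, rfl | hu⟩
        · exact hc
        · exact hLo.1 ⟨u, hu⟩
      · rintro ⟨a, ha'⟩ ⟨b, hb'⟩ hab
        have hne : a ≠ b := fun h => hab (Subtype.ext h)
        show inner ℂ a b = 0
        rcases ha' with ha' | ha' <;> rcases hb' with hb' | hb'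
        · exact absurd (ha'.trans hb'.symm) hne
        · rw [ha']
          exact Submodule.inner_left_of_mem_orthogonal (Submodule.subset_span hb') hw
        · rw [hb']
          exact Submodule.inner_right_of_mem_orthogonal (Submodule.subset_span ha') hw
        · exact hLo.2 (i := ⟨a, ha'⟩) (j := ⟨b, hb'⟩) (fun h => hne (congrArg Subtype.val h))
    · rintro u (rfl | hu)
      · exact ha.smul c
      · exact hLa u hu
  have hpi := hg.inAlg h𝒩
  have hdd : dd (Subtype.val : L → H) Set.univ = pr (Submodule.span ℂ L) := by
    unfold dd; rw [Set.image_univ, Subtype.range_coe]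
  have hco : pr (Submodule.span ℂ L)ᗮ = 1 - pr (Submodule.span ℂ L) := by
    ext v; exact pr_orth _ v
  refine split_mem hpi (pr_mul_self _) hx ?_ ?_
  · refine atomic_mem h𝒩 hLo (fun i => hLa i i.2) ((hpi.mul hx).mul hpi) ?_ ?_
    · rw [hdd, ← mul_assoc, ← mul_assoc, pr_mul_self]
    · rw [hdd, mul_assoc, pr_mul_self]
  · rw [← hco]
    have hqi := hg.orth.inAlg h𝒩
    refine cont_mem h𝒩 (Submodule.isClosed_orthogonal _) hg.orth hna ((hqi.mul hx).mul hqi) ?_ ?_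
    · rw [← mul_assoc, ← mul_assoc, pr_mul_self]
    · rw [mul_assoc, pr_mul_self]

end NestZPD

set_option synthInstance.maxHeartbeats 1000000 in
/-- Every nest algebra `Alg 𝒩` on a complex separable Hilbert space is a zero product
determined Banach algebra.  Here a nest `𝒩` is a family of closed subspaces
containing `{0}` and `H`, totally ordered by inclusion, and closed under arbitrary
intersections and arbitrary closed linear spans, and
`Alg 𝒩 = {T ∈ B(H) : T(N) ⊆ N for all N ∈ 𝒩}`. -/
theorem nest_algebra_zpd (H : Type*) [NormedAddCommGroup H] [InnerProductSpace ℂ H]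
    [CompleteSpace H] [TopologicalSpace.SeparableSpace H]
    (𝒩 : Set (Submodule ℂ H)) (hclosed : ∀ N ∈ 𝒩, IsClosed (N : Set H))
    (hbot : ⊥ ∈ 𝒩) (htop : ⊤ ∈ 𝒩) (hchain : IsChain (· ≤ ·) 𝒩)
    (hinf : ∀ F ⊆ 𝒩, F.Nonempty → sInf F ∈ 𝒩)
    (hsup : ∀ F ⊆ 𝒩, F.Nonempty → (sSup F).topologicalClosure ∈ 𝒩)
    (S : Subalgebra ℂ (H →L[ℂ] H))
    (hS : ∀ T : H →L[ℂ] H, T ∈ S ↔ ∀ N ∈ 𝒩, ∀ x ∈ N, T x ∈ N) :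
    ZeroProductDetermined ↥S := by
  have h𝒩 : NestZPD.IsNest 𝒩 := ⟨hclosed, hbot, htop, fun M hM N hN => hchain.total hM hN, hinf, hsup⟩
  exact NestZPD.zpd_of_IdGen S hS (fun T hT => NestZPD.all_mem h𝒩 hT)
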